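/- arXiv:2302.00708 — 3 statements merged into one kernel-verified Lean document; each statement's English description precedes it below -/
import Mathlib

section
/- For every natural number n and every B in {11, 18, 21, 26, 28, 33}, the number of 50-regular partitions satisfies b_50(875n + 25B − 26) ≡ p_23(35n + B) (mod 2). -/
/-- The number of `m`-regular partitions of `n`, i.e. partitions of `n`
in which no part is divisible by `m`. -/
noncomputable def numRegularPartitions (m n : ℕ) : ℕ :=
  Nat.card {π : n.Partition // ∀ j ∈ π.parts, ¬ m ∣ j}

/-- The number of `t`-multipartitions of `n`, i.e. `t`-tuples of partitions
whose sizes sum to `n`. -/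
noncomputable def numMultipartitions (t n : ℕ) : ℕ :=
  Nat.card {f : Fin t → Σ k : ℕ, k.Partition // (∑ i, (f i).1) = n}


namespace RegPart
open PowerSeries PowerSeries.WithPiTopology

/-- The Euler product modulo two. -/
noncomputable def F : (ZMod 2)⟦X⟧ := pentagonalSeries (ZMod 2)

/-- The generating function of partitions modulo two. -/
noncomputable def Pg : (ZMod 2)⟦X⟧ := PowerSeries.mk fun n ↦ (Fintype.card n.Partition : ZMod 2)

local instance topZ : TopologicalSpace (ZMod 2) := ⊥
local instance discZ : DiscreteTopology (ZMod 2) := ⟨rfl⟩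

theorem restricted_mul_F (p : ℕ → Prop) [DecidablePred p] :
    HasProd (fun i : ℕ ↦ if p (i + 1) then (1 : (ZMod 2)⟦X⟧) else 1 - X ^ (i + 1))
    ((PowerSeries.mk fun n ↦ (((Nat.Partition.restricted n p).card : ℕ) : ZMod 2)) * F) := by
  have h := (Nat.Partition.hasProd_powerSeriesMk_card_restricted (ZMod 2) p).mul
    (hasProd_one_sub_X_pow (ZMod 2))
  convert! h using 2 with i
  split_ifs with hp
  · simp_rw [pow_mul]
    rw [tsum_pow_mul_one_sub_of_constantCoeff_eq_zero (by simp)]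
  · simp

theorem Pg_mul_F : Pg * F = 1 := by
  have h := restricted_mul_F (fun _ ↦ True)
  simp only [if_true] at h
  have := h.unique hasProd_one
  rw [← this]
  congr 1
  ext n
  simp [Pg, Nat.Partition.restricted]

theorem hasProd_expand (m : ℕ) (hm : m ≠ 0) :
    HasProd (fun i : ℕ ↦ (1 : (ZMod 2)⟦X⟧) - X ^ (m * (i + 1))) (expand m hm F) := by
  have h := hasProd_one_sub_X_pow (ZMod 2)
  rw [HasProd, tendsto_iff_coeff_tendsto] at h ⊢
  intro d
  have key : ∀ s : Finset ℕ, (∏ i ∈ s, ((1 : (ZMod 2)⟦X⟧) - X ^ (m * (i + 1)))) =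
      expand m hm (∏ i ∈ s, (1 - X ^ (i + 1))) := by
    intro s
    simp [map_prod, pow_mul]
  simp_rw [key, coeff_expand]
  split_ifs
  · exact h _
  · exact tendsto_const_nhds

theorem reg_mul_F (m : ℕ) (hm : m ≠ 0) :
    (PowerSeries.mk fun n ↦ ((numRegularPartitions m n : ℕ) : ZMod 2)) * F = expand m hm F := by
  have h := restricted_mul_F (fun i ↦ ¬ m ∣ i)
  have e : (fun n ↦ ((numRegularPartitions m n : ℕ) : ZMod 2)) =
      fun n ↦ (((Nat.Partition.restricted n (fun i ↦ ¬ m ∣ i)).card : ℕ) : ZMod 2) := by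
    ext n
    congr 1
    rw [numRegularPartitions, Nat.card_eq_fintype_card, Fintype.card_subtype,
      Nat.Partition.restricted]
  rw [e]
  rw [← h.tprod_eq, ← (hasProd_expand m hm).tprod_eq]
  have hm' : 0 < m := Nat.pos_of_ne_zero hm
  symm
  refine (tprod_eq_tprod_of_ne_one_bij (fun i ↦ m * (i.val + 1) - 1) ?_ ?_ ?_).symm
  · intro a b hab
    have h1 : m * (a.val + 1) = m * (b.val + 1) := by
      have : 0 < m * (a.val + 1) := by positivity
      have : 0 < m * (b.val + 1) := by positivity
      dsimp at hab
      omega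
    have := Nat.eq_of_mul_eq_mul_left hm' h1
    exact Subtype.ext (by omega)
  · intro i hi
    rw [Function.mem_mulSupport] at hi
    have hd : m ∣ i + 1 := by
      by_contra hc
      simp [hc] at hi
    obtain ⟨j, hj⟩ := hd
    have hj0 : j ≠ 0 := by rintro rfl; simp at hj
    refine ⟨⟨j - 1, ?_⟩, ?_⟩
    · rw [Function.mem_mulSupport, Nat.sub_add_cancel (by omega), ← hj]
      intro hc
      apply hi
      simp [hc]
    · dsimp
      rw [Nat.sub_add_cancel (by omega), ← hj]
      simp
  · intro i
    have : m * (i.val + 1) - 1 + 1 = m * (i.val + 1) := by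
      have : 0 < m * (i.val + 1) := by positivity
      omega
    simp [this]

/-- Splitting off the first component of a multipartition. -/
def multiEquiv (t n : ℕ) :
    {f : Fin (t + 1) → Σ k : ℕ, k.Partition // (∑ i, (f i).1) = n} ≃
    Σ p : Finset.HasAntidiagonal.antidiagonal n, (Nat.Partition p.1.1) ×
      {f : Fin t → Σ k : ℕ, k.Partition // (∑ i, (f i).1) = p.1.2} where
  toFun f := ⟨⟨((f.1 0).1, ∑ i : Fin t, (f.1 i.succ).1), by
    have := f.2
    rw [Fin.sum_univ_succ] at this
    simpa using this⟩, (f.1 0).2, ⟨fun i ↦ f.1 i.succ, rfl⟩⟩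
  invFun x := ⟨Fin.cons ⟨x.1.1.1, x.2.1⟩ x.2.2.1, by
    have h1 := x.1.2
    have h2 := x.2.2.2
    rw [Finset.HasAntidiagonal.mem_antidiagonal] at h1
    rw [Fin.sum_univ_succ]
    simp only [Fin.cons_zero, Fin.cons_succ]
    omega⟩
  left_inv f := by
    apply Subtype.ext
    funext i
    refine Fin.cases ?_ ?_ i <;> simp
  right_inv x := by
    obtain ⟨⟨⟨a, b⟩, hab⟩, π, ⟨f, hf⟩⟩ := x
    dsimp at hf
    subst hf
    rfl

theorem finite_multi (t : ℕ) : ∀ n : ℕ,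
    Finite {f : Fin t → Σ k : ℕ, k.Partition // (∑ i, (f i).1) = n} := by
  induction t with
  | zero => intro n; infer_instance
  | succ t ih =>
    intro n
    have := ih
    exact Finite.of_equiv _ (multiEquiv t n).symm

theorem multi_gf (t : ℕ) :
    (PowerSeries.mk fun n ↦ ((numMultipartitions t n : ℕ) : ZMod 2)) = Pg ^ t := by
  induction t with
  | zero =>
    ext n
    rw [pow_zero, coeff_mk, coeff_one, numMultipartitions]
    split_ifs with h
    · subst h
      simp
    · have : IsEmpty {f : Fin 0 → Σ k : ℕ, k.Partition // (∑ i, (f i).1) = n} :=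
        ⟨fun f ↦ h (by simpa using f.2.symm)⟩
      rw [Nat.card_of_isEmpty, Nat.cast_zero]
  | succ t ih =>
    rw [pow_succ', ← ih]
    ext n
    have := finite_multi t
    rw [coeff_mul, coeff_mk, numMultipartitions, Nat.card_congr (multiEquiv t n), Nat.card_sigma,
      Finset.univ_eq_attach,
      Finset.sum_attach (Finset.HasAntidiagonal.antidiagonal n) (fun p ↦ Nat.card (Nat.Partition p.1 ×
      {f : Fin t → Σ k : ℕ, k.Partition // (∑ i, (f i).1) = p.2}))]
    rw [Nat.cast_sum]
    refine Finset.sum_congr rfl fun p _ ↦ ?_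
    rw [Nat.card_prod, Pg, coeff_mk, coeff_mk, Nat.cast_mul, numMultipartitions,
      Nat.card_eq_fintype_card (α := Nat.Partition p.1)]

end RegPart

namespace RegPart
open PowerSeries

/-- Theta series modulo two: the coefficient of `X ^ n` is the parity of the number of
`i ∈ S` with `w i = 24 * n`. -/
noncomputable def Th {ι : Type} (S : Set ι) (w : ι → ℤ) : (ZMod 2)⟦X⟧ :=
  PowerSeries.mk fun n ↦ (({i | i ∈ S ∧ w i = 24 * (n : ℤ)}.ncard : ℕ) : ZMod 2)

/-- The weight `w` takes values in `24 ℕ` on `S` with finite fibres. -/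
structure Good {ι : Type} (S : Set ι) (w : ι → ℤ) : Prop where
  nn : ∀ i ∈ S, ∃ n : ℕ, w i = 24 * (n : ℤ)
  fin : ∀ n : ℕ, {i | i ∈ S ∧ w i = 24 * (n : ℤ)}.Finite

theorem Good.subset {ι : Type} {S T : Set ι} {w : ι → ℤ} (h : Good S w) (hT : T ⊆ S) :
    Good T w :=
  ⟨fun i hi ↦ h.nn i (hT hi), fun n ↦ (h.fin n).subset fun _ hi ↦ ⟨hT hi.1, hi.2⟩⟩

theorem fiber_prod {ι κ : Type} {S : Set ι} {w : ι → ℤ} {T : Set κ} {v : κ → ℤ}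
    (hS : Good S w) (hT : Good T v) (n : ℕ) :
    {i : ι × κ | i ∈ S ×ˢ T ∧ w i.1 + v i.2 = 24 * (n : ℤ)} =
    ⋃ p ∈ (Finset.HasAntidiagonal.antidiagonal n : Finset (ℕ × ℕ)),
      ({i | i ∈ S ∧ w i = 24 * (p.1 : ℤ)} ×ˢ {i | i ∈ T ∧ v i = 24 * (p.2 : ℤ)}) := by
  ext ⟨i, j⟩
  simp only [Set.mem_ofPred_eq, Set.mem_iUnion, Set.mem_prod, exists_prop, Prod.exists,
    Finset.HasAntidiagonal.mem_antidiagonal]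
  constructor
  · rintro ⟨⟨hi, hj⟩, h⟩
    obtain ⟨a, ha⟩ := hS.nn i hi
    obtain ⟨b, hb⟩ := hT.nn j hj
    exact ⟨a, b, by omega, ⟨hi, ha⟩, hj, hb⟩
  · rintro ⟨a, b, hab, ⟨hi, ha⟩, hj, hb⟩
    exact ⟨⟨hi, hj⟩, by omega⟩

theorem Good.prod {ι κ : Type} {S : Set ι} {w : ι → ℤ} {T : Set κ} {v : κ → ℤ}
    (hS : Good S w) (hT : Good T v) :
    Good (S ×ˢ T) (fun i : ι × κ ↦ w i.1 + v i.2) := by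
  refine ⟨?_, fun n ↦ ?_⟩
  · rintro ⟨i, j⟩ ⟨hi, hj⟩
    obtain ⟨a, ha⟩ := hS.nn i hi
    obtain ⟨b, hb⟩ := hT.nn j hj
    exact ⟨a + b, by push_cast; omega⟩
  · rw [fiber_prod hS hT n]
    exact Set.Finite.biUnion (Finset.finite_toSet _) fun p _ ↦ (hS.fin _).prod (hT.fin _)

theorem Th_mul {ι κ : Type} {S : Set ι} {w : ι → ℤ} {T : Set κ} {v : κ → ℤ}
    (hS : Good S w) (hT : Good T v) :
    Th S w * Th T v = Th (S ×ˢ T) (fun i : ι × κ ↦ w i.1 + v i.2) := by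
  ext n
  rw [coeff_mul]
  simp only [Th, coeff_mk]
  rw [fiber_prod hS hT n]
  have hf : ∀ p : ℕ × ℕ, ({i | i ∈ S ∧ w i = 24 * (p.1 : ℤ)} ×ˢ
      {i | i ∈ T ∧ v i = 24 * (p.2 : ℤ)}).Finite := fun p ↦ (hS.fin _).prod (hT.fin _)
  have e : ∀ U : Finset (ℕ × ℕ), (⋃ p ∈ U, ({i | i ∈ S ∧ w i = 24 * (p.1 : ℤ)} ×ˢ
      {i | i ∈ T ∧ v i = 24 * (p.2 : ℤ)})).ncard =
      ∑ p ∈ U, {i | i ∈ S ∧ w i = 24 * (p.1 : ℤ)}.ncard *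
        {i | i ∈ T ∧ v i = 24 * (p.2 : ℤ)}.ncard := by
    intro U
    induction U using Finset.induction_on with
    | empty => simp
    | insert a U ha ih =>
      have hfU : (⋃ p ∈ U, ({i | i ∈ S ∧ w i = 24 * (p.1 : ℤ)} ×ˢ
          {i | i ∈ T ∧ v i = 24 * (p.2 : ℤ)})).Finite :=
        Set.Finite.biUnion (Finset.finite_toSet U) fun p _ ↦ hf p
      rw [Finset.sum_insert ha, Finset.set_biUnion_insert, Set.ncard_union_eq ?_ (hf a) hfU, ih, Set.ncard_prod]
      · rw [Set.disjoint_left]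
        rintro ⟨i, j⟩ ⟨⟨_, h1⟩, ⟨_, h2⟩⟩ hU
        simp only [Set.mem_iUnion, Set.mem_prod, Set.mem_ofPred_eq] at hU
        obtain ⟨b, hb, ⟨_, h3⟩, _, h4⟩ := hU
        apply ha
        have : a = b := by
          dsimp at h1 h2
          ext <;> omega
        rwa [this]
  rw [e, Nat.cast_sum]
  simp

theorem Th_congr {ι κ : Type} {S : Set ι} {w : ι → ℤ} {T : Set κ} {v : κ → ℤ}
    (f : ι → κ) (g : κ → ι) (hf : ∀ i ∈ S, f i ∈ T ∧ v (f i) = w i ∧ g (f i) = i)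
    (hg : ∀ j ∈ T, g j ∈ S ∧ f (g j) = j) : Th S w = Th T v := by
  ext n
  simp only [Th, coeff_mk]
  congr 1
  refine Set.ncard_congr (fun i _ ↦ f i) ?_ ?_ ?_
  · rintro i ⟨hi, h⟩
    exact ⟨(hf i hi).1, (hf i hi).2.1.trans h⟩
  · rintro i j ⟨hi, _⟩ ⟨hj, _⟩ h
    rw [← (hf i hi).2.2, ← (hf j hj).2.2, h]
  · rintro j ⟨hj, h⟩
    refine ⟨g j, ⟨(hg j hj).1, ?_⟩, (hg j hj).2⟩
    rw [← (hf _ (hg j hj).1).2.1, (hg j hj).2, h]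

theorem Th_split {ι : Type} {S T U : Set ι} {w : ι → ℤ} (h : Good S w)
    (hU : S = T ∪ U) (hd : Disjoint T U) : Th S w = Th T w + Th U w := by
  ext n
  simp only [Th, coeff_mk, map_add]
  rw [← Nat.cast_add, ← Set.ncard_union_eq ?_
    ((h.subset (by rw [hU]; exact Set.subset_union_left)).fin n)
    ((h.subset (by rw [hU]; exact Set.subset_union_right)).fin n)]
  · congr 2
    ext i
    simp only [hU, Set.mem_ofPred_eq, Set.mem_union]
    tauto
  · rw [Set.disjoint_left] at hd ⊢
    rintro i ⟨hi, _⟩ ⟨hj, _⟩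
    exact hd hi hj

theorem Th_expand {ι : Type} {S : Set ι} {w : ι → ℤ} (h : Good S w) (d : ℕ) (hd : d ≠ 0) :
    expand d hd (Th S w) = Th S (fun i ↦ d * w i) := by
  ext n
  rw [coeff_expand]
  simp only [Th, coeff_mk]
  have hd' : (d : ℤ) ≠ 0 := by exact_mod_cast hd
  split_ifs with hn
  · obtain ⟨m, rfl⟩ := hn
    rw [Nat.mul_div_cancel_left _ (Nat.pos_of_ne_zero hd)]
    congr 3
    ext i
    push_cast
    rw [show (24 : ℤ) * (d * m) = d * (24 * m) by ring, mul_right_inj' hd']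
  · symm
    rw [show {i | i ∈ S ∧ d * w i = 24 * (n : ℤ)} = ∅ from ?_]
    · simp
    · rw [Set.eq_empty_iff_forall_notMem]
      rintro i ⟨hi, hw⟩
      obtain ⟨m, hm⟩ := h.nn i hi
      apply hn
      refine ⟨m, ?_⟩
      have : (n : ℤ) = d * m := by
        rw [hm] at hw
        linarith
      exact_mod_cast this

theorem Th_X {ι : Type} {S : Set ι} {w : ι → ℤ} (h : Good S w) (r : ℕ) :
    X ^ r * Th S w = Th S (fun i ↦ w i + 24 * r) := by
  ext n
  rw [coeff_X_pow_mul']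
  simp only [Th, coeff_mk]
  split_ifs with hn
  · congr 3
    ext i
    have : w i = 24 * ((n - r : ℕ) : ℤ) ↔ w i + 24 * r = 24 * (n : ℤ) := by omega
    simp only [this]
  · symm
    rw [show {i | i ∈ S ∧ w i + 24 * r = 24 * (n : ℤ)} = ∅ from ?_]
    · simp
    · rw [Set.eq_empty_iff_forall_notMem]
      rintro i ⟨hi, hw⟩
      obtain ⟨m, hm⟩ := h.nn i hi
      omega

theorem Th_invol {ι : Type} {S : Set ι} {w : ι → ℤ} (h : Good S w) (σ : ι → ι)
    (hσ : ∀ i ∈ S, σ i ∈ S ∧ w (σ i) = w i ∧ σ (σ i) = i) :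
    Th S w = Th {i | i ∈ S ∧ σ i = i} w := by
  classical
  rw [Th_split (T := {i | i ∈ S ∧ σ i = i}) (U := {i | i ∈ S ∧ σ i ≠ i}) h]
  · suffices Th {i | i ∈ S ∧ σ i ≠ i} w = 0 by rw [this, add_zero]
    ext n
    have hfin := (h.subset (T := {i | i ∈ S ∧ σ i ≠ i}) (fun i hi ↦ hi.1)).fin n
    simp only [Th, coeff_mk, map_zero]
    rw [Set.ncard_eq_toFinset_card _ hfin, Finset.card_eq_sum_ones, Nat.cast_sum]
    refine Finset.sum_involution (fun i _ ↦ σ i) ?_ ?_ ?_ ?_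
    · intro i _
      decide
    · intro i hi _
      rw [Set.Finite.mem_toFinset] at hi
      exact hi.1.2
    · intro i hi
      rw [Set.Finite.mem_toFinset] at hi ⊢
      obtain ⟨⟨h1, h2⟩, h3⟩ := hi
      obtain ⟨h4, h5, h6⟩ := hσ i h1
      exact ⟨⟨h4, by rw [h6]; exact h2.symm⟩, h5.trans h3⟩
    · intro i hi
      rw [Set.Finite.mem_toFinset] at hi
      exact (hσ i hi.1.1).2.2
  · ext i
    simp only [Set.mem_ofPred_eq, Set.mem_union]
    tauto
  · rw [Set.disjoint_left]
    rintro i ⟨_, h1⟩ ⟨_, h2⟩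
    exact h2 h1

theorem fin_sq (S : Set ℤ) (a b : ℤ) (ha : 0 < a) (n : ℕ) :
    {x : ℤ | x ∈ S ∧ a * (x ^ 2 - 1) + b = 24 * (n : ℤ)}.Finite := by
  refine (Set.finite_Icc (-(24 * n + a + |b|)) (24 * n + a + |b|)).subset ?_
  rintro x ⟨_, hx⟩
  have hb := neg_abs_le b
  have hb' := abs_nonneg b
  have h1 : a * x ^ 2 ≤ 24 * n + a + |b| := by linarith
  have h2 : x ^ 2 ≤ a * x ^ 2 := by nlinarith [sq_nonneg x]
  have h3 : |x| ≤ x ^ 2 := by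
    rw [← sq_abs]
    have h0 := abs_nonneg x
    rcases eq_or_lt_of_le h0 with h | h
    · rw [← h]; norm_num
    · nlinarith
  rw [Set.mem_Icc]
  exact abs_le.mp (by linarith)

/-- Integers congruent to 1 modulo 6. -/
def S6 : Set ℤ := {x | x % 6 = 1}
/-- Integers congruent to 1 modulo 4. -/
def S4 : Set ℤ := {x | x % 4 = 1}

theorem good_S6 : Good S6 (fun x ↦ x ^ 2 - 1) := by
  refine ⟨fun x hx ↦ ?_, fun n ↦ by simpa using fin_sq S6 1 0 one_pos n⟩
  have hx : x % 6 = 1 := hx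
  obtain ⟨k, rfl⟩ : ∃ k, x = 1 - 6 * k := ⟨(1 - x) / 6, by omega⟩
  have := two_mul_natCast_pentagonal k
  exact ⟨pentagonal k, by linarith⟩

theorem good_S4 : Good S4 (fun x ↦ 3 * (x ^ 2 - 1)) := by
  refine ⟨fun x hx ↦ ?_, fun n ↦ by simpa using fin_sq S4 3 0 (by norm_num) n⟩
  have hx : x % 4 = 1 := hx
  obtain ⟨k, rfl⟩ : ∃ k, x = 4 * k + 1 := ⟨x / 4, by omega⟩
  refine ⟨(2 * k ^ 2 + k).toNat, ?_⟩
  rw [Int.toNat_of_nonneg]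
  · ring
  · rcases le_or_gt 0 k with h | h
    · positivity
    · nlinarith

theorem F_eq : F = Th S6 (fun x ↦ x ^ 2 - 1) := by
  ext n
  simp only [Th, coeff_mk, F]
  by_cases h : n ∈ Set.range pentagonal
  · obtain ⟨k, rfl⟩ := h
    rw [coeff_pentagonalSeries_pentagonal]
    have : {x | x ∈ S6 ∧ x ^ 2 - 1 = 24 * (pentagonal k : ℤ)} = {1 - 6 * k} := by
      ext x
      simp only [Set.mem_ofPred_eq, Set.mem_singleton_iff]
      have hk := two_mul_natCast_pentagonal k
      constructor
      · rintro ⟨h1, h2⟩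
        have h1 : x % 6 = 1 := h1
        have h3 : (x - (1 - 6 * k)) * (x + (1 - 6 * k)) = 0 := by linarith
        rcases mul_eq_zero.mp h3 with h | h <;> omega
      · rintro rfl
        refine ⟨?_, by linarith⟩
        show (1 - 6 * k) % 6 = 1
        omega
    rw [this, Set.ncard_singleton]
    rcases Int.even_or_odd k with hk | hk
    · rw [Int.negOnePow_even k hk]; rfl
    · rw [Int.negOnePow_odd k hk]; rfl
  · rw [coeff_pentagonalSeries_eq_zero _ h]
    have : {x | x ∈ S6 ∧ x ^ 2 - 1 = 24 * (n : ℤ)} = ∅ := by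
      rw [Set.eq_empty_iff_forall_notMem]
      rintro x ⟨h1, h2⟩
      apply h
      have h1 : x % 6 = 1 := h1
      obtain ⟨k, rfl⟩ : ∃ k, x = 1 - 6 * k := ⟨(1 - x) / 6, by omega⟩
      have := two_mul_natCast_pentagonal k
      exact ⟨k, by zify; linarith⟩
    rw [this]
    simp

/-- The triangular theta function modulo two. -/
noncomputable def Y : (ZMod 2)⟦X⟧ := Th S4 (fun x ↦ 3 * (x ^ 2 - 1))

theorem F_mul_Y : F * Y = expand 4 (by norm_num) F := by
  rw [F_eq, Y, Th_mul good_S6 good_S4, Th_expand good_S6]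
  have hg : Good {p : ℤ × ℤ | p.1 % 6 = 1 ∧ (p.1 - p.2) % 4 = 2}
      (fun p ↦ p.1 ^ 2 - 1 + 3 * (p.2 ^ 2 - 1)) := by
    have h0 := good_S6.prod good_S4
    refine ⟨?_, fun n ↦ ?_⟩
    · rintro ⟨x, y⟩ ⟨h1, h2⟩
      dsimp at h1 h2
      rcases (show y % 4 = 1 ∨ (-y) % 4 = 1 by omega) with h | h
      · exact h0.nn (x, y) ⟨h1, h⟩
      · simpa using h0.nn (x, -y) ⟨h1, h⟩
    · have h1 := h0.fin n
      refine (h1.union (h1.preimage (f := fun p : ℤ × ℤ ↦ (p.1, -p.2)) ?_)).subset ?_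
      · rintro ⟨a, b⟩ _ ⟨c, d⟩ _ h
        simpa using h
      · rintro ⟨x, y⟩ ⟨⟨h1, h2⟩, h3⟩
        dsimp at h1 h2 h3
        rcases (show y % 4 = 1 ∨ (-y) % 4 = 1 by omega) with h | h
        · exact Or.inl ⟨⟨h1, h⟩, h3⟩
        · exact Or.inr ⟨⟨h1, h⟩, by simpa using h3⟩
  trans Th {p : ℤ × ℤ | p.1 % 6 = 1 ∧ (p.1 - p.2) % 4 = 2}
      (fun p ↦ p.1 ^ 2 - 1 + 3 * (p.2 ^ 2 - 1))
  · refine Th_congr (fun p ↦ if p.1 % 4 = 3 then p else (p.1, -p.2))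
      (fun p ↦ if p.1 % 4 = 3 then p else (p.1, -p.2)) ?_ ?_
    · rintro ⟨x, y⟩ ⟨h1, h2⟩
      have h1 : x % 6 = 1 := h1
      have h2 : y % 4 = 1 := h2
      by_cases h : x % 4 = 3
      · simp only [h, if_true, Set.mem_ofPred_eq]
        exact ⟨⟨h1, by omega⟩, trivial, trivial⟩
      · simp only [h, if_false, Set.mem_ofPred_eq]
        exact ⟨⟨h1, by omega⟩, by ring, by simp⟩
    · rintro ⟨x, y⟩ ⟨h1, h2⟩
      dsimp at h1 h2
      by_cases h : x % 4 = 3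
      · simp only [h, if_true]
        exact ⟨⟨h1, show y % 4 = 1 by omega⟩, trivial⟩
      · simp only [h, if_false]
        exact ⟨⟨h1, show (-y) % 4 = 1 by omega⟩, by simp⟩
  rw [Th_invol hg (fun p ↦ (-((p.1 + 3 * p.2) / 2), (p.2 - p.1) / 2))]
  · refine Th_congr (fun p ↦ p.1) (fun x ↦ (x, -x)) ?_ ?_
    · rintro ⟨x, y⟩ ⟨⟨h1, h2⟩, h3⟩
      rw [Prod.ext_iff] at h3
      dsimp at h1 h2 h3 ⊢
      have : y = -x := by omega
      subst this
      exact ⟨h1, by ring, rfl⟩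
    · intro x hx
      have hx : x % 6 = 1 := hx
      refine ⟨⟨⟨hx, ?_⟩, ?_⟩, rfl⟩
      · dsimp; omega
      · rw [Prod.ext_iff]
        dsimp
        omega
  · rintro ⟨x, y⟩ ⟨h1, h2⟩
    dsimp at h1 h2
    obtain ⟨a, rfl⟩ : ∃ a, x = y + 2 + 4 * a := ⟨(x - y - 2) / 4, by omega⟩
    have e1 : (y + 2 + 4 * a + 3 * y) / 2 = 2 * y + 1 + 2 * a := by omega
    have e2 : (y - (y + 2 + 4 * a)) / 2 = -1 - 2 * a := by omega
    dsimp
    rw [e1, e2]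
    refine ⟨⟨?_, ?_⟩, by ring, ?_⟩
    · omega
    · omega
    · rw [Prod.ext_iff]
      dsimp
      omega

theorem Good.smul {ι : Type} {S : Set ι} {w : ι → ℤ} (h : Good S w) (d : ℕ) (hd : d ≠ 0) :
    Good S (fun i ↦ d * w i) := by
  refine ⟨fun i hi ↦ ?_, fun n ↦ ?_⟩
  · obtain ⟨m, hm⟩ := h.nn i hi
    exact ⟨d * m, by rw [hm]; push_cast; ring⟩
  · have hd' : (d : ℤ) ≠ 0 := by exact_mod_cast hd
    by_cases hn : d ∣ n
    · obtain ⟨m, rfl⟩ := hn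
      refine (h.fin m).subset ?_
      rintro i ⟨hi, hw⟩
      refine ⟨hi, ?_⟩
      apply mul_left_cancel₀ hd'
      rw [hw]
      push_cast
      ring
    · convert Set.finite_empty
      rw [Set.eq_empty_iff_forall_notMem]
      rintro i ⟨hi, hw⟩
      obtain ⟨m, hm⟩ := h.nn i hi
      apply hn
      refine ⟨m, ?_⟩
      have : (n : ℤ) = d * m := by
        rw [hm] at hw
        linarith
      exact_mod_cast this

theorem Good.shift {ι : Type} {S : Set ι} {w : ι → ℤ} (h : Good S w) (r : ℕ) :
    Good S (fun i ↦ w i + 24 * r) := by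
  refine ⟨fun i hi ↦ ?_, fun n ↦ ?_⟩
  · obtain ⟨m, hm⟩ := h.nn i hi
    exact ⟨m + r, by rw [hm]; push_cast; ring⟩
  · refine (h.fin (n - r)).subset ?_
    rintro i ⟨hi, hw⟩
    obtain ⟨m, hm⟩ := h.nn i hi
    exact ⟨hi, by omega⟩

/-- All exponents of `g` lie in the residue class `r` modulo `5`. -/
def Cls (r : ℕ) (g : (ZMod 2)⟦X⟧) : Prop := ∀ n : ℕ, n % 5 ≠ r % 5 → coeff n g = 0

theorem Cls_Th {ι : Type} {S : Set ι} {w : ι → ℤ} (r : ℕ)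
    (h : ∀ i ∈ S, (w i + r) % 5 = 0) : Cls r (Th S w) := by
  intro n hn
  simp only [Th, coeff_mk]
  rw [show {i | i ∈ S ∧ w i = 24 * (n : ℤ)} = ∅ from ?_]
  · simp
  · rw [Set.eq_empty_iff_forall_notMem]
    rintro i ⟨hi, hw⟩
    have := h i hi
    omega

/-- First component of the dissection of `F`. -/
noncomputable def FA : (ZMod 2)⟦X⟧ :=
  Th {x : ℤ | x % 6 = 1 ∧ (x % 5 = 1 ∨ x % 5 = 4)} (fun x ↦ x ^ 2 - 1)
/-- Third component of the dissection of `F`. -/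
noncomputable def FB : (ZMod 2)⟦X⟧ :=
  Th {x : ℤ | x % 6 = 1 ∧ (x % 5 = 2 ∨ x % 5 = 3)} (fun x ↦ x ^ 2 - 1)
/-- Second component of the dissection of `F`. -/
noncomputable def FC : (ZMod 2)⟦X⟧ :=
  Th {x : ℤ | x % 6 = 1 ∧ x % 5 = 0} (fun x ↦ x ^ 2 - 1)

theorem sq_mod5 (x : ℤ) : x ^ 2 % 5 = (x % 5) * (x % 5) % 5 := by
  rw [pow_two, Int.mul_emod]

theorem F_split : F = FA + FB + FC := by
  rw [F_eq, FA, FB, FC, add_assoc,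
    ← Th_split (S := {x : ℤ | x % 6 = 1 ∧ (x % 5 = 2 ∨ x % 5 = 3 ∨ x % 5 = 0)})]
  · apply Th_split good_S6
    · ext x
      simp only [S6, Set.mem_ofPred_eq, Set.mem_union]
      omega
    · rw [Set.disjoint_left]
      rintro x ⟨_, h1⟩ ⟨_, h2⟩
      omega
  · exact good_S6.subset fun x hx ↦ hx.1
  · ext x
    simp only [Set.mem_ofPred_eq, Set.mem_union]
    omega
  · rw [Set.disjoint_left]
    rintro x ⟨_, h1⟩ ⟨_, h2⟩
    omega

theorem cls_FA : Cls 0 FA := by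
  apply Cls_Th
  rintro x ⟨_, h⟩
  have := sq_mod5 x
  rcases h with h | h <;> rw [h] at this <;> push_cast <;> omega

theorem cls_FB : Cls 2 FB := by
  apply Cls_Th
  rintro x ⟨_, h⟩
  have := sq_mod5 x
  rcases h with h | h <;> rw [h] at this <;> push_cast <;> omega

theorem cls_FC : Cls 1 FC := by
  apply Cls_Th
  rintro x ⟨_, h⟩
  have := sq_mod5 x
  rw [h] at this
  push_cast
  omega

/-- Substitution of `X ^ 5`. -/
noncomputable def phi : (ZMod 2)⟦X⟧ →ₐ[ZMod 2] (ZMod 2)⟦X⟧ := expand 5 (by norm_num)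

theorem phi_Th {ι : Type} {S : Set ι} {w : ι → ℤ} (h : Good S w) :
    phi (Th S w) = Th S (fun i ↦ 5 * w i) := Th_expand h 5 (by norm_num)

theorem FC_eq : FC = X * phi (phi F) := by
  have h5 : Good S6 (fun x ↦ 5 * (x ^ 2 - 1)) := good_S6.smul 5 (by norm_num)
  have h25 : Good S6 (fun x ↦ 5 * (5 * (x ^ 2 - 1))) := h5.smul 5 (by norm_num)
  have hX := Th_X h25 1
  rw [pow_one] at hX
  rw [F_eq, phi_Th good_S6, phi_Th h5, hX, FC]
  refine Th_congr (fun x ↦ -(x / 5)) (fun x ↦ -5 * x) ?_ ?_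
  · rintro x ⟨h1, h2⟩
    obtain ⟨y, rfl⟩ : ∃ y, x = 5 * y := ⟨x / 5, by omega⟩
    have e : 5 * y / 5 = y := by omega
    rw [e]
    refine ⟨?_, by push_cast; ring, by ring⟩
    show (-y) % 6 = 1
    omega
  · intro x hx
    have hx : x % 6 = 1 := hx
    refine ⟨⟨?_, ?_⟩, ?_⟩ <;> omega

/-- First component of the dissection of `Y`. -/
noncomputable def YA : (ZMod 2)⟦X⟧ :=
  Th {x : ℤ | x % 4 = 1 ∧ (x % 5 = 1 ∨ x % 5 = 4)} (fun x ↦ 3 * (x ^ 2 - 1))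
/-- Second component of the dissection of `Y`. -/
noncomputable def YB : (ZMod 2)⟦X⟧ :=
  Th {x : ℤ | x % 4 = 1 ∧ (x % 5 = 2 ∨ x % 5 = 3)} (fun x ↦ 3 * (x ^ 2 - 1))
/-- Third component of the dissection of `Y`. -/
noncomputable def YC : (ZMod 2)⟦X⟧ :=
  Th {x : ℤ | x % 4 = 1 ∧ x % 5 = 0} (fun x ↦ 3 * (x ^ 2 - 1))

theorem Y_split : Y = YA + YB + YC := by
  rw [Y, YA, YB, YC, add_assoc,
    ← Th_split (S := {x : ℤ | x % 4 = 1 ∧ (x % 5 = 2 ∨ x % 5 = 3 ∨ x % 5 = 0)})]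
  · apply Th_split good_S4
    · ext x
      simp only [S4, Set.mem_ofPred_eq, Set.mem_union]
      omega
    · rw [Set.disjoint_left]
      rintro x ⟨_, h1⟩ ⟨_, h2⟩
      omega
  · exact good_S4.subset fun x hx ↦ hx.1
  · ext x
    simp only [Set.mem_ofPred_eq, Set.mem_union]
    omega
  · rw [Set.disjoint_left]
    rintro x ⟨_, h1⟩ ⟨_, h2⟩
    omega

theorem cls_YA : Cls 0 YA := by
  apply Cls_Th
  rintro x ⟨_, h⟩
  have := sq_mod5 x
  rcases h with h | h <;> rw [h] at this <;> push_cast <;> omega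

theorem cls_YB : Cls 1 YB := by
  apply Cls_Th
  rintro x ⟨_, h⟩
  have := sq_mod5 x
  rcases h with h | h <;> rw [h] at this <;> push_cast <;> omega

theorem cls_YC : Cls 3 YC := by
  apply Cls_Th
  rintro x ⟨_, h⟩
  have := sq_mod5 x
  rw [h] at this
  push_cast
  omega

theorem YA_mul_YB : YA * YB + X ^ 6 * (phi (phi Y) * phi (phi Y)) = X * (phi Y * phi Y) := by
  have h5 : Good S4 (fun x ↦ 5 * (3 * (x ^ 2 - 1))) := good_S4.smul 5 (by norm_num)
  have h25 : Good S4 (fun x ↦ 5 * (5 * (3 * (x ^ 2 - 1)))) := h5.smul 5 (by norm_num)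
  have hX := Th_X (h5.prod h5) 1
  rw [pow_one] at hX
  have hS : Good (S4 ×ˢ S4) _ := (h5.prod h5).shift 1
  rw [Y, phi_Th good_S4, phi_Th h5, Th_mul h5 h5, Th_mul h25 h25, Th_X (h25.prod h25), hX, YA, YB,
    Th_mul (good_S4.subset fun x hx ↦ hx.1) (good_S4.subset fun x hx ↦ hx.1)]
  rw [Th_split (T := {p : ℤ × ℤ | (p.1 % 4 = 1 ∧ p.2 % 4 = 1) ∧ (2 * p.1 - p.2) % 5 ≠ 0})
    (U := {p : ℤ × ℤ | (p.1 % 4 = 1 ∧ p.2 % 4 = 1) ∧ (2 * p.1 - p.2) % 5 = 0}) hS]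
  · congr 1
    · refine Th_congr
        (fun p ↦ if (p.2 - 2 * p.1) % 5 = 0 then ((2 * p.1 - p.2) / 5, -((p.1 + 2 * p.2) / 5))
          else ((2 * p.2 - p.1) / 5, -((p.2 + 2 * p.1) / 5)))
        (fun p ↦ if (2 * p.1 - p.2) % 5 = 1 ∨ (2 * p.1 - p.2) % 5 = 4 then
          (2 * p.1 - p.2, -(p.1 + 2 * p.2)) else (-(p.1 + 2 * p.2), 2 * p.1 - p.2)) ?_ ?_
      · rintro ⟨a, b⟩ ⟨⟨ha, ha'⟩, ⟨hb, hb'⟩⟩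
        dsimp only at ha ha' hb hb'
        by_cases h : (b - 2 * a) % 5 = 0
        · obtain ⟨k, rfl⟩ : ∃ k, b = 2 * a + 5 * k := ⟨(b - 2 * a) / 5, by omega⟩
          have e1 : (2 * a - (2 * a + 5 * k)) / 5 = -k := by omega
          have e2 : (a + 2 * (2 * a + 5 * k)) / 5 = a + 2 * k := by omega
          simp only [h, if_true, e1, e2, Set.mem_ofPred_eq]
          refine ⟨⟨⟨by omega, by omega⟩, by omega⟩, by push_cast; ring, ?_⟩
          rw [if_pos (by omega)]
          ext <;> dsimp only <;> ring
        · obtain ⟨k, rfl⟩ : ∃ k, b = -2 * a + 5 * k := ⟨(b + 2 * a) / 5, by omega⟩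
          have e1 : (2 * (-2 * a + 5 * k) - a) / 5 = -a + 2 * k := by omega
          have e2 : (-2 * a + 5 * k + 2 * a) / 5 = k := by omega
          simp only [h, if_false, e1, e2, Set.mem_ofPred_eq]
          refine ⟨⟨⟨by omega, by omega⟩, by omega⟩, by push_cast; ring, ?_⟩
          rw [if_neg (by omega)]
          ext <;> dsimp only <;> ring
      · rintro ⟨c, d⟩ ⟨⟨hc, hd⟩, hn⟩
        dsimp only at hc hd hn
        by_cases h : (2 * c - d) % 5 = 1 ∨ (2 * c - d) % 5 = 4
        · simp only [h, if_true]
          refine ⟨⟨⟨by dsimp only; omega, by dsimp only; omega⟩,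
            ⟨by dsimp only; omega, by dsimp only; omega⟩⟩, ?_⟩
          rw [if_pos (by omega)]
          ext <;> dsimp only <;> omega
        · have h3 : (-(c + 2 * d)) % 5 = 1 ∨ (-(c + 2 * d)) % 5 = 4 := by
            have : (2 * c - d) % 5 = 2 ∨ (2 * c - d) % 5 = 3 := by omega
            rcases this with h | h <;> omega
          simp only [h, if_false]
          refine ⟨⟨⟨by dsimp only; omega, by dsimp only; omega⟩,
            ⟨by dsimp only; omega, by dsimp only; omega⟩⟩, ?_⟩
          rw [if_neg (by omega)]
          ext <;> dsimp only <;> omega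
    · refine Th_congr (fun p ↦ (2 * p.1 - p.2, -(p.1 + 2 * p.2)))
        (fun p ↦ ((2 * p.1 - p.2) / 5, -((p.1 + 2 * p.2) / 5))) ?_ ?_
      · rintro ⟨c, d⟩ ⟨hc, hd⟩
        have hc : c % 4 = 1 := hc
        have hd : d % 4 = 1 := hd
        refine ⟨⟨⟨by dsimp only; omega, by dsimp only; omega⟩, by dsimp only; omega⟩,
          by push_cast; ring, ?_⟩
        ext <;> dsimp only <;> omega
      · rintro ⟨c, d⟩ ⟨⟨hc, hd⟩, hn⟩
        dsimp only at hc hd hn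
        refine ⟨⟨?_, ?_⟩, ?_⟩
        · show (2 * c - d) / 5 % 4 = 1
          omega
        · show (-((c + 2 * d) / 5)) % 4 = 1
          omega
        · ext <;> dsimp only <;> omega
  · ext ⟨x, y⟩
    simp only [S4, Set.mem_ofPred_eq, Set.mem_union, Set.mem_prod]
    tauto
  · rw [Set.disjoint_left]
    rintro x ⟨_, h1⟩ ⟨_, h2⟩
    omega

theorem two0 : (2 : (ZMod 2)⟦X⟧) = 0 := by
  have h : (2 : ZMod 2) = 0 := by decide
  have := congrArg (algebraMap (ZMod 2) (ZMod 2)⟦X⟧) h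
  rwa [map_ofNat, map_zero] at this

theorem frob2 (g : (ZMod 2)⟦X⟧) : expand 2 (by norm_num) g = g ^ 2 := by
  have h := MvPowerSeries.map_frobenius_expand (R := ZMod 2) (σ := Unit) 2 (by norm_num) (f := g)
  rw [ZMod.frobenius_zmod] at h
  rw [← h]
  rfl

theorem F_ne : F ≠ 0 := by
  intro h
  have := Pg_mul_F
  rw [h, mul_zero] at this
  exact zero_ne_one this

theorem Y_eq : Y = F ^ 3 := by
  have h := F_mul_Y
  have h4 : expand 4 (by norm_num) F = F ^ 4 := by
    have := expand_mul 2 (by norm_num) 2 (by norm_num) F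
    rw [frob2, frob2] at this
    rw [show F ^ 4 = (F ^ 2) ^ 2 by ring, ← this]
  rw [h4] at h
  apply mul_left_cancel₀ F_ne
  rw [h]
  ring

theorem expand50 : expand 50 (by norm_num) F = phi (phi F) ^ 2 := by
  have h1 := expand_mul 2 (by norm_num) 25 (by norm_num) F
  have h2 := expand_mul 5 (by norm_num) 5 (by norm_num) F
  rw [frob2] at h1
  rw [phi, ← h2, ← h1]

theorem coeff_phi (n : ℕ) (g : (ZMod 2)⟦X⟧) :
    coeff n (phi g) = if 5 ∣ n then coeff (n / 5) g else 0 := by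
  rw [phi, coeff_expand]

theorem Cls.add {r : ℕ} {a b : (ZMod 2)⟦X⟧} (ha : Cls r a) (hb : Cls r b) : Cls r (a + b) := by
  intro n hn
  rw [map_add, ha n hn, hb n hn, add_zero]

theorem Cls.mul {r s t : ℕ} {a b : (ZMod 2)⟦X⟧} (ha : Cls r a) (hb : Cls s b)
    (ht : (r + s) % 5 = t % 5) : Cls t (a * b) := by
  intro n hn
  rw [coeff_mul]
  apply Finset.sum_eq_zero
  rintro ⟨i, j⟩ hij
  rw [Finset.HasAntidiagonal.mem_antidiagonal] at hij
  dsimp only at hij ⊢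
  by_cases hi : i % 5 = r % 5
  · rw [hb j (by omega), mul_zero]
  · rw [ha i hi, zero_mul]

theorem Cls.cast {r s : ℕ} {a : (ZMod 2)⟦X⟧} (ha : Cls r a) (h : r % 5 = s % 5) : Cls s a := by
  intro n hn
  exact ha n (by omega)

theorem Cls.pow {r : ℕ} {a : (ZMod 2)⟦X⟧} (ha : Cls r a) (k : ℕ) : Cls (k * r) (a ^ k) := by
  induction k with
  | zero =>
    intro n hn
    rw [pow_zero, coeff_one, if_neg]
    rintro rfl
    simp at hn
  | succ k ih =>
    rw [pow_succ]
    exact ih.mul ha (by ring_nf)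

theorem cls_phi (g : (ZMod 2)⟦X⟧) : Cls 0 (phi g) := by
  intro n hn
  rw [coeff_phi, if_neg (by omega)]

theorem Cls.exists_phi {g : (ZMod 2)⟦X⟧} (hg : Cls 0 g) : ∃ m, g = phi m := by
  refine ⟨PowerSeries.mk fun n ↦ coeff (5 * n) g, ?_⟩
  ext n
  rw [coeff_phi]
  split_ifs with h
  · rw [coeff_mk]
    congr 2
    omega
  · exact hg n (by omega)

/-- Projection to the exponents congruent to `r` modulo `5`. -/
noncomputable def pr (r : ℕ) : (ZMod 2)⟦X⟧ →+ (ZMod 2)⟦X⟧ where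
  toFun g := PowerSeries.mk fun n ↦ if n % 5 = r then coeff n g else 0
  map_zero' := by ext n; simp
  map_add' a b := by
    ext n
    simp only [coeff_mk, map_add]
    split_ifs <;> simp

theorem pr_same {r : ℕ} {g : (ZMod 2)⟦X⟧} (h : Cls r g) (hr : r < 5) : pr r g = g := by
  ext n
  simp only [pr, AddMonoidHom.coe_mk, ZeroHom.coe_mk, coeff_mk]
  split_ifs with hn
  · rfl
  · exact (h n (by omega)).symm

theorem pr_diff {r s : ℕ} {g : (ZMod 2)⟦X⟧} (h : Cls s g) (hr : s % 5 ≠ r) : pr r g = 0 := by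
  ext n
  simp only [pr, AddMonoidHom.coe_mk, ZeroHom.coe_mk, coeff_mk, map_zero]
  split_ifs with hn
  · exact h n (by omega)
  · rfl

/-- Extraction of the exponents congruent to `4` modulo `5`. -/
noncomputable def U : (ZMod 2)⟦X⟧ →+ (ZMod 2)⟦X⟧ where
  toFun g := PowerSeries.mk fun n ↦ coeff (5 * n + 4) g
  map_zero' := by ext n; simp
  map_add' a b := by
    ext n
    simp only [coeff_mk, map_add]

theorem coeff_U (n : ℕ) (g : (ZMod 2)⟦X⟧) : coeff n (U g) = coeff (5 * n + 4) g := by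
  simp [U]

theorem U_kill {r : ℕ} {g : (ZMod 2)⟦X⟧} (h : Cls r g) (hr : r % 5 ≠ 4) : U g = 0 := by
  ext n
  rw [coeff_U, h _ (by omega), map_zero]

theorem U_phi_mul (a g : (ZMod 2)⟦X⟧) : U (phi a * g) = a * U g := by
  ext n
  rw [coeff_U, coeff_mul, coeff_mul]
  symm
  apply Finset.sum_of_injOn (fun p : ℕ × ℕ ↦ (5 * p.1, 5 * p.2 + 4))
  · rintro ⟨a, b⟩ _ ⟨c, d⟩ _ h
    simp only [Prod.mk.injEq] at h ⊢
    omega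
  · rintro ⟨i, j⟩ h
    simp only [Finset.mem_coe, Finset.HasAntidiagonal.mem_antidiagonal] at h ⊢
    omega
  · rintro ⟨i, j⟩ h h'
    rw [Finset.HasAntidiagonal.mem_antidiagonal] at h
    dsimp only at h ⊢
    rw [coeff_phi, if_neg, zero_mul]
    intro hd
    apply h'
    refine ⟨(i / 5, j / 5), ?_, ?_⟩
    · simp only [Finset.mem_coe, Finset.HasAntidiagonal.mem_antidiagonal]
      omega
    · simp only [Prod.mk.injEq]
      omega
  · rintro ⟨i, j⟩ _
    dsimp only
    rw [coeff_U, coeff_phi, if_pos (by omega), Nat.mul_div_cancel_left _ (by norm_num)]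

theorem U_X4 (a : (ZMod 2)⟦X⟧) : U (X ^ 4 * phi a) = a := by
  ext n
  rw [coeff_U, coeff_X_pow_mul', if_pos (by omega), coeff_phi, if_pos (by omega)]
  congr 2
  omega

theorem F0 : constantCoeff F = 1 := by
  have h := congrArg constantCoeff Pg_mul_F
  rw [map_mul, map_one] at h
  generalize constantCoeff Pg = a at h
  generalize constantCoeff F = b at h ⊢
  revert a b
  decide

theorem FA_ne : FA ≠ 0 := by
  intro h
  have h0 := F0
  rw [F_split, h, zero_add, map_add, ← coeff_zero_eq_constantCoeff_apply,
    ← coeff_zero_eq_constantCoeff_apply, cls_FB 0 (by norm_num), cls_FC 0 (by norm_num)] at h0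
  simp at h0

theorem cube_id : YA + YB + YC = (FA ^ 3 + FB ^ 2 * FC) + (FB ^ 3 + FA ^ 2 * FC) + FC ^ 3
    + (FA ^ 2 * FB + FC ^ 2 * FA) + (FB ^ 2 * FA + FC ^ 2 * FB) := by
  rw [← Y_split, Y_eq, F_split]
  linear_combination (FA ^ 2 * FB + FC ^ 2 * FA + FB ^ 2 * FA + FC ^ 2 * FB + FB ^ 2 * FC
    + FA ^ 2 * FC + 3 * FA * FB * FC) * two0

theorem c0 : Cls 0 (FA ^ 3 + FB ^ 2 * FC) :=
  ((cls_FA.pow 3).cast (by norm_num)).add ((cls_FB.pow 2).mul cls_FC (by norm_num))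
theorem c1 : Cls 1 (FB ^ 3 + FA ^ 2 * FC) :=
  ((cls_FB.pow 3).cast (by norm_num)).add ((cls_FA.pow 2).mul cls_FC (by norm_num))
theorem c3 : Cls 3 (FC ^ 3) := (cls_FC.pow 3).cast (by norm_num)
theorem c2 : Cls 2 (FA ^ 2 * FB + FC ^ 2 * FA) :=
  ((cls_FA.pow 2).mul cls_FB (by norm_num)).add ((cls_FC.pow 2).mul cls_FA (by norm_num))
theorem c4 : Cls 4 (FB ^ 2 * FA + FC ^ 2 * FB) :=
  ((cls_FB.pow 2).mul cls_FA (by norm_num)).add ((cls_FC.pow 2).mul cls_FB (by norm_num))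

theorem five (r : ℕ) {a b c d e : (ZMod 2)⟦X⟧} : pr r (a + b + c + d + e) =
    pr r a + pr r b + pr r c + pr r d + pr r e := by
  simp only [map_add]

theorem YA_eq : YA = FA ^ 3 + FB ^ 2 * FC := by
  have h := congrArg (pr 0) cube_id
  rw [five, map_add, map_add] at h
  rwa [pr_same cls_YA (by norm_num), pr_diff cls_YB (by norm_num), pr_diff cls_YC (by norm_num),
    pr_same c0 (by norm_num), pr_diff c1 (by norm_num), pr_diff c2 (by norm_num),
    pr_diff c3 (by norm_num), pr_diff c4 (by norm_num), add_zero, add_zero, add_zero, add_zero,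
    add_zero, add_zero] at h

theorem YB_eq : YB = FB ^ 3 + FA ^ 2 * FC := by
  have h := congrArg (pr 1) cube_id
  rw [five, map_add, map_add] at h
  rwa [pr_same cls_YB (by norm_num), pr_diff cls_YA (by norm_num), pr_diff cls_YC (by norm_num),
    pr_same c1 (by norm_num), pr_diff c0 (by norm_num), pr_diff c2 (by norm_num),
    pr_diff c3 (by norm_num), pr_diff c4 (by norm_num), add_zero, add_zero, add_zero, add_zero,
    zero_add, zero_add] at h

theorem AB_eq : FA * FB = FC ^ 2 := by
  have h := congrArg (pr 2) cube_id
  rw [five, map_add, map_add] at h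
  rw [pr_diff cls_YB (by norm_num), pr_diff cls_YA (by norm_num), pr_diff cls_YC (by norm_num),
    pr_same c2 (by norm_num), pr_diff c0 (by norm_num), pr_diff c1 (by norm_num),
    pr_diff c3 (by norm_num), pr_diff c4 (by norm_num)] at h
  apply mul_left_cancel₀ FA_ne
  linear_combination -h - FC ^ 2 * FA * two0

theorem C_mul_K : FC * (FA ^ 5 + FB ^ 5 + FC ^ 5) = X * phi F ^ 6 := by
  have h := AB_eq
  have h2 := YA_mul_YB
  rw [Y_eq, YA_eq, YB_eq, map_pow, map_pow] at h2
  have hC := FC_eq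
  have h3 : FC ^ 6 = X ^ 6 * (phi (phi F) ^ 3 * phi (phi F) ^ 3) := by
    rw [hC]
    ring
  rw [← h3] at h2
  linear_combination h2 - (FA ^ 2 * FB ^ 2 + 2 * FA * FB * FC ^ 2 + 2 * FC ^ 4) * h - FC ^ 6 * two0

theorem f25_mul_K : phi (phi F) * (FA ^ 5 + FB ^ 5 + FC ^ 5) = phi F ^ 6 := by
  have h := C_mul_K
  rw [FC_eq] at h
  apply mul_left_cancel₀ (X_ne_zero (R := ZMod 2))
  rw [FC_eq]
  linear_combination h

theorem poly_c (A B C : (ZMod 2)⟦X⟧) (h : A * B = C ^ 2) :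
    (A + B + C) ^ 6 + C * (A ^ 5 + B ^ 5 + C ^ 5) = (A + B + C) * (A ^ 5 + B ^ 5) := by
  linear_combination ( 5 * A ^ 4 + 15 * A ^ 3 * B + 30 * A ^ 3 * C + 20 * A ^ 2 * B ^ 2
    + 60 * A ^ 2 * B * C + 75 * A ^ 2 * C ^ 2 + 15 * A * B ^ 3 + 60 * A * B ^ 2 * C
    + 110 * A * B * C ^ 2 + 120 * A * C ^ 3 + 5 * B ^ 4 + 30 * B ^ 3 * C + 75 * B ^ 2 * C ^ 2
    + 120 * B * C ^ 3 + 140 * C ^ 4 ) * h + ( 3 * A ^ 5 * C + 10 * A ^ 4 * C ^ 2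
    + 25 * A ^ 3 * C ^ 3 + 45 * A ^ 2 * C ^ 4 + 63 * A * C ^ 5 + 3 * B ^ 5 * C + 10 * B ^ 4 * C ^ 2
    + 25 * B ^ 3 * C ^ 3 + 45 * B ^ 2 * C ^ 4 + 63 * B * C ^ 5 + 71 * C ^ 6 ) * two0

theorem poly_d (A B C : (ZMod 2)⟦X⟧) (h : A * B = C ^ 2) :
    (A + B + C) * ((A ^ 4 + B * C ^ 3) + A ^ 3 * C + B ^ 3 * C + (A * C ^ 3 + B ^ 4) + C ^ 4) =
      A ^ 5 + B ^ 5 + C ^ 5 := by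
  linear_combination ( A ^ 3 + A ^ 2 * C + B ^ 3 + B ^ 2 * C + 2 * C ^ 3 ) * h
    + ( A ^ 4 * C + A ^ 3 * C ^ 2 + A ^ 2 * C ^ 3 + A * C ^ 4 + B ^ 4 * C
    + B ^ 3 * C ^ 2 + B ^ 2 * C ^ 3 + B * C ^ 4 + C ^ 5 ) * two0

theorem poly_e (A B C : (ZMod 2)⟦X⟧) (h : A * B = C ^ 2) :
    (A ^ 4 + B * C ^ 3) * (A ^ 3 * C) ^ 2 + (A ^ 3 * C) * (A * C ^ 3 + B ^ 4) ^ 2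
      + (B ^ 3 * C) * (A ^ 4 + B * C ^ 3) ^ 2 + (A * C ^ 3 + B ^ 4) * (B ^ 3 * C) ^ 2
      + (C ^ 4) ^ 3 =
    C ^ 2 * (C ^ 10 + C ^ 5 * (A ^ 5 + B ^ 5 + C ^ 5) + (A ^ 5 + B ^ 5 + C ^ 5) ^ 2) := by
  linear_combination ( A ^ 7 * B ^ 2 * C + A ^ 6 * B * C ^ 3 + 2 * A ^ 5 * C ^ 5
    + (-2) * A ^ 4 * B ^ 4 * C ^ 2 + 2 * A ^ 3 * B ^ 3 * C ^ 4 + A ^ 2 * B ^ 7 * C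
    + 2 * A ^ 2 * B ^ 2 * C ^ 6 + A * B ^ 6 * C ^ 3 + 2 * A * B * C ^ 8 + 2 * B ^ 5 * C ^ 5
    + 2 * C ^ 10 ) * h

theorem phi_inj : Function.Injective phi := by
  intro a b h
  ext n
  have := congrArg (coeff (5 * n)) h
  rwa [coeff_phi, coeff_phi, if_pos (by omega), if_pos (by omega),
    Nat.mul_div_cancel_left _ (by norm_num)] at this

theorem phi_fixed {e : (ZMod 2)⟦X⟧} (h : phi e = e) : e = PowerSeries.C (constantCoeff e) := by
  ext n
  rw [coeff_C]
  split_ifs with h0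
  · rw [h0, coeff_zero_eq_constantCoeff_apply]
  · induction n using Nat.strong_induction_on with
    | _ n ih =>
      rw [← h, coeff_phi]
      split_ifs with hd
      · exact ih (n / 5) (by omega) (by omega)
      · rfl

theorem phi_X : phi X = X ^ 5 := by
  rw [phi, expand_X]

theorem f_mul_L : F * (FA ^ 5 + FB ^ 5) = F ^ 6 + X * phi F ^ 6 := by
  have h := poly_c FA FB FC AB_eq
  rw [C_mul_K, ← F_split] at h
  exact h.symm

theorem L_eq : FA ^ 5 + FB ^ 5 = phi F := by
  have hL : Cls 0 (FA ^ 5 + FB ^ 5) :=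
    ((cls_FA.pow 5).cast (by norm_num)).add ((cls_FB.pow 5).cast (by norm_num))
  obtain ⟨M, hM⟩ := hL.exists_phi
  have h1 := f_mul_L
  have h2 := f25_mul_K
  have hP := Pg_mul_F
  have hP5 := congrArg phi hP
  rw [map_mul, map_one] at hP5
  rw [hM] at h1 h2 ⊢
  have h3 : phi (phi F * M) = phi (F * phi M) := by
    rw [h1, map_add, map_mul, map_mul, map_pow, map_pow, phi_X, ← h2]
    rw [FC_eq]
    linear_combination -phi (phi F) ^ 6 * X ^ 5 * two0
  have h4 := phi_inj h3
  have he : phi (Pg * M) = Pg * M := by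
    rw [map_mul]
    linear_combination (-Pg * phi Pg) * h4 - phi Pg * phi M * hP + Pg * M * hP5
  have hc := phi_fixed he
  have hM1 : constantCoeff (Pg * M) = 1 := by
    have g1 := congrArg constantCoeff h1
    have g2 := congrArg constantCoeff hP
    have g3 : constantCoeff (phi M) = constantCoeff M := by
      rw [phi, constantCoeff_expand]
    simp only [map_mul, map_add, map_pow, F0, g3, constantCoeff_X, map_one, one_pow, zero_mul,
      one_mul, mul_one, add_zero] at g1 g2 ⊢
    rw [g1, g2, one_mul]
  rw [hM1, map_one] at hc
  congr 1
  linear_combination F * hc - M * hP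

theorem key_I : F ^ 6 + X * phi F ^ 6 = F * phi F := by
  rw [← f_mul_L, L_eq]

/-- The cofactor of `F` in `FA ^ 5 + FB ^ 5 + FC ^ 5`. -/
noncomputable def G : (ZMod 2)⟦X⟧ :=
  (FA ^ 4 + FB * FC ^ 3) + FA ^ 3 * FC + FB ^ 3 * FC + (FA * FC ^ 3 + FB ^ 4) + FC ^ 4

theorem d0 : Cls 0 (FA ^ 4 + FB * FC ^ 3) :=
  ((cls_FA.pow 4).cast (by norm_num)).add (cls_FB.mul (cls_FC.pow 3) (by norm_num))
theorem d1 : Cls 1 (FA ^ 3 * FC) := (cls_FA.pow 3).mul cls_FC (by norm_num)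
theorem d2 : Cls 2 (FB ^ 3 * FC) := (cls_FB.pow 3).mul cls_FC (by norm_num)
theorem d3 : Cls 3 (FA * FC ^ 3 + FB ^ 4) :=
  (cls_FA.mul (cls_FC.pow 3) (by norm_num)).add ((cls_FB.pow 4).cast (by norm_num))
theorem d4 : Cls 4 (FC ^ 4) := (cls_FC.pow 4).cast (by norm_num)

theorem f5_pow_mul_Pg : phi F ^ 6 * Pg = phi (phi F) * G := by
  have h := poly_d FA FB FC AB_eq
  rw [← F_split] at h
  have h2 := f25_mul_K
  rw [← h] at h2
  rw [← h2, ← G]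
  linear_combination phi (phi F) * G * Pg_mul_F

theorem U_Pg : F ^ 6 * U Pg = phi F ^ 5 := by
  have h := congrArg U f5_pow_mul_Pg
  rw [← map_pow, U_phi_mul, U_phi_mul] at h
  rw [h]
  have : U G = phi F ^ 4 := by
    rw [G, map_add, map_add, map_add, map_add, U_kill d0 (by norm_num), U_kill d1 (by norm_num),
      U_kill d2 (by norm_num), U_kill d3 (by norm_num), FC_eq, mul_pow, ← map_pow, ← map_pow, U_X4]
    simp
  rw [this]
  ring

theorem U_kill6 {i j : ℕ} {a b : (ZMod 2)⟦X⟧} (ha : Cls i a) (hb : Cls j b)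
    (h : (2 * i + 4 * j) % 5 ≠ 4) : U (a ^ 2 * b ^ 4) = 0 :=
  U_kill ((ha.pow 2).mul (hb.pow 4) rfl) h

theorem U_six {a b c d e : (ZMod 2)⟦X⟧} (ha : Cls 0 a) (hb : Cls 1 b) (hc : Cls 2 c)
    (hd : Cls 3 d) (he : Cls 4 e) : U ((a + b + c + d + e) ^ 6) =
    U ((a * b ^ 2 + b * d ^ 2 + c * a ^ 2 + d * c ^ 2 + e ^ 3) ^ 2) := by
  have sq : ∀ x y : (ZMod 2)⟦X⟧, (x + y) ^ 2 = x ^ 2 + y ^ 2 := fun x y ↦ by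
    linear_combination x * y * two0
  have h6 : (a + b + c + d + e) ^ 6 = (a ^ 2 + b ^ 2 + c ^ 2 + d ^ 2 + e ^ 2) *
      (a ^ 4 + b ^ 4 + c ^ 4 + d ^ 4 + e ^ 4) := by
    rw [show (a + b + c + d + e) ^ 6 = (a + b + c + d + e) ^ 2 * ((a + b + c + d + e) ^ 2) ^ 2
      by ring]
    simp only [sq]
    ring
  rw [h6]
  simp only [sq, add_mul, mul_add, map_add]
  rw [U_kill6 ha ha (by norm_num), U_kill6 ha hc (by norm_num), U_kill6 ha hd (by norm_num),
    U_kill6 ha he (by norm_num), U_kill6 hb ha (by norm_num), U_kill6 hb hb (by norm_num),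
    U_kill6 hb hc (by norm_num), U_kill6 hb he (by norm_num), U_kill6 hc hb (by norm_num),
    U_kill6 hc hc (by norm_num), U_kill6 hc hd (by norm_num), U_kill6 hc he (by norm_num),
    U_kill6 hd ha (by norm_num), U_kill6 hd hb (by norm_num), U_kill6 hd hd (by norm_num),
    U_kill6 hd he (by norm_num), U_kill6 he ha (by norm_num), U_kill6 he hb (by norm_num),
    U_kill6 he hc (by norm_num), U_kill6 he hd (by norm_num)]
  have e1 : (a * b ^ 2) ^ 2 = a ^ 2 * b ^ 4 := by ring
  have e2 : (b * d ^ 2) ^ 2 = b ^ 2 * d ^ 4 := by ring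
  have e3 : (c * a ^ 2) ^ 2 = c ^ 2 * a ^ 4 := by ring
  have e4 : (d * c ^ 2) ^ 2 = d ^ 2 * c ^ 4 := by ring
  have e5 : (e ^ 3) ^ 2 = e ^ 2 * e ^ 4 := by ring
  rw [e1, e2, e3, e4, e5]
  simp only [add_zero, zero_add]
  ring

theorem U_G6 : U (G ^ 6) = X ^ 4 * phi F ^ 24 + X ^ 2 * phi F ^ 12 * F ^ 12 + F ^ 24 := by
  rw [G, U_six d0 d1 d2 d3 d4, poly_e FA FB FC AB_eq]
  have h2 := f25_mul_K
  have hz : FC ^ 2 * (FC ^ 10 + FC ^ 5 * (FA ^ 5 + FB ^ 5 + FC ^ 5)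
      + (FA ^ 5 + FB ^ 5 + FC ^ 5) ^ 2) = X ^ 2 * (X ^ 10 * phi (phi F) ^ 12 +
        X ^ 5 * phi (phi F) ^ 6 * phi F ^ 6 + phi F ^ 12) := by
    generalize FA ^ 5 + FB ^ 5 + FC ^ 5 = K at h2 ⊢
    rw [FC_eq]
    linear_combination (X ^ 7 * phi (phi F) ^ 6 + X ^ 2 * (phi (phi F) * K + phi F ^ 6)) * h2
  rw [hz]
  have hz2 : (X ^ 2 * (X ^ 10 * phi (phi F) ^ 12 +
        X ^ 5 * phi (phi F) ^ 6 * phi F ^ 6 + phi F ^ 12)) ^ 2 =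
      X ^ 4 * phi (X ^ 4 * phi F ^ 24 + X ^ 2 * phi F ^ 12 * F ^ 12 + F ^ 24) := by
    simp only [map_add, map_mul, map_pow, phi_X]
    linear_combination X ^ 4 * (X ^ 10 * phi (phi F) ^ 12 * X ^ 5 * phi (phi F) ^ 6 * phi F ^ 6
      + X ^ 10 * phi (phi F) ^ 12 * phi F ^ 12
      + X ^ 5 * phi (phi F) ^ 6 * phi F ^ 6 * phi F ^ 12) * two0
  rw [hz2, U_X4]

theorem U_Pg6 : F ^ 36 * U (Pg ^ 6) =
    phi F ^ 6 * (X ^ 4 * phi F ^ 24 + X ^ 2 * phi F ^ 12 * F ^ 12 + F ^ 24) := by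
  have h : phi (F ^ 36) * Pg ^ 6 = phi (phi F ^ 6) * G ^ 6 := by
    rw [map_pow, map_pow, ← mul_pow, ← f5_pow_mul_Pg]
    ring
  have h' := congrArg U h
  rwa [U_phi_mul, U_phi_mul, U_G6] at h'

/-- The generating function of 50-regular partitions modulo two. -/
noncomputable def Bs : (ZMod 2)⟦X⟧ :=
  PowerSeries.mk fun n ↦ ((numRegularPartitions 50 n : ℕ) : ZMod 2)

theorem UU_Bs : U (U Bs) = F ^ 7 * U (Pg ^ 6) := by
  have h : Bs * F = phi (phi F) ^ 2 := by
    rw [← expand50]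
    exact reg_mul_F 50 (by norm_num)
  have h1 : Bs = phi (phi F ^ 2) * Pg := by
    rw [map_pow]
    linear_combination Pg * h - Bs * Pg_mul_F
  have hp : Pg ^ 6 * F ^ 6 = 1 := by rw [← mul_pow, Pg_mul_F, one_pow]
  have h2 : U Bs = phi (F ^ 7) * Pg ^ 6 := by
    rw [h1, U_phi_mul, map_pow]
    linear_combination phi F ^ 2 * Pg ^ 6 * U_Pg - phi F ^ 2 * U Pg * hp
  rw [h2, U_phi_mul]

theorem main_id : X ^ 2 * U (U Bs) = Pg ^ 23 + F ^ 2 * phi (Pg ^ 5) + X * F := by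
  have hP := Pg_mul_F
  have hP5 := congrArg phi hP
  rw [map_mul, map_one] at hP5
  have hf5 : phi F ≠ 0 := by
    intro h
    rw [h, mul_zero] at hP5
    exact zero_ne_one hP5
  have hI := key_I
  have h1 := U_Pg6
  have hV : F ^ 29 * U (U Bs) =
      phi F ^ 6 * (X ^ 4 * phi F ^ 24 + X ^ 2 * phi F ^ 12 * F ^ 12 + F ^ 24) := by
    rw [UU_Bs, ← h1]
    ring
  have hI6 : F ^ 36 + X ^ 2 * phi F ^ 12 * F ^ 24 + X ^ 4 * phi F ^ 24 * F ^ 12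
      + X ^ 6 * phi F ^ 36 = F ^ 6 * phi F ^ 6 := by
    rw [← mul_pow, ← hI]
    have e2 : (F ^ 6 + X * phi F ^ 6) ^ 2 = F ^ 12 + X ^ 2 * phi F ^ 12 := by
      linear_combination F ^ 6 * (X * phi F ^ 6) * two0
    rw [show (F ^ 6 + X * phi F ^ 6) ^ 6 = ((F ^ 6 + X * phi F ^ 6) ^ 2) ^ 3 by ring, e2]
    linear_combination (-X ^ 2 * phi F ^ 12 * F ^ 24 - X ^ 4 * phi F ^ 24 * F ^ 12) * two0
  have h5 : ∀ k, phi Pg ^ k * phi F ^ k = 1 := fun k ↦ by rw [← mul_pow, hP5, one_pow]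
  have hk : ∀ k, Pg ^ k * F ^ k = 1 := fun k ↦ by rw [← mul_pow, hP, one_pow]
  apply mul_left_cancel₀ (pow_ne_zero 29 F_ne)
  apply mul_left_cancel₀ (pow_ne_zero 6 hf5)
  have hR : phi F ^ 6 * (F ^ 29 * (Pg ^ 23 + F ^ 2 * phi (Pg ^ 5) + X * F)) =
      phi F ^ 6 * F ^ 6 + F ^ 36 := by
    rw [map_pow]
    have a1 : F ^ 29 * Pg ^ 23 = F ^ 6 := by linear_combination F ^ 6 * hk 23
    have a2 : phi F ^ 6 * phi Pg ^ 5 = phi F := by linear_combination phi F * h5 5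
    linear_combination phi F ^ 6 * a1 + F ^ 31 * a2 - F ^ 30 * hI + X * phi F ^ 6 * F ^ 30 * two0
  rw [hR]
  linear_combination X ^ 2 * phi F ^ 6 * hV + hI6 - F ^ 36 * two0

theorem coeff_F_zero (n : ℕ) (h : n % 7 = 6 ∨ n % 7 = 3 ∨ n % 7 = 4) : coeff n F = 0 := by
  rw [F_eq, Th, coeff_mk]
  rw [show {i | i ∈ S6 ∧ i ^ 2 - 1 = 24 * (n : ℤ)} = ∅ from ?_]
  · simp
  · rw [Set.eq_empty_iff_forall_notMem]
    rintro x ⟨_, hx⟩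
    have h7 : x ^ 2 % 7 = (x % 7) * (x % 7) % 7 := by rw [pow_two, Int.mul_emod]
    have : x % 7 = 0 ∨ x % 7 = 1 ∨ x % 7 = 2 ∨ x % 7 = 3 ∨ x % 7 = 4 ∨ x % 7 = 5 ∨ x % 7 = 6 := by
      omega
    rcases this with g | g | g | g | g | g | g <;> rw [g] at h7 <;> omega

theorem coeff_mid (n : ℕ) (h : n % 5 = 1 ∨ n % 5 = 3) : coeff n (F ^ 2 * phi (Pg ^ 5)) = 0 := by
  have e : F ^ 2 = FA ^ 2 + FB ^ 2 + FC ^ 2 := by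
    rw [F_split]
    linear_combination (FA * FB + FA * FC + FB * FC) * two0
  have z0 : Cls 0 (FA ^ 2 * phi (Pg ^ 5)) := (cls_FA.pow 2).mul (cls_phi _) (by norm_num)
  have z4 : Cls 4 (FB ^ 2 * phi (Pg ^ 5)) := (cls_FB.pow 2).mul (cls_phi _) (by norm_num)
  have z2 : Cls 2 (FC ^ 2 * phi (Pg ^ 5)) := (cls_FC.pow 2).mul (cls_phi _) (by norm_num)
  rw [e, add_mul, add_mul, map_add, map_add, z0 n (by omega), z4 n (by omega), z2 n (by omega)]
  simp

theorem final (N : ℕ) (h2 : 2 ≤ N) (h5 : N % 5 = 1 ∨ N % 5 = 3)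
    (h7 : N % 7 = 0 ∨ N % 7 = 4 ∨ N % 7 = 5) :
    numRegularPartitions 50 (25 * N - 26) ≡ numMultipartitions 23 N [MOD 2] := by
  rw [← ZMod.natCast_eq_natCast_iff]
  have h := congrArg (coeff N) main_id
  rw [map_add, map_add, coeff_mid N h5, coeff_X_pow_mul', if_pos h2, coeff_U, coeff_U,
    ← multi_gf, coeff_mk, Bs, coeff_mk] at h
  obtain ⟨m, rfl⟩ : ∃ m, N = m + 1 := ⟨N - 1, by omega⟩
  rw [coeff_succ_X_mul, coeff_F_zero m (by omega), add_zero, add_zero] at h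
  rw [← h]
  congr 2
  omega

end RegPart

theorem stmt_7 (n : ℕ) :
    (∀ B ∈ ({11, 18, 21, 26, 28, 33} : Finset ℕ),
      numRegularPartitions 50 (875 * n + 25 * B - 26) ≡
        numMultipartitions 23 (35 * n + B) [MOD 2]) := by
  intro B hB
  have e : 875 * n + 25 * B - 26 = 25 * (35 * n + B) - 26 := by omega
  rw [e]
  simp only [Finset.mem_insert, Finset.mem_singleton] at hB
  exact RegPart.final _ (by omega) (by omega) (by omega)
end

section
/- For every natural number n and every B in {6, 12, 17, 26, 27, 31}, the number of 100-regular partitions satisfies b_100(875n + 25B − 26) ≡ p_21(35n + B) (mod 2). -/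
namespace Stmt8
open PowerSeries Finset

/-- Euler's function `∏ (1 - q^n)` modulo two. -/
noncomputable def E : (ZMod 2)⟦X⟧ := pentagonalSeries (ZMod 2)

/-- The generating function of partitions modulo two. -/
noncomputable def P : (ZMod 2)⟦X⟧ := PowerSeries.mk fun n => (Fintype.card n.Partition : ZMod 2)

/-- The generating function of `m`-regular partitions modulo two. -/
noncomputable def Q (m : ℕ) : (ZMod 2)⟦X⟧ :=
  PowerSeries.mk fun n => (numRegularPartitions m n : ZMod 2)

section Top
open WithPiTopology Filter

local instance : TopologicalSpace (ZMod 2) := ⊥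
local instance : DiscreteTopology (ZMod 2) := ⟨rfl⟩

theorem hasProd_expand (m : ℕ) (hm : m ≠ 0) :
    HasProd (fun n : ℕ => (1 - X ^ ((n + 1) * m) : (ZMod 2)⟦X⟧)) (expand m hm E) := by
  rw [HasProd, tendsto_iff_coeff_tendsto]
  intro n
  apply tendsto_nhds_of_eventually_eq
  have key : ∀ s : Finset ℕ, (∏ i ∈ s, (1 - X ^ ((i + 1) * m) : (ZMod 2)⟦X⟧)) =
      expand m hm (∏ i ∈ s, (1 - X ^ (i + 1))) := by
    intro s
    rw [map_prod]
    refine Finset.prod_congr rfl fun i _ => ?_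
    rw [map_sub, map_one, map_pow, expand_X, ← pow_mul, mul_comm]
  have h := coeff_prod_one_sub_X_pow_eventually_eq (ZMod 2) (n / m)
  have h' : ∀ᶠ s in (atTop : Filter (Finset ℕ)), coeff n (∏ i ∈ s, (1 - X ^ ((i + 1) * m) : (ZMod 2)⟦X⟧))
      = coeff n (expand m hm E) := by
    filter_upwards [h] with s hs
    rw [key, coeff_expand, coeff_expand, hs]
    rfl
  simpa using h'

theorem Q_mul_E (m : ℕ) (hm : m ≠ 0) : Q m * E = expand m hm E := by
  have h1 : Q m = PowerSeries.mk fun n ↦ (#(Nat.Partition.countRestricted n m) : ZMod 2) := by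
    rw [← Nat.Partition.powerSeriesMk_card_restricted_eq_powerSeriesMk_card_countRestricted
      (ZMod 2) (Nat.pos_of_ne_zero hm)]
    unfold Q numRegularPartitions Nat.Partition.restricted
    ext n
    simp only [coeff_mk]
    rw [Nat.card_eq_fintype_card, Fintype.card_subtype]
  have h2 := Nat.Partition.hasProd_powerSeriesMk_card_countRestricted (ZMod 2)
    (Nat.pos_of_ne_zero hm)
  rw [← h1] at h2
  have h3 := h2.mul (hasProd_one_sub_X_pow (ZMod 2))
  refine h3.unique ?_
  have h4 : (fun i : ℕ => (∑ j ∈ range m, (X : (ZMod 2)⟦X⟧) ^ ((i + 1) * j)) * (1 - X ^ (i + 1))) =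
      fun i => 1 - X ^ ((i + 1) * m) := by
    ext1 i
    simp_rw [pow_mul, geom_sum_mul_neg]
  rw [h4]
  exact hasProd_expand m hm

theorem P_mul_E : P * E = 1 := by
  have h2 := Nat.Partition.hasProd_powerSeriesMk_card_restricted (ZMod 2) (fun _ => True)
  have h1 : P = PowerSeries.mk fun n ↦ (#(Nat.Partition.restricted n (fun _ => True)) : ZMod 2) := by
    unfold P Nat.Partition.restricted
    ext n
    simp only [coeff_mk]
    simp
  rw [← h1] at h2
  have h3 := h2.mul (hasProd_one_sub_X_pow (ZMod 2))
  refine h3.unique ?_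
  convert hasProd_one using 1
  ext1 i
  simp only [if_true]
  simp_rw [pow_mul]
  exact tsum_pow_mul_one_sub_of_constantCoeff_eq_zero (by simp)

end Top

theorem coeff_P_pow (t n : ℕ) : coeff n (P ^ t) = (numMultipartitions t n : ZMod 2) := by
  have h1 : P ^ t = ∏ _i : Fin t, P := by simp
  rw [h1, coeff_prod]
  have e : {f : Fin t → Σ k : ℕ, k.Partition // (∑ i, (f i).1) = n} ≃
      Σ l : {l : Fin t →₀ ℕ // l ∈ finsuppAntidiag Finset.univ n}, ∀ i, (l.1 i).Partition :=
    { toFun := fun f => ⟨⟨Finsupp.equivFunOnFinite.symm fun i => (f.1 i).1, by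
        rw [mem_finsuppAntidiag]; exact ⟨by simpa using f.2, by simp⟩⟩, fun i => (f.1 i).2⟩
      invFun := fun g => ⟨fun i => ⟨g.1.1 i, g.2 i⟩, by
        have := g.1.2
        rw [mem_finsuppAntidiag] at this
        exact this.1⟩
      left_inv := fun f => rfl
      right_inv := fun g => Sigma.ext (Subtype.ext (Finsupp.ext fun _ => rfl)) HEq.rfl }
  unfold numMultipartitions
  rw [Nat.card_congr e, Nat.card_sigma, Finset.sum_coe_sort (finsuppAntidiag Finset.univ n)
    (fun l => Nat.card (∀ i, (l i).Partition))]
  push_cast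
  refine Finset.sum_congr rfl fun l _ => ?_
  rw [Nat.card_pi]
  push_cast
  refine Finset.prod_congr rfl fun i _ => ?_
  simp [P]

theorem coeff_E (n : ℕ) [Decidable (∃ k, pentagonal k = n)] :
    coeff n E = if ∃ k, pentagonal k = n then 1 else 0 := by
  split_ifs with h
  · obtain ⟨k, rfl⟩ := h
    unfold E
    rw [coeff_pentagonalSeries_pentagonal]
    rcases Int.even_or_odd k with h | h
    · simp [Int.negOnePow_even _ h]
    · simp [Int.negOnePow_odd _ h]
  · exact coeff_pentagonalSeries_eq_zero _ (by simpa using h)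

theorem expand_two (f : (ZMod 2)⟦X⟧) : expand 2 two_ne_zero f = f ^ 2 := by
  have := MvPowerSeries.map_frobenius_expand (R := ZMod 2) (σ := Unit) 2 two_ne_zero (f := f)
  rw [ZMod.frobenius_zmod] at this
  rw [← this]
  simp [expand]

end Stmt8

namespace Stmt8
open PowerSeries Finset

/-- Representations of `M` by `x² + D y²` with `x ≡ y ≡ -1` modulo six. -/
noncomputable def S (D M : ℤ) : Finset (ℤ × ℤ) :=
  (Icc (-M) M ×ˢ Icc (-M) M).filter fun p =>
    p.1 ^ 2 + D * p.2 ^ 2 = M ∧ p.1 % 6 = 5 ∧ p.2 % 6 = 5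

/-- Representations of `M` by `x² + D y²` with `x`, `y` odd and `x - y ≡ 2` modulo three. -/
noncomputable def T (D M : ℤ) : Finset (ℤ × ℤ) :=
  (Icc (-M) M ×ˢ Icc (-M) M).filter fun p =>
    p.1 ^ 2 + D * p.2 ^ 2 = M ∧ p.1 % 2 = 1 ∧ p.2 % 2 = 1 ∧ (p.1 - p.2) % 3 = 2

/-- Representations of `M` by `c r²` with `r ≡ -1` modulo six. -/
noncomputable def R (c M : ℤ) : Finset ℤ :=
  (Icc (-M) M).filter fun r => c * r ^ 2 = M ∧ r % 6 = 5

theorem box {D M x y : ℤ} (hD : 1 ≤ D) (h : x ^ 2 + D * y ^ 2 = M) :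
    (-M ≤ x ∧ x ≤ M) ∧ (-M ≤ y ∧ y ≤ M) := by
  have h1 : y ^ 2 ≤ D * y ^ 2 := by nlinarith [sq_nonneg y]
  have h2 : ∀ z : ℤ, z ≤ z ^ 2 ∧ -z ≤ z ^ 2 := fun z => by
    constructor
    · exact Int.le_self_sq z
    · have := Int.le_self_sq (-z); rwa [neg_sq] at this
  have := h2 x
  have := h2 y
  have := sq_nonneg x
  have := sq_nonneg y
  refine ⟨⟨?_, ?_⟩, ?_, ?_⟩ <;> linarith

theorem mem_S {D M : ℤ} (hD : 1 ≤ D) {p : ℤ × ℤ} :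
    p ∈ S D M ↔ p.1 ^ 2 + D * p.2 ^ 2 = M ∧ p.1 % 6 = 5 ∧ p.2 % 6 = 5 := by
  unfold S
  simp only [mem_filter, mem_product, mem_Icc, and_iff_right_iff_imp]
  exact fun h => box hD h.1

theorem mem_T {D M : ℤ} (hD : 1 ≤ D) {p : ℤ × ℤ} :
    p ∈ T D M ↔ p.1 ^ 2 + D * p.2 ^ 2 = M ∧ p.1 % 2 = 1 ∧ p.2 % 2 = 1 ∧
      (p.1 - p.2) % 3 = 2 := by
  unfold T
  simp only [mem_filter, mem_product, mem_Icc, and_iff_right_iff_imp]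
  exact fun h => box hD h.1

theorem mem_R {c M : ℤ} (hc : 1 ≤ c) {r : ℤ} :
    r ∈ R c M ↔ c * r ^ 2 = M ∧ r % 6 = 5 := by
  unfold R
  simp only [mem_filter, mem_Icc, and_iff_right_iff_imp]
  intro h
  exact (box (x := 0) (y := r) hc (by rw [← h.1]; ring : (0 : ℤ) ^ 2 + c * r ^ 2 = M)).2

theorem card_of_invol {α : Type*} (s : Finset α) (g : α → α)
    (h1 : ∀ a ∈ s, g a ∈ s) (h2 : ∀ a ∈ s, g a ≠ a) (h3 : ∀ a ∈ s, g (g a) = a) :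
    (#s : ZMod 2) = 0 := by
  have : ∑ x ∈ s, (1 : ZMod 2) = 0 :=
    Finset.sum_involution (fun a _ => g a) (fun a _ => by decide) (fun a ha _ => h2 a ha)
      (fun a ha => h1 a ha) (fun a ha => h3 a ha)
  simpa using this

theorem sq_mod_three (x : ℤ) : (x % 3 = 0 ∧ x ^ 2 % 3 = 0) ∨ (x % 3 ≠ 0 ∧ x ^ 2 % 3 = 1) := by
  have : x % 3 = 0 ∨ x % 3 = 1 ∨ x % 3 = 2 := by omega
  rcases this with h | h | h <;> simp [pow_two, Int.mul_emod, h]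

theorem T_of_ne {D M : ℤ} (hD : D = 2 ∨ D = 5) (hM : M % 3 ≠ 0) : (#(T D M) : ZMod 2) = 0 := by
  have hD1 : 1 ≤ D := by omega
  have key : ∀ p ∈ T D M, (p.1 % 3 = 0 ∧ M % 3 = 2) ∨ (p.2 % 3 = 0 ∧ M % 3 = 1) := by
    intro p hp
    rw [mem_T hD1] at hp
    obtain ⟨h1, h2, h3, h4⟩ := hp
    have a := sq_mod_three p.1
    have b := sq_mod_three p.2
    generalize p.1 ^ 2 = u at *
    generalize p.2 ^ 2 = v at *
    rcases hD with rfl | rfl <;> omega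
  refine card_of_invol _ (fun p => if M % 3 = 2 then (-p.1, p.2) else (p.1, -p.2)) ?_ ?_ ?_
  · intro p hp
    have k := key p hp
    rw [mem_T hD1] at hp ⊢
    obtain ⟨h1, h2, h3, h4⟩ := hp
    split_ifs with h
    · refine ⟨by rw [← h1]; ring, ?_, ?_, ?_⟩ <;> dsimp only <;> omega
    · refine ⟨by rw [← h1]; ring, ?_, ?_, ?_⟩ <;> dsimp only <;> omega
  · intro p hp
    rw [mem_T hD1] at hp
    obtain ⟨h1, h2, h3, h4⟩ := hp
    split_ifs with h
    · intro h; have := congrArg Prod.fst h; dsimp only at this; omega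
    · intro h; have := congrArg Prod.snd h; dsimp only at this; omega
  · intro p hp
    split_ifs with h <;> simp

theorem T_of_eq {D M : ℤ} (hD : D = 2 ∨ D = 5) (hM : M % 3 = 0) : #(T D M) = #(S D M) := by
  have hD1 : 1 ≤ D := by omega
  refine Finset.card_bij (fun p _ => (-p.1, p.2)) ?_ ?_ ?_
  · intro p hp
    rw [mem_T hD1] at hp
    rw [mem_S hD1]
    obtain ⟨h1, h2, h3, h4⟩ := hp
    refine ⟨by rw [← h1]; ring, ?_⟩
    have a := sq_mod_three p.1
    have b := sq_mod_three p.2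
    generalize p.1 ^ 2 = u at *
    generalize p.2 ^ 2 = v at *
    have k : p.1 % 3 = 1 ∧ p.2 % 3 = 2 := by rcases hD with rfl | rfl <;> omega
    have k1 : p.1 % 6 = 1 := by omega
    dsimp only
    omega
  · intro p _ q _ h
    simp only [Prod.mk.injEq] at h
    exact Prod.ext (by omega) h.2
  · intro p hp
    rw [mem_S hD1] at hp
    refine ⟨(-p.1, p.2), ?_, by simp⟩
    rw [mem_T hD1]
    obtain ⟨h1, h2, h3⟩ := hp
    refine ⟨by rw [← h1]; ring, ?_, ?_, ?_⟩ <;> dsimp only <;> omega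

/-- Number of representations coming from the descent. -/
noncomputable def tail (D M : ℤ) : ℕ := if 9 ∣ M ∧ (M / 9) % 3 = 0 then #(S D (M / 9)) else 0

theorem step_two (M : ℤ) : (#(S 2 M) : ZMod 2) = #(R 3 M) + tail 2 M := by
  have hD1 : (1 : ℤ) ≤ 2 := by norm_num
  have e1 := Finset.card_filter_add_card_filter_not (s := S 2 M)
    (fun p => (2 * p.1 + p.2) % 9 = 0)
  have e2 := Finset.card_filter_add_card_filter_not
    (s := (S 2 M).filter (fun p => ¬ (2 * p.1 + p.2) % 9 = 0)) (fun p => p.1 = p.2)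
  have c1 : (#((S 2 M).filter (fun p => (2 * p.1 + p.2) % 9 = 0)) : ZMod 2) = tail 2 M := by
    have aux : ∀ p ∈ (S 2 M).filter (fun p => (2 * p.1 + p.2) % 9 = 0),
        ∃ u v : ℤ, p = (u - 4 * v, -2 * u - v) ∧ 9 * (u ^ 2 + 2 * v ^ 2) = M ∧
          u % 2 = 1 ∧ v % 2 = 1 ∧ (u - v) % 3 = 2 := by
      intro p hp
      rw [mem_filter, mem_S hD1] at hp
      obtain ⟨⟨h1, h2, h3⟩, h4⟩ := hp
      obtain ⟨u, hu⟩ : ∃ u, p.1 - 4 * p.2 = 9 * u := ⟨(p.1 - 4 * p.2) / 9, by omega⟩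
      obtain ⟨v, hv⟩ : ∃ v, -2 * p.1 - p.2 = 9 * v := ⟨(-2 * p.1 - p.2) / 9, by omega⟩
      have hx : p.1 = u - 4 * v := by omega
      have hy : p.2 = -2 * u - v := by omega
      refine ⟨u, v, Prod.ext hx hy, ?_, ?_⟩
      · rw [← h1, hx, hy]; ring
      · omega
    unfold tail
    by_cases h9 : 9 ∣ M
    · have hc : #((S 2 M).filter (fun p => (2 * p.1 + p.2) % 9 = 0)) = #(T 2 (M / 9)) := by
        symm
        refine Finset.card_bij (fun p _ => (p.1 - 4 * p.2, -2 * p.1 - p.2)) ?_ ?_ ?_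
        · intro p hp
          rw [mem_T hD1] at hp
          rw [mem_filter, mem_S hD1]
          obtain ⟨h1, h2, h3, h4⟩ := hp
          refine ⟨⟨?_, ?_, ?_⟩, ?_⟩
          · have : M = 9 * (M / 9) := by omega
            rw [this, ← h1]; ring
          all_goals dsimp only; omega
        · intro p _ q _ h
          simp only [Prod.mk.injEq] at h
          exact Prod.ext (by omega) (by omega)
        · intro p hp
          obtain ⟨u, v, rfl, h1, h2, h3, h4⟩ := aux p hp
          refine ⟨(u, v), ?_, rfl⟩
          rw [mem_T hD1]
          refine ⟨?_, h2, h3, h4⟩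
          dsimp only
          omega
      rw [hc]
      by_cases h3 : (M / 9) % 3 = 0
      · rw [if_pos ⟨h9, h3⟩, T_of_eq (by simp) h3]
      · rw [if_neg (by tauto), T_of_ne (by simp) h3]; simp
    · rw [if_neg (by tauto)]
      have : (S 2 M).filter (fun p => (2 * p.1 + p.2) % 9 = 0) = ∅ := by
        apply Finset.eq_empty_of_forall_notMem
        intro p hp
        obtain ⟨u, v, rfl, h1, h2⟩ := aux p hp
        exact h9 ⟨_, h1.symm⟩
      rw [this]; simp
  have c2 : #(((S 2 M).filter (fun p => ¬ (2 * p.1 + p.2) % 9 = 0)).filter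
      (fun p => p.1 = p.2)) = #(R 3 M) := by
    symm
    refine Finset.card_bij (fun r _ => (r, r)) ?_ ?_ ?_
    · intro r hr
      rw [mem_R (by norm_num)] at hr
      rw [mem_filter, mem_filter, mem_S hD1]
      refine ⟨⟨⟨?_, hr.2, hr.2⟩, ?_⟩, rfl⟩
      · rw [← hr.1]; ring
      · dsimp only; omega
    · intro r _ s _ h
      exact congrArg Prod.fst h
    · intro p hp
      rw [mem_filter, mem_filter, mem_S hD1] at hp
      obtain ⟨⟨⟨h1, h2, h3⟩, h4⟩, h5⟩ := hp
      refine ⟨p.1, ?_, Prod.ext rfl h5⟩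
      rw [mem_R (by norm_num)]
      refine ⟨?_, h2⟩
      rw [← h1, ← h5]; ring
  have c3 : (#(((S 2 M).filter (fun p => ¬ (2 * p.1 + p.2) % 9 = 0)).filter
      (fun p => ¬ p.1 = p.2)) : ZMod 2) = 0 := by
    refine card_of_invol _ (fun p => if (2 * p.1 + p.2) / 3 % 6 = 5 then
      ((4 * p.2 - p.1) / 3, (2 * p.1 + p.2) / 3) else
      (-((4 * p.2 - p.1) / 3), -((2 * p.1 + p.2) / 3))) ?_ ?_ ?_
    · intro p hp
      rw [mem_filter, mem_filter, mem_S hD1] at hp ⊢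
      obtain ⟨⟨⟨h1, h2, h3⟩, h4⟩, h5⟩ := hp
      obtain ⟨u, hu⟩ : ∃ u, 4 * p.2 - p.1 = 3 * u := ⟨(4 * p.2 - p.1) / 3, by omega⟩
      obtain ⟨v, hv⟩ : ∃ v, 2 * p.1 + p.2 = 3 * v := ⟨(2 * p.1 + p.2) / 3, by omega⟩
      have hq : u ^ 2 + 2 * v ^ 2 = M := by
        have : 9 * (u ^ 2 + 2 * v ^ 2) = 9 * M := by
          rw [← h1]
          linear_combination (-(4 * p.2 - p.1) - 3 * u) * hu - 2 * (2 * p.1 + p.2 + 3 * v) * hv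
        omega
      have hu' : (4 * p.2 - p.1) / 3 = u := by omega
      have hv' : (2 * p.1 + p.2) / 3 = v := by omega
      have k1 : v % 2 = 1 := by omega
      have k2 : u % 2 = 1 := by omega
      have k3 : v % 3 ≠ 0 := by omega
      have k4 : (u - v) % 3 = 0 := by omega
      have k5 : v % 6 = 1 ∨ v % 6 = 5 := by omega
      have k6 : u % 6 = v % 6 := by omega
      simp only [hu', hv']
      clear h4 hu' hv'
      split_ifs with h
      · refine ⟨⟨⟨hq, ?_, ?_⟩, ?_⟩, ?_⟩ <;> dsimp only <;> omega
      · refine ⟨⟨⟨by rw [← hq]; ring, ?_, ?_⟩, ?_⟩, ?_⟩ <;> dsimp only <;> omega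
    · intro p hp
      rw [mem_filter, mem_filter, mem_S hD1] at hp
      obtain ⟨⟨⟨h1, h2, h3⟩, h4⟩, h5⟩ := hp
      intro h
      have ha := congrArg Prod.fst h
      have hb := congrArg Prod.snd h
      split_ifs at ha hb with h <;> dsimp only at ha hb <;> omega
    · intro p hp
      rw [mem_filter, mem_filter, mem_S hD1] at hp
      obtain ⟨⟨⟨h1, h2, h3⟩, h4⟩, h5⟩ := hp
      split_ifs with h h' h' <;> apply Prod.ext <;> dsimp only at * <;> omega
  rw [← e1, ← e2]
  push_cast
  rw [c1, c2, c3]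
  ring

theorem step_five (M : ℤ) : (#(S 5 M) : ZMod 2) = #(R 6 M) + #(R 30 M) + tail 5 M := by
  have hD1 : (1 : ℤ) ≤ 5 := by norm_num
  have e1 := Finset.card_filter_add_card_filter_not (s := S 5 M)
    (fun p => (p.1 + 2 * p.2) % 9 = 0)
  have e2 := Finset.card_filter_add_card_filter_not
    (s := (S 5 M).filter (fun p => ¬ (p.1 + 2 * p.2) % 9 = 0)) (fun p => p.1 = p.2)
  have e3 := Finset.card_filter_add_card_filter_not
    (s := ((S 5 M).filter (fun p => ¬ (p.1 + 2 * p.2) % 9 = 0)).filter (fun p => ¬ p.1 = p.2))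
      (fun p => p.1 = -5 * p.2)
  have c1 : (#((S 5 M).filter (fun p => (p.1 + 2 * p.2) % 9 = 0)) : ZMod 2) = tail 5 M := by
    have aux : ∀ p ∈ (S 5 M).filter (fun p => (p.1 + 2 * p.2) % 9 = 0),
        ∃ u v : ℤ, p = (5 * v - 2 * u, u + 2 * v) ∧ 9 * (u ^ 2 + 5 * v ^ 2) = M ∧
          u % 2 = 1 ∧ v % 2 = 1 ∧ (u - v) % 3 = 2 := by
      intro p hp
      rw [mem_filter, mem_S hD1] at hp
      obtain ⟨⟨h1, h2, h3⟩, h4⟩ := hp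
      obtain ⟨u, hu⟩ : ∃ u, 5 * p.2 - 2 * p.1 = 9 * u := ⟨(5 * p.2 - 2 * p.1) / 9, by omega⟩
      obtain ⟨v, hv⟩ : ∃ v, p.1 + 2 * p.2 = 9 * v := ⟨(p.1 + 2 * p.2) / 9, by omega⟩
      have hx : p.1 = 5 * v - 2 * u := by omega
      have hy : p.2 = u + 2 * v := by omega
      refine ⟨u, v, Prod.ext hx hy, ?_, ?_⟩
      · rw [← h1, hx, hy]; ring
      · omega
    unfold tail
    by_cases h9 : 9 ∣ M
    · have hc : #((S 5 M).filter (fun p => (p.1 + 2 * p.2) % 9 = 0)) = #(T 5 (M / 9)) := by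
        symm
        refine Finset.card_bij (fun p _ => (5 * p.2 - 2 * p.1, p.1 + 2 * p.2)) ?_ ?_ ?_
        · intro p hp
          rw [mem_T hD1] at hp
          rw [mem_filter, mem_S hD1]
          obtain ⟨h1, h2, h3, h4⟩ := hp
          refine ⟨⟨?_, ?_, ?_⟩, ?_⟩
          · have : M = 9 * (M / 9) := by omega
            rw [this, ← h1]; ring
          all_goals dsimp only; omega
        · intro p _ q _ h
          simp only [Prod.mk.injEq] at h
          exact Prod.ext (by omega) (by omega)
        · intro p hp
          obtain ⟨u, v, rfl, h1, h2, h3, h4⟩ := aux p hp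
          refine ⟨(u, v), ?_, rfl⟩
          rw [mem_T hD1]
          refine ⟨?_, h2, h3, h4⟩
          dsimp only
          omega
      rw [hc]
      by_cases h3 : (M / 9) % 3 = 0
      · rw [if_pos ⟨h9, h3⟩, T_of_eq (by simp) h3]
      · rw [if_neg (by tauto), T_of_ne (by simp) h3]; simp
    · rw [if_neg (by tauto)]
      have : (S 5 M).filter (fun p => (p.1 + 2 * p.2) % 9 = 0) = ∅ := by
        apply Finset.eq_empty_of_forall_notMem
        intro p hp
        obtain ⟨u, v, rfl, h1, h2⟩ := aux p hp
        exact h9 ⟨_, h1.symm⟩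
      rw [this]; simp
  have c2 : #(((S 5 M).filter (fun p => ¬ (p.1 + 2 * p.2) % 9 = 0)).filter
      (fun p => p.1 = p.2)) = #(R 6 M) := by
    symm
    refine Finset.card_bij (fun r _ => (r, r)) ?_ ?_ ?_
    · intro r hr
      rw [mem_R (by norm_num)] at hr
      rw [mem_filter, mem_filter, mem_S hD1]
      refine ⟨⟨⟨?_, hr.2, hr.2⟩, ?_⟩, rfl⟩
      · rw [← hr.1]; ring
      · dsimp only; omega
    · intro r _ s _ h
      exact congrArg Prod.fst h
    · intro p hp
      rw [mem_filter, mem_filter, mem_S hD1] at hp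
      obtain ⟨⟨⟨h1, h2, h3⟩, h4⟩, h5⟩ := hp
      refine ⟨p.1, ?_, Prod.ext rfl h5⟩
      rw [mem_R (by norm_num)]
      refine ⟨?_, h2⟩
      rw [← h1, ← h5]; ring
  have c4 : #((((S 5 M).filter (fun p => ¬ (p.1 + 2 * p.2) % 9 = 0)).filter
      (fun p => ¬ p.1 = p.2)).filter (fun p => p.1 = -5 * p.2)) = #(R 30 M) := by
    symm
    refine Finset.card_bij (fun r _ => (-5 * r, r)) ?_ ?_ ?_
    · intro r hr
      rw [mem_R (by norm_num)] at hr
      rw [mem_filter, mem_filter, mem_filter, mem_S hD1]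
      refine ⟨⟨⟨⟨?_, ?_, hr.2⟩, ?_⟩, ?_⟩, rfl⟩
      · rw [← hr.1]; ring
      all_goals dsimp only; omega
    · intro r _ s _ h
      exact congrArg Prod.snd h
    · intro p hp
      rw [mem_filter, mem_filter, mem_filter, mem_S hD1] at hp
      obtain ⟨⟨⟨⟨h1, h2, h3⟩, h4⟩, h5⟩, h6⟩ := hp
      refine ⟨p.2, ?_, Prod.ext h6.symm rfl⟩
      rw [mem_R (by norm_num)]
      refine ⟨?_, h3⟩
      rw [← h1, h6]; ring
  have c3 : (#((((S 5 M).filter (fun p => ¬ (p.1 + 2 * p.2) % 9 = 0)).filter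
      (fun p => ¬ p.1 = p.2)).filter (fun p => ¬ p.1 = -5 * p.2)) : ZMod 2) = 0 := by
    refine card_of_invol _ (fun p => if (p.1 + 2 * p.2) / 3 % 6 = 5 then
      ((5 * p.2 - 2 * p.1) / 3, (p.1 + 2 * p.2) / 3) else
      (-((5 * p.2 - 2 * p.1) / 3), -((p.1 + 2 * p.2) / 3))) ?_ ?_ ?_
    · intro p hp
      rw [mem_filter, mem_filter, mem_filter, mem_S hD1] at hp ⊢
      obtain ⟨⟨⟨⟨h1, h2, h3⟩, h4⟩, h5⟩, h6⟩ := hp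
      obtain ⟨u, hu⟩ : ∃ u, 5 * p.2 - 2 * p.1 = 3 * u := ⟨(5 * p.2 - 2 * p.1) / 3, by omega⟩
      obtain ⟨v, hv⟩ : ∃ v, p.1 + 2 * p.2 = 3 * v := ⟨(p.1 + 2 * p.2) / 3, by omega⟩
      have hq : u ^ 2 + 5 * v ^ 2 = M := by
        have : 9 * (u ^ 2 + 5 * v ^ 2) = 9 * M := by
          rw [← h1]
          linear_combination (-(5 * p.2 - 2 * p.1) - 3 * u) * hu -
            5 * (p.1 + 2 * p.2 + 3 * v) * hv
        omega
      have hu' : (5 * p.2 - 2 * p.1) / 3 = u := by omega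
      have hv' : (p.1 + 2 * p.2) / 3 = v := by omega
      have k1 : v % 2 = 1 := by omega
      have k2 : u % 2 = 1 := by omega
      have k3 : v % 3 ≠ 0 := by omega
      have k4 : (u - v) % 3 = 0 := by omega
      have k5 : v % 6 = 1 ∨ v % 6 = 5 := by omega
      have k6 : u % 6 = v % 6 := by omega
      simp only [hu', hv']
      clear h4 hu' hv'
      split_ifs with h
      · refine ⟨⟨⟨⟨hq, ?_, ?_⟩, ?_⟩, ?_⟩, ?_⟩ <;> dsimp only <;> omega
      · refine ⟨⟨⟨⟨by rw [← hq]; ring, ?_, ?_⟩, ?_⟩, ?_⟩, ?_⟩ <;> dsimp only <;> omega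
    · intro p hp
      rw [mem_filter, mem_filter, mem_filter, mem_S hD1] at hp
      obtain ⟨⟨⟨⟨h1, h2, h3⟩, h4⟩, h5⟩, h6⟩ := hp
      intro h
      have ha := congrArg Prod.fst h
      have hb := congrArg Prod.snd h
      split_ifs at ha hb with h <;> dsimp only at ha hb <;> omega
    · intro p hp
      rw [mem_filter, mem_filter, mem_filter, mem_S hD1] at hp
      obtain ⟨⟨⟨⟨h1, h2, h3⟩, h4⟩, h5⟩, h6⟩ := hp
      split_ifs with h h' h' <;> apply Prod.ext <;> dsimp only at * <;> omega
  rw [← e1, ← e2, ← e3]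
  push_cast
  rw [c1, c2, c3, c4]
  ring

end Stmt8

namespace Stmt8
open PowerSeries Finset

open Classical in
/-- Indicator of `M` being `c` times a square. -/
noncomputable def J (c M : ℤ) : ZMod 2 := if ∃ r : ℤ, M = c * r ^ 2 then 1 else 0

theorem sq_mod_eight (x : ℤ) : (x % 2 = 1 ∧ x ^ 2 % 8 = 1) ∨ (x % 2 = 0 ∧ x ^ 2 % 4 = 0) := by
  have : x % 8 = 0 ∨ x % 8 = 1 ∨ x % 8 = 2 ∨ x % 8 = 3 ∨ x % 8 = 4 ∨ x % 8 = 5 ∨ x % 8 = 6 ∨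
    x % 8 = 7 := by omega
  have h4 : x ^ 2 % 4 = x ^ 2 % 8 % 4 := by omega
  rw [h4]
  rcases this with h | h | h | h | h | h | h | h <;> simp [pow_two, Int.mul_emod, h] <;> omega

theorem J_rec {c M : ℤ} (hc : c = 3 ∨ c = 6 ∨ c = 30) (hM : M % 4 ≠ 0) :
    J c M = #(R c M) + if 9 ∣ M ∧ (M / 9) % 3 = 0 then J c (M / 9) else 0 := by
  have hc1 : 1 ≤ c := by omega
  by_cases h : ∃ r : ℤ, M = c * r ^ 2
  · have hJ : J c M = 1 := if_pos h
    rw [hJ]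
    obtain ⟨r, hr⟩ := h
    have hodd : r % 2 = 1 := by
      rcases sq_mod_eight r with h | h
      · exact h.1
      · exfalso
        generalize r ^ 2 = z at *
        rcases hc with rfl | rfl | rfl <;> omega
    by_cases h3 : r % 3 = 0
    · obtain ⟨s, rfl⟩ : ∃ s, r = 3 * s := ⟨r / 3, by omega⟩
      have hR : R c M = ∅ := by
        apply Finset.eq_empty_of_forall_notMem
        intro t ht
        rw [mem_R hc1] at ht
        have h1 : t ^ 2 = (3 * s) ^ 2 := by
          have : c * t ^ 2 = c * (3 * s) ^ 2 := by rw [ht.1, hr]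
          exact mul_left_cancel₀ (by omega) this
        rcases sq_eq_sq_iff_eq_or_eq_neg.mp h1 with h | h <;> omega
      have e : M / 9 = c * s ^ 2 := by
        rw [hr, show c * (3 * s) ^ 2 = 9 * (c * s ^ 2) by ring]
        omega
      have h9 : 9 ∣ M := ⟨c * s ^ 2, by rw [hr]; ring⟩
      have h3' : (M / 9) % 3 = 0 := by
        rw [e]
        generalize s ^ 2 = z
        rcases hc with rfl | rfl | rfl <;> omega
      rw [if_pos ⟨h9, h3'⟩, hR]
      have : J c (M / 9) = 1 := if_pos ⟨s, e⟩
      rw [this]; simp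
    · have hR : #(R c M) = 1 := by
        rw [Finset.card_eq_one]
        refine ⟨if r % 6 = 5 then r else -r, ?_⟩
        ext t
        rw [mem_R hc1, mem_singleton]
        constructor
        · rintro ⟨h1, h2⟩
          have h1 : t ^ 2 = r ^ 2 := by
            have : c * t ^ 2 = c * r ^ 2 := by rw [h1, hr]
            exact mul_left_cancel₀ (by omega) this
          rcases sq_eq_sq_iff_eq_or_eq_neg.mp h1 with h | h <;> split_ifs <;> omega
        · rintro rfl
          split_ifs with h
          · exact ⟨hr.symm, h⟩
          · exact ⟨by rw [neg_sq]; exact hr.symm, by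
              have : r % 6 = 1 := by omega
              omega⟩
      have : ¬ 9 ∣ M := by
        have := sq_mod_three r
        generalize r ^ 2 = z at *
        rcases hc with rfl | rfl | rfl <;> omega
      rw [hR, if_neg (by tauto)]; simp
  · have hJ : J c M = 0 := if_neg h
    have hR : R c M = ∅ := by
      apply Finset.eq_empty_of_forall_notMem
      intro t ht
      rw [mem_R hc1] at ht
      exact h ⟨t, ht.1.symm⟩
    rw [hJ, hR]
    split_ifs with h9
    · have : J c (M / 9) = 0 := by
        apply if_neg
        rintro ⟨s, hs⟩
        refine h ⟨3 * s, ?_⟩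
        have : M = 9 * (M / 9) := by omega
        rw [this, hs]; ring
      simp [this]
    · simp

theorem card_S_two (n : ℕ) : ∀ M : ℤ, 0 ≤ M → M ≤ n → M % 24 = 3 →
    (#(S 2 M) : ZMod 2) = J 3 M := by
  induction n with
  | zero => intro M h1 h2 h3; simp at h2; omega
  | succ n ih =>
    intro M h1 h2 h3
    push_cast at h2
    rw [step_two, J_rec (by simp) (by omega)]
    unfold tail
    split_ifs with h
    · rw [ih (M / 9) (by omega) (by omega) (by omega)]
    · simp

theorem card_S_five (n : ℕ) : ∀ M : ℤ, 0 ≤ M → M ≤ n → M % 24 = 6 →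
    (#(S 5 M) : ZMod 2) = J 6 M + J 30 M := by
  induction n with
  | zero => intro M h1 h2 h3; simp at h2; omega
  | succ n ih =>
    intro M h1 h2 h3
    push_cast at h2
    rw [step_five, J_rec (c := 6) (by simp) (by omega), J_rec (c := 30) (by simp) (by omega)]
    unfold tail
    split_ifs with h
    · rw [ih (M / 9) (by omega) (by omega) (by omega)]; ring
    · simp

theorem pent_sq (k : ℤ) : (6 * k - 1) ^ 2 = 24 * (pentagonal k : ℤ) + 1 := by
  linear_combination -12 * two_mul_natCast_pentagonal k

theorem coeff_E_mul (D : ℕ) (hD : D ≠ 0) (N : ℕ) :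
    coeff N (E * expand D hD E) = (#(S D (24 * N + 1 + D)) : ZMod 2) := by
  classical
  have hD1 : (1 : ℤ) ≤ D := by omega
  rw [coeff_mul]
  have h1 : ∀ p ∈ antidiagonal N, coeff p.1 E * coeff p.2 (expand D hD E) =
      if ∃ k l : ℤ, p = (pentagonal k, D * pentagonal l) then (1 : ZMod 2) else 0 := by
    intro p _
    rw [coeff_E, coeff_expand]
    by_cases ha : ∃ k, pentagonal k = p.1
    · rw [if_pos ha, one_mul]
      by_cases hb : ∃ l : ℤ, p.2 = D * pentagonal l
      · rw [if_pos (c := ∃ k l : ℤ, p = (pentagonal k, D * pentagonal l))]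
        · obtain ⟨l, hl⟩ := hb
          rw [if_pos ⟨_, hl⟩, coeff_E, if_pos]
          exact ⟨l, by rw [hl, Nat.mul_div_cancel_left _ (by omega)]⟩
        · obtain ⟨k, hk⟩ := ha
          obtain ⟨l, hl⟩ := hb
          exact ⟨k, l, Prod.ext hk.symm hl⟩
      · rw [if_neg (c := ∃ k l : ℤ, p = (pentagonal k, D * pentagonal l))]
        · split_ifs with hd
          · rw [coeff_E, if_neg]
            rintro ⟨l, hl⟩
            exact hb ⟨l, by rw [hl, Nat.mul_div_cancel' hd]⟩
          · rfl
        · rintro ⟨k, l, h⟩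
          exact hb ⟨l, congrArg Prod.snd h⟩
    · rw [if_neg ha, zero_mul, if_neg]
      rintro ⟨k, l, h⟩
      exact ha ⟨k, (congrArg Prod.fst h).symm⟩
  rw [Finset.sum_congr rfl h1, Finset.sum_boole]
  congr 1
  symm
  refine Finset.card_bij (fun p _ => (pentagonal ((p.1 + 1) / 6),
    D * pentagonal ((p.2 + 1) / 6))) ?_ ?_ ?_
  · intro p hp
    rw [mem_S hD1] at hp
    obtain ⟨h1, h2, h3⟩ := hp
    rw [mem_filter, HasAntidiagonal.mem_antidiagonal]
    refine ⟨?_, _, _, rfl⟩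
    have e1 := pent_sq ((p.1 + 1) / 6)
    have e2 := pent_sq ((p.2 + 1) / 6)
    rw [show 6 * ((p.1 + 1) / 6) - 1 = p.1 by omega] at e1
    rw [show 6 * ((p.2 + 1) / 6) - 1 = p.2 by omega] at e2
    rw [e1, e2] at h1
    zify
    linarith
  · intro p hp q hq h
    rw [mem_S hD1] at hp hq
    simp only [Prod.mk.injEq, pentagonal_inj, mul_eq_mul_left_iff, hD, or_false] at h
    exact Prod.ext (by omega) (by omega)
  · intro p hp
    rw [mem_filter, HasAntidiagonal.mem_antidiagonal] at hp
    obtain ⟨h1, k, l, rfl⟩ := hp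
    refine ⟨(6 * k - 1, 6 * l - 1), ?_, ?_⟩
    · rw [mem_S hD1]
      refine ⟨?_, by dsimp only; omega, by dsimp only; omega⟩
      dsimp only at h1 ⊢
      rw [pent_sq, pent_sq, ← h1]
      push_cast
      ring
    · dsimp only
      rw [show (6 * k - 1 + 1) / 6 = k by omega, show (6 * l - 1 + 1) / 6 = l by omega]

theorem coeff_E_cube (N : ℕ) : coeff N (E ^ 3) = J 3 (24 * N + 3) := by
  have h := coeff_E_mul 2 two_ne_zero N
  rw [expand_two, show E * E ^ 2 = E ^ 3 by ring] at h
  rw [h, ← card_S_two (24 * N + 3) _ (by positivity) (by push_cast; rfl) (by omega)]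
  congr 3

theorem five_ne : (5 : ℕ) ≠ 0 := by norm_num

/-- Euler's function at `q^5`. -/
noncomputable def F : (ZMod 2)⟦X⟧ := expand 5 five_ne E

theorem J_congr {c c' M M' : ℤ} (h : (∃ r : ℤ, M = c * r ^ 2) ↔ ∃ r : ℤ, M' = c' * r ^ 2) :
    J c M = J c' M' := by
  unfold J
  by_cases h1 : ∃ r : ℤ, M = c * r ^ 2
  · rw [if_pos h1, if_pos (h.mp h1)]
  · rw [if_neg h1, if_neg (fun h2 => h1 (h.mpr h2))]

theorem J_eq_zero {c M : ℤ} (h : ∀ r : ℤ, M ≠ c * r ^ 2) : J c M = 0 := by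
  unfold J
  rw [if_neg]
  rintro ⟨r, hr⟩
  exact h r hr

theorem identityA : E ^ 6 + X * F ^ 6 = E * F := by
  ext N
  have h := coeff_E_mul 5 five_ne N
  rw [show (24 * (N : ℤ) + 1 + (5 : ℕ)) = 24 * N + 6 by push_cast; ring, Nat.cast_ofNat,
    card_S_five (24 * N + 6) _ (by positivity) (by push_cast; rfl) (by omega)] at h
  rw [F, h, map_add]
  congr 1
  · rw [show E ^ 6 = (E ^ 3) ^ 2 by ring, ← expand_two, coeff_expand]
    split_ifs with h2
    · rw [coeff_E_cube]
      apply J_congr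
      obtain ⟨k, rfl⟩ := h2
      rw [Nat.mul_div_cancel_left _ (by norm_num)]
      push_cast
      exact exists_congr fun r => by constructor <;> intro h <;> linarith
    · symm
      apply J_eq_zero
      intro r hr
      have := sq_mod_eight r
      generalize r ^ 2 = z at *
      omega
  · have e : (expand 5 five_ne E) ^ 6 = expand 5 five_ne (expand 2 two_ne_zero (E ^ 3)) := by
      rw [expand_two]
      simp only [map_pow]
      ring
    rw [e]
    rcases N with _ | N
    · rw [coeff_zero_X_mul]
      symm
      apply J_eq_zero
      intro r hr
      have := sq_nonneg r
      push_cast at hr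
      generalize r ^ 2 = z at *
      omega
    · rw [coeff_succ_X_mul, coeff_expand]
      split_ifs with h5
      · obtain ⟨k, rfl⟩ := h5
        rw [Nat.mul_div_cancel_left _ (by norm_num), coeff_expand]
        split_ifs with h2
        · obtain ⟨l, rfl⟩ := h2
          rw [Nat.mul_div_cancel_left _ (by norm_num), coeff_E_cube]
          apply J_congr
          push_cast
          exact exists_congr fun r => by constructor <;> intro h <;> linarith
        · symm
          apply J_eq_zero
          intro r hr
          have := sq_mod_eight r
          push_cast at hr
          generalize r ^ 2 = z at *
          omega
      · symm
        apply J_eq_zero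
        intro r hr
        push_cast at hr
        generalize r ^ 2 = z at *
        omega

end Stmt8

namespace Stmt8
open PowerSeries Finset

theorem final_poly {A : Type*} [CommRing A] (h2 : (2 : A) = 0) (e q f : A)
    (h : e ^ 6 + q * f ^ 6 = e * f) :
    q ^ 8 * f ^ 47 + q ^ 2 * f ^ 17 * e ^ 6 + e ^ 18 * f ^ 5 + q * e ^ 42 * f ^ 5 + e ^ 43 = 0 := by
  linear_combination (q ^ 7 * f ^ 41 + e ^ 1 * q ^ 6 * f ^ 36 + e ^ 2 * q ^ 5 * f ^ 31 +
    e ^ 3 * q ^ 4 * f ^ 26 + e ^ 4 * q ^ 3 * f ^ 21 + e ^ 5 * q ^ 2 * f ^ 16 +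
    e ^ 6 * q ^ 6 * f ^ 35 + e ^ 8 * q ^ 4 * f ^ 25 + e ^ 10 * q ^ 2 * f ^ 15 +
    e ^ 12 * q ^ 5 * f ^ 29 + e ^ 13 * q ^ 4 * f ^ 24 + e ^ 16 * q ^ 1 * f ^ 9 + e ^ 17 * f ^ 4 +
    e ^ 18 * q ^ 4 * f ^ 23 + e ^ 22 * f ^ 3 + e ^ 24 * q ^ 3 * f ^ 17 + e ^ 25 * q ^ 2 * f ^ 12 +
    e ^ 26 * q ^ 1 * f ^ 7 + e ^ 27 * f ^ 2 + e ^ 30 * q ^ 2 * f ^ 11 + e ^ 32 * f ^ 1 +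
    e ^ 36 * q ^ 1 * f ^ 5 + e ^ 37) * h +
    (e ^ 6 * q ^ 2 * f ^ 17 - e ^ 6 * q ^ 7 * f ^ 41 - e ^ 8 * q ^ 5 * f ^ 31 -
    e ^ 10 * q ^ 3 * f ^ 21 - e ^ 12 * q ^ 6 * f ^ 35 - e ^ 16 * q ^ 2 * f ^ 15 + e ^ 18 * f ^ 5 -
    e ^ 18 * q ^ 5 * f ^ 29 - e ^ 22 * q ^ 1 * f ^ 9 - e ^ 24 * q ^ 4 * f ^ 23 -
    e ^ 30 * q ^ 3 * f ^ 17 - e ^ 32 * q ^ 1 * f ^ 7 - e ^ 36 * q ^ 2 * f ^ 11) * h2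

theorem two_eq : (2 : (ZMod 2)⟦X⟧) = 0 := by
  have : ((2 : ℕ) : (ZMod 2)⟦X⟧) = 0 := by
    rw [← map_natCast (C (R := ZMod 2))]
    have : ((2 : ℕ) : ZMod 2) = 0 := by decide
    rw [this, map_zero]
  exact_mod_cast this

instance : CharP (ZMod 2)⟦X⟧ 2 := CharTwo.of_one_ne_zero_of_two_eq_zero one_ne_zero two_eq

/-- All exponents of the series are in the class `r` modulo five. -/
def Cls (r : ZMod 5) (f : (ZMod 2)⟦X⟧) : Prop := ∀ n : ℕ, (n : ZMod 5) ≠ r → coeff n f = 0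

/-- The part of a series with exponents in the class `r` modulo five. -/
noncomputable def comp (r : ZMod 5) (f : (ZMod 2)⟦X⟧) : (ZMod 2)⟦X⟧ :=
  PowerSeries.mk fun n => if (n : ZMod 5) = r then coeff n f else 0

theorem coeff_comp (r : ZMod 5) (f : (ZMod 2)⟦X⟧) (n : ℕ) :
    coeff n (comp r f) = if (n : ZMod 5) = r then coeff n f else 0 := by
  simp [comp]

theorem comp_add (r : ZMod 5) (f g : (ZMod 2)⟦X⟧) : comp r (f + g) = comp r f + comp r g := by
  ext n
  simp only [coeff_comp, map_add]
  split_ifs <;> simp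

theorem comp_cls (r : ZMod 5) (f : (ZMod 2)⟦X⟧) : Cls r (comp r f) := by
  intro n hn
  rw [coeff_comp, if_neg hn]

theorem Cls.comp {s : ZMod 5} {f : (ZMod 2)⟦X⟧} (h : Cls s f) (r : ZMod 5) :
    comp r f = if s = r then f else 0 := by
  ext n
  rw [coeff_comp]
  by_cases hn : (n : ZMod 5) = s
  · subst hn; split_ifs <;> simp
  · have h0 := h n hn
    rw [h0, ite_self]
    split_ifs
    · exact h0.symm
    · simp

theorem comp_mul {s : ZMod 5} {g : (ZMod 2)⟦X⟧} (hg : Cls s g) (r : ZMod 5) (f : (ZMod 2)⟦X⟧) :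
    comp (s + r) (g * f) = g * comp r f := by
  ext n
  rw [coeff_comp, coeff_mul, coeff_mul]
  split_ifs with h
  · refine Finset.sum_congr rfl fun p hp => ?_
    by_cases h1 : (p.1 : ZMod 5) = s
    · rw [coeff_comp, if_pos]
      rw [HasAntidiagonal.mem_antidiagonal] at hp
      rw [← hp, Nat.cast_add, h1] at h
      exact add_left_cancel h
    · rw [hg _ h1]; simp
  · symm
    refine Finset.sum_eq_zero fun p hp => ?_
    by_cases h1 : (p.1 : ZMod 5) = s
    · rw [coeff_comp, if_neg, mul_zero]
      rw [HasAntidiagonal.mem_antidiagonal] at hp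
      intro h2
      apply h
      rw [← hp, Nat.cast_add, h1, h2]
    · rw [hg _ h1]; simp

theorem Cls.mul {r s : ZMod 5} {f g : (ZMod 2)⟦X⟧} (hf : Cls r f) (hg : Cls s g) :
    Cls (r + s) (f * g) := by
  have h1 := comp_mul hf s g
  rw [hg.comp, if_pos rfl] at h1
  rw [← h1]
  exact comp_cls _ _

theorem cls_one : Cls 0 1 := by
  intro n hn
  rw [coeff_one, if_neg]
  rintro rfl
  simp at hn

theorem Cls.pow {r : ZMod 5} {f : (ZMod 2)⟦X⟧} (hf : Cls r f) (n : ℕ) : Cls (n * r) (f ^ n) := by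
  induction n with
  | zero => simpa using cls_one
  | succ n ih =>
    rw [pow_succ]
    convert ih.mul hf using 1
    push_cast; ring

theorem cls_X : Cls 1 (X : (ZMod 2)⟦X⟧) := by
  intro n hn
  rw [coeff_X, if_neg]
  rintro rfl
  simp at hn

theorem cls_expand (f : (ZMod 2)⟦X⟧) : Cls 0 (expand 5 five_ne f) := by
  intro n hn
  apply coeff_expand_of_not_dvd
  intro h
  exact hn ((ZMod.natCast_eq_zero_iff n 5).mpr h)

theorem cls_F : Cls 0 F := cls_expand E

noncomputable def A0 : (ZMod 2)⟦X⟧ := comp 0 E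
noncomputable def A1 : (ZMod 2)⟦X⟧ := comp 1 E
noncomputable def A2 : (ZMod 2)⟦X⟧ := comp 2 E

theorem E_eq : E = A0 + A1 + A2 := by
  classical
  ext n
  simp only [A0, A1, A2, map_add, coeff_comp, coeff_E]
  by_cases h : ∃ k, pentagonal k = n
  · simp only [if_pos h]
    obtain ⟨k, hk⟩ := h
    have h1 := two_mul_natCast_pentagonal k
    rw [hk] at h1
    have h2 : (2 : ZMod 5) * (n : ZMod 5) = (k : ZMod 5) * (3 * k - 1) := by
      have := congrArg (Int.cast : ℤ → ZMod 5) h1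
      push_cast at this
      exact this
    have h3 : ∀ a b : ZMod 5, 2 * a = b * (3 * b - 1) → a = 0 ∨ a = 1 ∨ a = 2 := by decide
    rcases h3 _ _ h2 with h | h | h <;> rw [h] <;> decide
  · simp [if_neg h]

theorem comp_mono (r : ZMod 5) (a b c : ℕ) {g : (ZMod 2)⟦X⟧} (hg : Cls 0 g) :
    comp r (A0 ^ a * A1 ^ b * A2 ^ c * g) =
      if (b : ZMod 5) + c * 2 = r then A0 ^ a * A1 ^ b * A2 ^ c * g else 0 := by
  have h := ((((comp_cls 0 E).pow a).mul ((comp_cls 1 E).pow b)).mul ((comp_cls 2 E).pow c)).mul hg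
  have h' := h.comp r
  simp only [mul_zero, mul_one, zero_add, add_zero] at h'
  exact h'

theorem comp_mono' (r : ZMod 5) (a b c : ℕ) :
    comp r (A0 ^ a * A1 ^ b * A2 ^ c) =
      if (b : ZMod 5) + c * 2 = r then A0 ^ a * A1 ^ b * A2 ^ c else 0 := by
  have := comp_mono r a b c cls_one
  simpa using this

theorem E_sq : E ^ 2 = A0 ^ 2 + A1 ^ 2 + A2 ^ 2 := by
  rw [E_eq, CharTwo.add_sq, CharTwo.add_sq]

theorem E_four : E ^ 4 = A0 ^ 4 + A1 ^ 4 + A2 ^ 4 := by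
  rw [show E ^ 4 = (E ^ 2) ^ 2 by ring, E_sq, CharTwo.add_sq, CharTwo.add_sq]; ring

theorem E_eight : E ^ 8 = A0 ^ 8 + A1 ^ 8 + A2 ^ 8 := by
  rw [show E ^ 8 = (E ^ 4) ^ 2 by ring, E_four, CharTwo.add_sq, CharTwo.add_sq]; ring

theorem E_thirtytwo : E ^ 32 = A0 ^ 32 + A1 ^ 32 + A2 ^ 32 := by
  rw [show E ^ 32 = ((E ^ 8) ^ 2) ^ 2 by ring, E_eight, CharTwo.add_sq, CharTwo.add_sq,
    CharTwo.add_sq, CharTwo.add_sq]; ring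

theorem A_expanded (r : ZMod 5) :
    comp r (A0 ^ 6 * A1 ^ 0 * A2 ^ 0) + comp r (A0 ^ 2 * A1 ^ 4 * A2 ^ 0) +
    comp r (A0 ^ 2 * A1 ^ 0 * A2 ^ 4) + comp r (A0 ^ 4 * A1 ^ 2 * A2 ^ 0) +
    comp r (A0 ^ 0 * A1 ^ 6 * A2 ^ 0) + comp r (A0 ^ 0 * A1 ^ 2 * A2 ^ 4) +
    comp r (A0 ^ 4 * A1 ^ 0 * A2 ^ 2) + comp r (A0 ^ 0 * A1 ^ 4 * A2 ^ 2) +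
    comp r (A0 ^ 0 * A1 ^ 0 * A2 ^ 6) + comp r (X * F ^ 6) =
    comp r (A0 ^ 1 * A1 ^ 0 * A2 ^ 0 * F) + comp r (A0 ^ 0 * A1 ^ 1 * A2 ^ 0 * F) +
    comp r (A0 ^ 0 * A1 ^ 0 * A2 ^ 1 * F) := by
  have h := identityA
  rw [show E ^ 6 = E ^ 2 * E ^ 4 by ring, E_sq, E_four] at h
  rw [E_eq] at h
  simp only [← comp_add]
  congr 1
  linear_combination h

theorem comp_XF (r : ZMod 5) : comp r (X * F ^ 6) = if 1 = r then X * F ^ 6 else 0 := by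
  have h := (cls_X.mul (cls_F.pow 6)).comp r
  simpa using h

theorem A_three : A0 ^ 2 * A2 ^ 4 + A1 ^ 4 * A2 ^ 2 = 0 := by
  have h := A_expanded 3
  simp only [comp_mono', comp_mono _ _ _ _ cls_F, comp_XF] at h
  simpa +decide using h

theorem A_zero : A0 ^ 6 + A1 ^ 2 * A2 ^ 4 = A0 * F := by
  have h := A_expanded 0
  simp only [comp_mono', comp_mono _ _ _ _ cls_F, comp_XF] at h
  simpa +decide using h

theorem A_one : A1 ^ 6 + X * F ^ 6 = A1 * F := by
  have h := A_expanded 1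
  simp only [comp_mono', comp_mono _ _ _ _ cls_F, comp_XF] at h
  simpa +decide using h

theorem coeff_zero_E : constantCoeff E = 1 := by
  classical
  rw [← coeff_zero_eq_constantCoeff_apply, coeff_E, if_pos]
  exact ⟨0, by decide⟩

theorem F_ne : F ≠ 0 := by
  intro h
  have := congrArg constantCoeff h
  rw [F, constantCoeff_expand, coeff_zero_E] at this
  simp at this

theorem E_ne : E ≠ 0 := by
  intro h
  have := congrArg constantCoeff h
  rw [coeff_zero_E] at this
  simp at this

theorem A2_ne : A2 ≠ 0 := by
  classical
  intro h
  have := congrArg (coeff 2) h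
  rw [A2, coeff_comp, if_pos (by rfl), coeff_E, if_pos ⟨-1, by decide⟩] at this
  simp at this

theorem A0_ne : A0 ≠ 0 := by
  classical
  intro h
  have := congrArg (coeff 0) h
  rw [A0, coeff_comp, if_pos (by rfl), coeff_E, if_pos ⟨0, by decide⟩] at this
  simp at this

theorem A_prod : A0 * A2 = A1 ^ 2 := by
  have h : (A2 * (A0 * A2 + A1 ^ 2)) ^ 2 = 0 := by
    rw [mul_pow, CharTwo.add_sq]
    linear_combination A_three
  have h1 : A0 * A2 + A1 ^ 2 = 0 := by
    have := pow_eq_zero_iff (two_ne_zero) |>.mp h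
    exact (mul_eq_zero.mp this).resolve_left A2_ne
  exact CharTwo.add_eq_zero.mp h1

theorem A_sum : A0 ^ 5 + A2 ^ 5 = F := by
  apply mul_left_cancel₀ A0_ne
  rw [← A_zero, ← A_prod]; ring

/-- Euler's function at `q^25`. -/
noncomputable def G : (ZMod 2)⟦X⟧ := expand 5 five_ne F

theorem identityA' : F ^ 6 + X ^ 5 * G ^ 6 = F * G := by
  have := congrArg (expand 5 five_ne) identityA
  simp only [map_add, map_mul, map_pow, expand_X] at this
  exact this

theorem A1_eq : A1 = X * G := by
  have h1 := A_one
  have h2 : (X * G) ^ 6 + X * F ^ 6 = (X * G) * F := by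
    linear_combination X * identityA'
  have hA : constantCoeff A1 = 0 := by
    rw [← coeff_zero_eq_constantCoeff_apply, A1, coeff_comp, if_neg (by decide)]
  have hF : constantCoeff F = 1 := by
    rw [F, constantCoeff_expand, coeff_zero_E]
  have hY : constantCoeff (X * G) = 0 := by simp
  generalize X * G = Y at *
  have h3 : (A1 - Y) * (A1 ^ 5 + A1 ^ 4 * Y + A1 ^ 3 * Y ^ 2 + A1 ^ 2 * Y ^ 3 + A1 * Y ^ 4 + Y ^ 5
      - F) = 0 := by
    linear_combination h1 - h2
  rcases mul_eq_zero.mp h3 with h | h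
  · exact sub_eq_zero.mp h
  · exfalso
    have := congrArg constantCoeff h
    simp [hA, hY, hF] at this

end Stmt8

namespace Stmt8
open PowerSeries Finset

theorem comp_E_five (r : ZMod 5) : comp r (E ^ 5) =
      comp r (A0 ^ 5 * A1 ^ 0 * A2 ^ 0) +
      comp r (A0 ^ 1 * A1 ^ 4 * A2 ^ 0) +
      comp r (A0 ^ 1 * A1 ^ 0 * A2 ^ 4) +
      comp r (A0 ^ 4 * A1 ^ 1 * A2 ^ 0) +
      comp r (A0 ^ 0 * A1 ^ 5 * A2 ^ 0) +
      comp r (A0 ^ 0 * A1 ^ 1 * A2 ^ 4) +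
      comp r (A0 ^ 4 * A1 ^ 0 * A2 ^ 1) +
      comp r (A0 ^ 0 * A1 ^ 4 * A2 ^ 1) +
      comp r (A0 ^ 0 * A1 ^ 0 * A2 ^ 5) := by
  simp only [← comp_add]
  congr 1
  rw [show E ^ 5 = E * E ^ 4 by ring, E_four, E_eq]
  ring

theorem comp_E_fortytwo (r : ZMod 5) : comp r (E ^ 42) =
      comp r (A0 ^ 42 * A1 ^ 0 * A2 ^ 0) +
      comp r (A0 ^ 10 * A1 ^ 32 * A2 ^ 0) +
      comp r (A0 ^ 10 * A1 ^ 0 * A2 ^ 32) +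
      comp r (A0 ^ 34 * A1 ^ 8 * A2 ^ 0) +
      comp r (A0 ^ 2 * A1 ^ 40 * A2 ^ 0) +
      comp r (A0 ^ 2 * A1 ^ 8 * A2 ^ 32) +
      comp r (A0 ^ 34 * A1 ^ 0 * A2 ^ 8) +
      comp r (A0 ^ 2 * A1 ^ 32 * A2 ^ 8) +
      comp r (A0 ^ 2 * A1 ^ 0 * A2 ^ 40) +
      comp r (A0 ^ 40 * A1 ^ 2 * A2 ^ 0) +
      comp r (A0 ^ 8 * A1 ^ 34 * A2 ^ 0) +
      comp r (A0 ^ 8 * A1 ^ 2 * A2 ^ 32) +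
      comp r (A0 ^ 32 * A1 ^ 10 * A2 ^ 0) +
      comp r (A0 ^ 0 * A1 ^ 42 * A2 ^ 0) +
      comp r (A0 ^ 0 * A1 ^ 10 * A2 ^ 32) +
      comp r (A0 ^ 32 * A1 ^ 2 * A2 ^ 8) +
      comp r (A0 ^ 0 * A1 ^ 34 * A2 ^ 8) +
      comp r (A0 ^ 0 * A1 ^ 2 * A2 ^ 40) +
      comp r (A0 ^ 40 * A1 ^ 0 * A2 ^ 2) +
      comp r (A0 ^ 8 * A1 ^ 32 * A2 ^ 2) +
      comp r (A0 ^ 8 * A1 ^ 0 * A2 ^ 34) +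
      comp r (A0 ^ 32 * A1 ^ 8 * A2 ^ 2) +
      comp r (A0 ^ 0 * A1 ^ 40 * A2 ^ 2) +
      comp r (A0 ^ 0 * A1 ^ 8 * A2 ^ 34) +
      comp r (A0 ^ 32 * A1 ^ 0 * A2 ^ 10) +
      comp r (A0 ^ 0 * A1 ^ 32 * A2 ^ 10) +
      comp r (A0 ^ 0 * A1 ^ 0 * A2 ^ 42) := by
  simp only [← comp_add]
  congr 1
  rw [show E ^ 42 = E ^ 2 * E ^ 8 * E ^ 32 by ring, E_sq, E_eight, E_thirtytwo]
  ring

theorem comp_zero_E_five : comp 0 (E ^ 5) = A0 ^ 5 + A1 ^ 5 + A2 ^ 5 := by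
  have h := comp_E_five 0
  simp only [comp_mono'] at h
  simpa +decide using h

theorem dissection_one : F ^ 6 * comp 4 P = X ^ 4 * G ^ 5 := by
  have h : X * F ^ 6 * P = F + E ^ 5 := by
    linear_combination P * identityA + (F - E ^ 5) * P_mul_E - E ^ 5 * two_eq
  have h1 := congrArg (comp 0) h
  have hc : Cls 1 (X * F ^ 6) := by simpa using cls_X.mul (cls_F.pow 6)
  have h2 := comp_mul hc 4 P
  rw [show (1 : ZMod 5) + 4 = 0 by decide] at h2
  rw [h2, comp_add, cls_F.comp, if_pos rfl, comp_zero_E_five, A1_eq] at h1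
  have h3 : X * (F ^ 6 * comp 4 P) = X * (X ^ 4 * G ^ 5) := by
    linear_combination h1 + A_sum + F * two_eq
  exact mul_left_cancel₀ X_ne_zero h3

/-- The partition series at `q^5`. -/
noncomputable def V : (ZMod 2)⟦X⟧ := expand 5 five_ne P

theorem V_mul_F : V * F = 1 := by
  have := congrArg (expand 5 five_ne) P_mul_E
  rw [map_mul, map_one] at this
  exact this

theorem cls_V : Cls 0 V := cls_expand P

theorem cls_G : Cls 0 G := cls_expand F

theorem coeff_of_comp {f g : (ZMod 2)⟦X⟧} (h : comp 4 f = X ^ 4 * expand 5 five_ne g) (n : ℕ) :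
    coeff (5 * n + 4) f = coeff n g := by
  have h1 := congrArg (coeff (5 * n + 4)) h
  rw [coeff_comp, if_pos, coeff_X_pow_mul, coeff_expand_mul] at h1
  · exact h1
  · push_cast
    rw [show (5 : ZMod 5) = 0 by decide]
    ring

theorem Q_hundred : Q 100 = G ^ 4 * P := by
  have h := Q_mul_E 100 (by norm_num)
  have h4 : expand 100 (by norm_num) E = G ^ 4 := by
    have e1 : expand 100 (by norm_num) E
        = expand 5 five_ne (expand 5 five_ne (expand 2 two_ne_zero (expand 2 two_ne_zero E))) := by
      rw [← expand_mul, ← expand_mul, ← expand_mul]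
    rw [e1, expand_two, expand_two]
    simp only [map_pow]
    rw [← pow_mul]
    rfl
  rw [h4] at h
  linear_combination P * h - Q 100 * P_mul_E

theorem coeff_Q_one (n : ℕ) : coeff (5 * n + 4) (Q 100) = coeff n (F ^ 9 * P ^ 6) := by
  apply coeff_of_comp
  have hc : Cls 0 (G ^ 4) := by simpa using cls_G.pow 4
  have h := comp_mul hc 4 P
  rw [zero_add] at h
  rw [Q_hundred, h, map_mul, map_pow, map_pow]
  change G ^ 4 * comp 4 P = X ^ 4 * (G ^ 9 * V ^ 6)
  have hv : V ^ 6 * F ^ 6 = 1 := by rw [← mul_pow, V_mul_F, one_pow]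
  linear_combination G ^ 4 * V ^ 6 * dissection_one - G ^ 4 * comp 4 P * hv

theorem comp_two_E_fortytwo : comp 2 (E ^ 42) =
    (A0 ^ 4 * (A0 * A1 ^ 16 + A1 * A0 ^ 16) + A1 ^ 4 * (A0 * A2 ^ 16 + A1 ^ 17 + A2 * A0 ^ 16)
      + A2 ^ 4 * (A1 * A2 ^ 16 + A2 * A1 ^ 16)) ^ 2 := by
  have h := comp_E_fortytwo 2
  simp only [comp_mono'] at h
  simp +decide only [if_true, if_false] at h
  rw [h]
  simp only [CharTwo.add_sq, mul_pow, mul_add]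
  ring

theorem A_sum_four : A0 ^ 20 + A2 ^ 20 = F ^ 4 := by
  rw [← A_sum]
  linear_combination (-2 * A0 ^ 15 * A2 ^ 5 - 3 * A0 ^ 10 * A2 ^ 10 - 2 * A0 ^ 5 * A2 ^ 15) * two_eq

theorem A_sum_three : A0 ^ 15 + A2 ^ 15 = F ^ 3 + A1 ^ 10 * F := by
  rw [show A1 ^ 10 = (A1 ^ 2) ^ 5 by ring, ← A_prod, ← A_sum]
  linear_combination (-2 * A0 ^ 10 * A2 ^ 5 - 2 * A0 ^ 5 * A2 ^ 10) * two_eq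

theorem comp_two_base :
    A0 ^ 4 * (A0 * A1 ^ 16 + A1 * A0 ^ 16) + A1 ^ 4 * (A0 * A2 ^ 16 + A1 ^ 17 + A2 * A0 ^ 16)
      + A2 ^ 4 * (A1 * A2 ^ 16 + A2 * A1 ^ 16) = A1 ^ 21 + F ^ 3 * A1 ^ 6 + F ^ 4 * A1 := by
  linear_combination A1 ^ 16 * A_sum + A1 * A_sum_four + A1 ^ 6 * A_sum_three +
    A1 ^ 4 * (A0 ^ 15 + A2 ^ 15) * A_prod + A1 ^ 16 * F * two_eq

theorem dissection_two : F ^ 48 * comp 4 (P ^ 6) = X ^ 4 * (X ^ 30 * G ^ 42 + F ^ 6 * G ^ 12) := by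
  have hp : P ^ 6 * E ^ 6 = 1 := by rw [← mul_pow, P_mul_E, one_pow]
  have h8 : E ^ 48 + X ^ 8 * F ^ 48 = E ^ 8 * F ^ 8 := by
    have h2 : (E ^ 6 + X * F ^ 6) ^ 2 = (E * F) ^ 2 := by rw [identityA]
    rw [CharTwo.add_sq] at h2
    have h4 := congrArg (· ^ 2) h2
    simp only [CharTwo.add_sq] at h4
    have h8 := congrArg (· ^ 2) h4
    simp only [CharTwo.add_sq] at h8
    linear_combination h8
  have h : X ^ 8 * F ^ 48 * P ^ 6 = E ^ 2 * F ^ 8 + E ^ 42 := by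
    linear_combination P ^ 6 * h8 + (E ^ 2 * F ^ 8 - E ^ 42) * hp - E ^ 42 * two_eq
  have h1 := congrArg (comp 2) h
  have hF : Cls 0 (F ^ 8) := by simpa using cls_F.pow 8
  have hc : Cls 3 (X ^ 8 * F ^ 48) := by
    have := (cls_X.pow 8).mul (cls_F.pow 48)
    rw [show ((8 : ℕ) : ZMod 5) * 1 + (48 : ℕ) * 0 = 3 by decide] at this
    exact this
  have h2 := comp_mul hc 4 (P ^ 6)
  rw [show (3 : ZMod 5) + 4 = 2 by decide] at h2
  have h3 : comp 2 (E ^ 2 * F ^ 8) = A1 ^ 2 * F ^ 8 := by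
    have e : E ^ 2 * F ^ 8 = A0 ^ 2 * A1 ^ 0 * A2 ^ 0 * F ^ 8 + A0 ^ 0 * A1 ^ 2 * A2 ^ 0 * F ^ 8
        + A0 ^ 0 * A1 ^ 0 * A2 ^ 2 * F ^ 8 := by rw [E_sq]; ring
    have h := congrArg (comp 2) e
    simp only [comp_add, comp_mono _ _ _ _ hF] at h
    simpa +decide using h
  rw [h2, comp_add, h3, comp_two_E_fortytwo, comp_two_base, CharTwo.add_sq, CharTwo.add_sq,
    A1_eq] at h1
  have h4 : X ^ 8 * (F ^ 48 * comp 4 (P ^ 6))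
      = X ^ 8 * (X ^ 4 * (X ^ 30 * G ^ 42 + F ^ 6 * G ^ 12)) := by
    linear_combination h1 + X ^ 2 * G ^ 2 * F ^ 8 * two_eq
  exact mul_left_cancel₀ (pow_ne_zero 8 X_ne_zero) h4

/-- The series whose coefficients are those of `Q 100` in the class 24 modulo 25. -/
noncomputable def Cc : (ZMod 2)⟦X⟧ := X ^ 6 * F ^ 42 * P ^ 39 + F ^ 12 * P ^ 33

theorem coeff_Q_two (n : ℕ) : coeff (5 * n + 4) (F ^ 9 * P ^ 6) = coeff n Cc := by
  apply coeff_of_comp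
  have hc : Cls 0 (F ^ 9) := by simpa using cls_F.pow 9
  have h := comp_mul hc 4 (P ^ 6)
  rw [zero_add] at h
  rw [h, Cc]
  simp only [map_add, map_mul, map_pow, expand_X]
  change F ^ 9 * comp 4 (P ^ 6) = X ^ 4 * ((X ^ 5) ^ 6 * G ^ 42 * V ^ 39 + G ^ 12 * V ^ 33)
  have hv (k : ℕ) : V ^ k * F ^ k = 1 := by rw [← mul_pow, V_mul_F, one_pow]
  have hF := pow_ne_zero 39 F_ne
  apply mul_left_cancel₀ hF
  linear_combination dissection_two - X ^ 34 * G ^ 42 * hv 39 - X ^ 4 * G ^ 12 * F ^ 6 * hv 33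

theorem final_identity : X ^ 2 * Cc = P ^ 21 + X * E ^ 3 + E ^ 4 * V ^ 5 := by
  have hp (k : ℕ) : P ^ k * E ^ k = 1 := by rw [← mul_pow, P_mul_E, one_pow]
  have hv : V ^ 5 * F ^ 5 = 1 := by rw [← mul_pow, V_mul_F, one_pow]
  have h := final_poly two_eq E X F identityA
  apply mul_left_cancel₀ (mul_ne_zero (pow_ne_zero 39 E_ne) (pow_ne_zero 5 F_ne))
  rw [Cc]
  linear_combination h + X ^ 8 * F ^ 47 * hp 39 + X ^ 2 * F ^ 17 * E ^ 6 * hp 33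
    - E ^ 18 * F ^ 5 * hp 21 - E ^ 43 * hv -
    (E ^ 18 * F ^ 5 + X * E ^ 42 * F ^ 5 + E ^ 43) * two_eq

theorem coeff_E_four_V (m : ℕ) (h : (m : ZMod 5) = 1 ∨ (m : ZMod 5) = 2) :
    coeff m (E ^ 4 * V ^ 5) = 0 := by
  have hV : Cls 0 (V ^ 5) := by simpa using cls_V.pow 5
  have e : E ^ 4 * V ^ 5 = A0 ^ 4 * A1 ^ 0 * A2 ^ 0 * V ^ 5 + A0 ^ 0 * A1 ^ 4 * A2 ^ 0 * V ^ 5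
      + A0 ^ 0 * A1 ^ 0 * A2 ^ 4 * V ^ 5 := by rw [E_four]; ring
  have hr (r : ZMod 5) (hr : r = 1 ∨ r = 2) : comp r (E ^ 4 * V ^ 5) = 0 := by
    rw [e]
    simp only [comp_add, comp_mono _ _ _ _ hV]
    rcases hr with rfl | rfl <;> simp +decide
  have h1 := congrArg (coeff m) (hr m h)
  rw [coeff_comp, if_pos rfl, map_zero] at h1
  exact h1

theorem coeff_X_E_cube (m : ℕ) (h : (m : ZMod 7) = 2 ∨ (m : ZMod 7) = 4 ∨ (m : ZMod 7) = 5) :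
    coeff m (E ^ 3) = 0 := by
  rw [coeff_E_cube]
  apply J_eq_zero
  intro r hr
  have h1 := congrArg (Int.cast : ℤ → ZMod 7) hr
  push_cast at h1
  have key : ∀ a b : ZMod 7, (a = 2 ∨ a = 4 ∨ a = 5) → 24 * a + 3 ≠ 3 * b ^ 2 := by decide
  exact key _ _ h (by simpa using h1)

theorem main_coeff (k : ℕ) (h5 : ((k + 2 : ℕ) : ZMod 5) = 1 ∨ ((k + 2 : ℕ) : ZMod 5) = 2)
    (h7 : ((k + 1 : ℕ) : ZMod 7) = 2 ∨ ((k + 1 : ℕ) : ZMod 7) = 4 ∨ ((k + 1 : ℕ) : ZMod 7) = 5) :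
    numRegularPartitions 100 (25 * k + 24) ≡ numMultipartitions 21 (k + 2) [MOD 2] := by
  apply (ZMod.natCast_eq_natCast_iff _ _ 2).mp
  have h1 : coeff (25 * k + 24) (Q 100) = coeff k Cc := by
    rw [← coeff_Q_two, ← coeff_Q_one]
    congr 2
    ring
  have h2 := congrArg (coeff (k + 2)) final_identity
  rw [coeff_X_pow_mul, map_add, map_add, coeff_E_four_V _ h5, coeff_P_pow,
    show k + 2 = (k + 1) + 1 from rfl, coeff_succ_X_mul, coeff_X_E_cube _ h7, add_zero,
    add_zero, ← h1, Q, coeff_mk] at h2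
  exact h2

end Stmt8

theorem stmt_8 (n : ℕ) :
    (∀ B ∈ ({6, 12, 17, 26, 27, 31} : Finset ℕ),
      numRegularPartitions 100 (875 * n + 25 * B - 26) ≡
        numMultipartitions 21 (35 * n + B) [MOD 2]) := by
  intro B hB
  have hB2 : B = 6 ∨ B = 12 ∨ B = 17 ∨ B = 26 ∨ B = 27 ∨ B = 31 := by simpa using hB
  have h := Stmt8.main_coeff (35 * n + B - 2) ?_ ?_
  · rw [show 875 * n + 25 * B - 26 = 25 * (35 * n + B - 2) + 24 by omega,
      show 35 * n + B = 35 * n + B - 2 + 2 by omega]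
    exact h
  · rw [show 35 * n + B - 2 + 2 = 35 * n + B by omega]
    push_cast
    rw [show (35 : ZMod 5) = 0 by decide, zero_mul, zero_add]
    rcases hB2 with rfl | rfl | rfl | rfl | rfl | rfl <;> decide
  · rw [show 35 * n + B - 2 + 1 = 35 * n + (B - 1) by omega]
    rw [Nat.cast_add, Nat.cast_mul, show ((35 : ℕ) : ZMod 7) = 0 by decide, zero_mul, zero_add]
    rcases hB2 with rfl | rfl | rfl | rfl | rfl | rfl <;> decide
end

section
/- For every natural number n and every B in {22, 29, 92, 127, 169, 239}, the number of 200-regular partitions satisfies b_200(6125n + 25B − 26) ≡ p_17(245n + B) (mod 2). -/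
open PowerSeries Filter

section Aux

variable {K : Type*} [Field K]

/-- Coefficientwise stabilisation of a sequence of power series. -/
def Lim (u : ℕ → K⟦X⟧) (φ : K⟦X⟧) : Prop :=
  ∀ d, ∀ᶠ n in atTop, coeff d (u n) = coeff d φ

theorem Lim.unique {u : ℕ → K⟦X⟧} {φ ψ : K⟦X⟧} (h1 : Lim u φ) (h2 : Lim u ψ) : φ = ψ := by
  ext d
  obtain ⟨n, hn1, hn2⟩ := ((h1 d).and (h2 d)).exists
  rw [← hn1, hn2]

theorem Lim.mul {u v : ℕ → K⟦X⟧} {φ ψ : K⟦X⟧} (h1 : Lim u φ) (h2 : Lim v ψ) :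
    Lim (fun n => u n * v n) (φ * ψ) := by
  intro d
  have h1' : ∀ᶠ n in atTop, ∀ i ∈ Finset.range (d + 1), coeff i (u n) = coeff i φ :=
    (Filter.eventually_all_finset _).2 fun i _ => h1 i
  have h2' : ∀ᶠ n in atTop, ∀ i ∈ Finset.range (d + 1), coeff i (v n) = coeff i ψ :=
    (Filter.eventually_all_finset _).2 fun i _ => h2 i
  filter_upwards [h1', h2'] with n ha hb
  rw [coeff_mul, coeff_mul]
  refine Finset.sum_congr rfl fun p hp => ?_
  have := Finset.HasAntidiagonal.mem_antidiagonal.1 hp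
  rw [ha _ (by simp; omega), hb _ (by simp; omega)]

theorem Lim.const (φ : K⟦X⟧) : Lim (fun _ => φ) φ := fun _ => by simp

theorem Lim.add {u v : ℕ → K⟦X⟧} {φ ψ : K⟦X⟧} (h1 : Lim u φ) (h2 : Lim v ψ) :
    Lim (fun n => u n + v n) (φ + ψ) := by
  intro d
  filter_upwards [h1 d, h2 d] with n ha hb
  simp [ha, hb]

theorem Lim.pow {u : ℕ → K⟦X⟧} {φ : K⟦X⟧} (h1 : Lim u φ) (k : ℕ) :
    Lim (fun n => u n ^ k) (φ ^ k) := by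
  induction k with
  | zero => simpa using Lim.const (1 : K⟦X⟧)
  | succ k ih => simpa only [pow_succ] using ih.mul h1

theorem Lim.comp {u : ℕ → K⟦X⟧} {φ : K⟦X⟧} (h1 : Lim u φ) {g : ℕ → ℕ}
    (hg : Tendsto g atTop atTop) : Lim (fun n => u (g n)) φ :=
  fun d => hg.eventually (h1 d)

theorem Lim.expand {u : ℕ → K⟦X⟧} {φ : K⟦X⟧} (h1 : Lim u φ) (k : ℕ) (hk : k ≠ 0) :
    Lim (fun n => expand k hk (u n)) (expand k hk φ) := by
  intro d
  filter_upwards [h1 (d / k)] with n hn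
  simp only [coeff_expand, hn]

theorem Lim.rescale {u : ℕ → K⟦X⟧} {φ : K⟦X⟧} (h1 : Lim u φ) (z : K) :
    Lim (fun n => rescale z (u n)) (rescale z φ) := by
  intro d
  filter_upwards [h1 d] with n hn
  simp only [coeff_rescale, hn]

/-- Finite Euler products. -/
noncomputable def EE (K : Type*) [Field K] (n : ℕ) : K⟦X⟧ := ∏ k ∈ Finset.range n, (1 - X ^ (k + 1))

/-- Euler function. -/
noncomputable def FF (K : Type*) [Field K] : K⟦X⟧ := pentagonalSeries K

theorem lim_EE : Lim (EE K) (FF K) := by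
  intro d
  exact tendsto_finset_range.eventually (coeff_prod_one_sub_X_pow_eventually_eq K d)

theorem expand_EE (n k : ℕ) (hk : k ≠ 0) :
    expand k hk (EE K n) = ∏ i ∈ Finset.range n, (1 - X ^ (k * (i + 1))) := by
  simp [EE, map_prod, pow_mul]

open PowerSeries.WithPiTopology in
theorem lim_of_hasProd [TopologicalSpace K] [DiscreteTopology K] {f : ℕ → K⟦X⟧} {φ : K⟦X⟧}
    (h : HasProd f φ) : Lim (fun n => ∏ i ∈ Finset.range n, f i) φ := by
  have := h.tendsto_prod_nat
  rw [tendsto_iff_coeff_tendsto] at this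
  intro d
  have h2 := this d
  rw [nhds_discrete] at h2
  exact tendsto_pure.1 h2

/-- generating functions -/
noncomputable def BB (K : Type*) [Field K] (m : ℕ) : K⟦X⟧ :=
  mk fun n => (numRegularPartitions m n : K)

noncomputable def PP (K : Type*) [Field K] : K⟦X⟧ :=
  mk fun n => (Fintype.card n.Partition : K)

open PowerSeries.WithPiTopology in
theorem BB_mul (m : ℕ) (hm : m ≠ 0) : BB K m * FF K = expand m hm (FF K) := by
  let : TopologicalSpace K := ⊥
  have : DiscreteTopology K := ⟨rfl⟩
  have h0 : BB K m = mk fun n => ((Nat.Partition.countRestricted n m).card : K) := by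
    rw [← Nat.Partition.powerSeriesMk_card_restricted_eq_powerSeriesMk_card_countRestricted K
      (Nat.pos_of_ne_zero hm)]
    unfold BB
    ext n
    simp only [coeff_mk]
    congr 1
    rw [numRegularPartitions, Nat.card_eq_fintype_card, Fintype.card_subtype,
      Nat.Partition.restricted]
  have h1 := (lim_of_hasProd (Nat.Partition.hasProd_powerSeriesMk_card_countRestricted K
      (Nat.pos_of_ne_zero hm))).mul (lim_EE (K := K))
  rw [← h0] at h1
  have h2 := (lim_EE (K := K)).expand m hm
  refine h1.unique ?_
  convert h2 using 2 with n
  rw [expand_EE, EE, ← Finset.prod_mul_distrib]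
  refine Finset.prod_congr rfl fun i _ => ?_
  simp_rw [pow_mul, geom_sum_mul_neg]
  rw [← pow_mul, ← pow_mul, mul_comm]

open PowerSeries.WithPiTopology in
theorem PP_mul : PP K * FF K = 1 := by
  let : TopologicalSpace K := ⊥
  have : DiscreteTopology K := ⟨rfl⟩
  have h1 := (lim_of_hasProd (Nat.Partition.hasProd_powerSeriesMk_card_restricted K
      (fun _ => True))).mul (lim_EE (K := K))
  have h0 : PP K = mk fun n => ((Nat.Partition.restricted n (fun _ => True)).card : K) := by
    unfold PP
    ext n
    simp [Nat.Partition.restricted]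
  rw [← h0] at h1
  refine h1.unique ?_
  convert Lim.const (1 : K⟦X⟧) using 2 with n
  rw [EE, ← Finset.prod_mul_distrib]
  refine Finset.prod_eq_one fun i _ => ?_
  simp only [if_true, pow_mul]
  exact tsum_pow_mul_one_sub_of_constantCoeff_eq_zero (by simp)

theorem coeff_PP_pow (t n : ℕ) : coeff n (PP K ^ t) = (numMultipartitions t n : K) := by
  have h : PP K ^ t = ∏ _i : Fin t, PP K := by simp
  rw [h, coeff_prod, numMultipartitions]
  have e : {f : Fin t → Σ k : ℕ, k.Partition // (∑ i, (f i).1) = n} ≃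
      Σ l : {l : Fin t →₀ ℕ // l ∈ Finset.finsuppAntidiag Finset.univ n},
        ∀ i, (l.1 i).Partition :=
    { toFun := fun f => ⟨⟨Finsupp.equivFunOnFinite.symm fun i => (f.1 i).1, by
          simp [Finset.mem_finsuppAntidiag, f.2]⟩, fun i => (f.1 i).2⟩
      invFun := fun l => ⟨fun i => ⟨l.1.1 i, l.2 i⟩, by
          have := l.1.2
          simp only [Finset.mem_finsuppAntidiag] at this
          exact this.1⟩
      left_inv := fun f => rfl
      right_inv := by
        rintro ⟨⟨l, hl⟩, g⟩
        obtain ⟨l', rfl⟩ := Finsupp.equivFunOnFinite.symm.surjective l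
        rfl }
  rw [Nat.card_congr e, Nat.card_eq_fintype_card, Fintype.card_sigma]
  push_cast
  rw [← Finset.sum_coe_sort]
  refine Finset.sum_congr rfl fun l _ => ?_
  simp [PP, Fintype.card_pi]


theorem gauss_finite {R : Type*} [CommRing R] (q : R) (n : ℕ) :
    (∏ k ∈ Finset.range n, (1 - q ^ (2 * k + 1))) *
        (∑ k ∈ Finset.range (2 * n), q ^ (k * (k + 1) / 2)) =
      ∑ s ∈ Finset.range n, (∏ k ∈ Finset.range s, (1 - q ^ (2 * k + 1))) *
        (∏ k ∈ Finset.Ico s n, (1 - q ^ (2 * k + 2))) * q ^ (s * (2 * n + 1)) := by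
  induction n with
  | zero => simp
  | succ n ih =>
    set D : ℕ → R := fun s => ∏ k ∈ Finset.range s, (1 - q ^ (2 * k + 1)) with hD
    have hDs : ∀ s, D (s + 1) = D s * (1 - q ^ (2 * s + 1)) := fun s => by
      simp [hD, Finset.prod_range_succ]
    set W : ℕ → R := fun s => D s * (1 - q ^ (2 * s)) *
      (∏ k ∈ Finset.Ico s n, (1 - q ^ (2 * k + 2))) * q ^ (s * (2 * n + 1)) with hW
    have key : ∀ s ∈ Finset.range n, D s * (∏ k ∈ Finset.Ico s (n + 1), (1 - q ^ (2 * k + 2)))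
        * q ^ (s * (2 * (n + 1) + 1)) = (1 - q ^ (2 * n + 1)) * (D s *
        (∏ k ∈ Finset.Ico s n, (1 - q ^ (2 * k + 2))) * q ^ (s * (2 * n + 1))) +
        (W (s + 1) - W s) := by
      intro s hs
      have hs' : s < n := Finset.mem_range.1 hs
      simp only [hW, hDs]
      rw [Finset.prod_Ico_succ_top hs'.le, Finset.prod_eq_prod_Ico_succ_bot hs']
      ring
    change D (n + 1) * _ = ∑ s ∈ Finset.range (n + 1), D s * _ * _
    rw [Finset.sum_range_succ, Finset.sum_congr rfl key, Finset.sum_add_distrib,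
      Finset.sum_range_sub, ← Finset.mul_sum, ← ih, show 2 * (n + 1) = 2 * n + 1 + 1 by ring,
      Finset.sum_range_succ, Finset.sum_range_succ, hDs]
    have e1 : 2 * n * (2 * n + 1) / 2 = n * (2 * n + 1) := by
      rw [mul_assoc]; exact Nat.mul_div_cancel_left _ (by norm_num)
    have e2 : (2 * n + 1) * (2 * n + 1 + 1) / 2 = (2 * n + 1) * (n + 1) := by
      rw [show (2 * n + 1) * (2 * n + 1 + 1) = 2 * ((2 * n + 1) * (n + 1)) by ring]
      exact Nat.mul_div_cancel_left _ (by norm_num)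
    rw [e1, e2]
    simp only [hW, Finset.Ico_self, Finset.prod_empty, Nat.Ico_succ_singleton,
      Finset.prod_singleton]
    simp only [mul_zero, pow_zero, sub_self, zero_mul]
    ring

theorem norm_lin {R : Type*} [CommRing R] (w Y : R) (hw : 1 + w + w ^ 2 + w ^ 3 + w ^ 4 = 0) :
    (1 - Y) * (1 - w * Y) * (1 - w ^ 2 * Y) * (1 - w ^ 3 * Y) * (1 - w ^ 4 * Y) = 1 - Y ^ 5 := by
  grind

theorem norm_quad {R : Type*} [CommRing R] (w a b c : R) (hw : 1 + w + w ^ 2 + w ^ 3 + w ^ 4 = 0) :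
    (a + b + c) * (a + w * b + w ^ 2 * c) * (a + w ^ 2 * b + w ^ 4 * c) *
      (a + w ^ 3 * b + w ^ 6 * c) * (a + w ^ 4 * b + w ^ 8 * c) =
    a ^ 5 + b ^ 5 + c ^ 5 - 5 * a * b ^ 3 * c + 5 * a ^ 2 * b * c ^ 2 := by
  grind

variable [CharP K 2]

variable (K) in
theorem two_zero : (2 : K⟦X⟧) = 0 := by
  have h : (2 : K) = 0 := by exact_mod_cast CharP.cast_eq_zero K 2
  have h1 : (2 : K⟦X⟧) = C (2 : K) := (map_ofNat C 2).symm
  rw [h1, h, map_zero]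

variable (K) in
theorem expand_two_FF : expand 2 two_ne_zero (FF K) = FF K ^ 2 := by
  have h2 := two_zero K
  refine ((lim_EE (K := K)).expand 2 two_ne_zero).unique ?_
  convert (lim_EE (K := K)).pow 2 using 2 with n
  rw [expand_EE, EE, ← Finset.prod_pow]
  refine Finset.prod_congr rfl fun i _ => ?_
  rw [mul_comm, pow_mul]
  linear_combination (X ^ (i + 1) - X ^ (i + 1) * X ^ (i + 1)) * h2 + 
    (X ^ (i + 1) * X ^ (i + 1) - (X ^ (i + 1)) ^ 2) * h2

/-- the theta series of triangular numbers -/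
noncomputable def psi (K : Type*) [Field K] : K⟦X⟧ :=
  mk fun d => ∑ k ∈ Finset.range (d + 1), if d = k * (k + 1) / 2 then 1 else 0

theorem psi_supp {d : ℕ} (h : coeff d (psi K) ≠ 0) : ∃ k, d = k * (k + 1) / 2 := by
  by_contra hc
  push Not at hc
  apply h
  simp [psi, hc]

theorem lim_psi : Lim (fun n => ∑ k ∈ Finset.range (2 * n), X ^ (k * (k + 1) / 2)) (psi K) := by
  intro d
  filter_upwards [eventually_ge_atTop (d + 1)] with n hn
  simp only [map_sum, coeff_X_pow, psi, coeff_mk]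
  symm
  apply Finset.sum_subset
  · intro k
    simp only [Finset.mem_range]
    omega
  · intro k _ hk
    simp only [Finset.mem_range] at hk
    rw [if_neg]
    intro h
    rcases Nat.eq_zero_or_pos k with h0 | h0
    · omega
    have : k ≤ k * (k + 1) / 2 := by
      rw [Nat.le_div_iff_mul_le (by norm_num)]
      nlinarith
    omega

theorem EE_two_mul (n : ℕ) : EE K (2 * n) = (∏ k ∈ Finset.range n, (1 - X ^ (2 * k + 1))) *
    expand 2 two_ne_zero (EE K n) := by
  rw [expand_EE, EE, ← Finset.prod_mul_distrib]
  induction n with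
  | zero => simp
  | succ n ih =>
    rw [show 2 * (n + 1) = 2 * n + 1 + 1 by ring, Finset.prod_range_succ, Finset.prod_range_succ,
      ih, Finset.prod_range_succ]
    ring

theorem psi_eq : psi K = FF K ^ 3 := by
  have h1 := ((lim_EE (K := K)).comp (g := fun n => 2 * (n + 1))
    (tendsto_atTop_mono (fun n => by simp only [id]; omega) tendsto_id)).mul
    (lim_psi.comp (g := fun n => n + 1) (tendsto_add_atTop_nat 1))
  have h2 : Lim (fun n => EE K (2 * (n + 1)) * ∑ k ∈ Finset.range (2 * (n + 1)),
      X ^ (k * (k + 1) / 2)) (FF K ^ 4) := by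
    have hz : Lim (fun n => expand 2 two_ne_zero (EE K (n + 1)) *
        ∑ s ∈ Finset.range n, (∏ k ∈ Finset.range (s + 1), (1 - X ^ (2 * k + 1))) *
        (∏ k ∈ Finset.Ico (s + 1) (n + 1), (1 - X ^ (2 * k + 2))) *
          X ^ ((s + 1) * (2 * (n + 1) + 1))) (0 : K⟦X⟧) := by
      intro d
      filter_upwards [eventually_ge_atTop (d + 1)] with n hn
      rw [map_zero]
      have : (X : K⟦X⟧) ^ (n + 1) ∣ expand 2 two_ne_zero (EE K (n + 1)) *
        ∑ s ∈ Finset.range n, (∏ k ∈ Finset.range (s + 1), (1 - X ^ (2 * k + 1))) *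
        (∏ k ∈ Finset.Ico (s + 1) (n + 1), (1 - X ^ (2 * k + 2))) *
          X ^ ((s + 1) * (2 * (n + 1) + 1)) := by
        apply Dvd.dvd.mul_left
        refine Finset.dvd_sum fun s _ => ?_
        apply Dvd.dvd.mul_left
        exact pow_dvd_pow _ (by nlinarith)
      exact X_pow_dvd_iff.1 this d (by omega)
    have h4 := ((((lim_EE (K := K)).comp (tendsto_add_atTop_nat 1)).expand 2 two_ne_zero).pow 2).add
      hz
    rw [add_zero, expand_two_FF, ← pow_mul] at h4
    convert h4 using 2 with n
    rw [EE_two_mul, mul_right_comm, gauss_finite, mul_comm, Finset.sum_range_succ', mul_add,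
      add_comm]
    congr 1
    rw [expand_EE]
    simp only [Finset.range_zero, Finset.prod_empty, zero_mul, pow_zero, mul_one, one_mul,
      ← Finset.range_eq_Ico, pow_two]
    rfl
  have h3 := h1.unique h2
  have h5 := PP_mul (K := K)
  calc psi K = PP K * (FF K * psi K) := by rw [← mul_assoc, h5, one_mul]
    _ = (PP K * FF K) * FF K ^ 3 := by rw [h3]; ring
    _ = FF K ^ 3 := by rw [h5, one_mul]

theorem norm_EE {ζ : K} (hζ : IsPrimitiveRoot ζ 5) (m : ℕ) :
    (EE K (5 * m) * rescale ζ (EE K (5 * m)) * rescale (ζ ^ 2) (EE K (5 * m)) *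
      rescale (ζ ^ 3) (EE K (5 * m)) * rescale (ζ ^ 4) (EE K (5 * m))) *
      expand 25 (by norm_num) (EE K m) =
    expand 5 (by norm_num) (EE K (5 * m)) * expand 5 (by norm_num) (EE K m) ^ 5 := by
  have hw : (1 : K⟦X⟧) + C ζ + C ζ ^ 2 + C ζ ^ 3 + C ζ ^ 4 = 0 := by
    have h := hζ.geom_sum_eq_zero (by norm_num)
    simp only [Finset.sum_range_succ, Finset.sum_range_zero] at h
    have := congrArg (C (R := K)) h
    simpa using this
  have hw5 : (C ζ : K⟦X⟧) ^ 5 = 1 := by rw [← map_pow, hζ.pow_eq_one, map_one]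
  have hf : ∀ k r : ℕ, 0 < r → r < 5 → k % 5 = r → 
      (1 - X ^ k) * rescale ζ (1 - X ^ k) * rescale (ζ ^ 2) (1 - X ^ k) *
      rescale (ζ ^ 3) (1 - X ^ k) * rescale (ζ ^ 4) (1 - X ^ k) = (1 : K⟦X⟧) - X ^ (5 * k) := by
    intro k r h0 h5 hr
    have hk : (C ζ : K⟦X⟧) ^ k = C ζ ^ r := by
      conv_lhs => rw [← Nat.div_add_mod k 5, hr, pow_add, pow_mul, hw5, one_pow, one_mul]
    have hwk : (1 : K⟦X⟧) + C ζ ^ k + (C ζ ^ k) ^ 2 + (C ζ ^ k) ^ 3 + (C ζ ^ k) ^ 4 = 0 := by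
      rw [hk]
      clear hk hr
      interval_cases r <;> grind
    have := norm_lin (C ζ ^ k) (X ^ k : K⟦X⟧) hwk
    rw [mul_comm 5 k, pow_mul, ← this]
    simp only [map_sub, map_one, map_pow, rescale_X, mul_pow]
    ring
  have hf0 : ∀ j : ℕ,
      (1 - X ^ (5 * j)) * rescale ζ (1 - X ^ (5 * j)) * rescale (ζ ^ 2) (1 - X ^ (5 * j)) *
      rescale (ζ ^ 3) (1 - X ^ (5 * j)) * rescale (ζ ^ 4) (1 - X ^ (5 * j)) =
        ((1 : K⟦X⟧) - X ^ (5 * j)) ^ 5 := by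
    intro j
    have : ∀ i : ℕ, rescale (ζ ^ i) (1 - X ^ (5 * j)) = (1 : K⟦X⟧) - X ^ (5 * j) := by
      intro i
      simp only [map_sub, map_one, map_pow, rescale_X, mul_pow]
      rw [← pow_mul, show i * (5 * j) = 5 * (i * j) by ring, pow_mul, hw5, one_pow, one_mul]
    have h1 := this 1
    rw [pow_one] at h1
    rw [h1, this, this, this]
    ring
  have hE : ∀ n, EE K (n + 1) = EE K n * (1 - X ^ (n + 1)) := fun n => by
    simp [EE, Finset.prod_range_succ]
  have hx : ∀ (k : ℕ) (hk : k ≠ 0) (j : ℕ), expand k hk ((1 : K⟦X⟧) - X ^ j) = 1 - X ^ (k * j) :=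
    fun k hk j => by simp [pow_mul]
  induction m with
  | zero => simp [EE]
  | succ m ih =>
    have e : EE K (5 * (m + 1)) = EE K (5 * m) * (1 - X ^ (5 * m + 1)) * (1 - X ^ (5 * m + 2)) *
        (1 - X ^ (5 * m + 3)) * (1 - X ^ (5 * m + 4)) * (1 - X ^ (5 * (m + 1))) := by
      rw [show 5 * (m + 1) = 5 * m + 1 + 1 + 1 + 1 + 1 by ring, hE, hE, hE, hE, hE]
    have a1 := hf (5 * m + 1) 1 (by norm_num) (by norm_num) (by omega)
    have a2 := hf (5 * m + 2) 2 (by norm_num) (by norm_num) (by omega)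
    have a3 := hf (5 * m + 3) 3 (by norm_num) (by norm_num) (by omega)
    have a4 := hf (5 * m + 4) 4 (by norm_num) (by norm_num) (by omega)
    have a5 := hf0 (m + 1)
    rw [e, hE m]
    simp only [map_mul (rescale _), map_mul (expand _ _), hx]
    rw [← a1, ← a2, ← a3, ← a4, mul_pow, ← a5]
    have e25 : 25 * (m + 1) = 5 * (5 * (m + 1)) := by ring
    rw [e25]
    linear_combination (exp := 1) ((1 - X ^ (5 * m + 1)) * rescale ζ (1 - X ^ (5 * m + 1)) *
      rescale (ζ ^ 2) (1 - X ^ (5 * m + 1)) *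
      rescale (ζ ^ 3) (1 - X ^ (5 * m + 1)) * rescale (ζ ^ 4) (1 - X ^ (5 * m + 1))) *
      ((1 - X ^ (5 * m + 2)) * rescale ζ (1 - X ^ (5 * m + 2)) *
      rescale (ζ ^ 2) (1 - X ^ (5 * m + 2)) *
      rescale (ζ ^ 3) (1 - X ^ (5 * m + 2)) * rescale (ζ ^ 4) (1 - X ^ (5 * m + 2))) *
      ((1 - X ^ (5 * m + 3)) * rescale ζ (1 - X ^ (5 * m + 3)) *
      rescale (ζ ^ 2) (1 - X ^ (5 * m + 3)) *
      rescale (ζ ^ 3) (1 - X ^ (5 * m + 3)) * rescale (ζ ^ 4) (1 - X ^ (5 * m + 3))) *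
      ((1 - X ^ (5 * m + 4)) * rescale ζ (1 - X ^ (5 * m + 4)) *
      rescale (ζ ^ 2) (1 - X ^ (5 * m + 4)) *
      rescale (ζ ^ 3) (1 - X ^ (5 * m + 4)) * rescale (ζ ^ 4) (1 - X ^ (5 * m + 4))) *
      ((1 - X ^ (5 * (m + 1))) * rescale ζ (1 - X ^ (5 * (m + 1))) *
      rescale (ζ ^ 2) (1 - X ^ (5 * (m + 1))) *
      rescale (ζ ^ 3) (1 - X ^ (5 * (m + 1))) * rescale (ζ ^ 4) (1 - X ^ (5 * (m + 1)))) *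
      (1 - X ^ (5 * (5 * (m + 1)))) * ih

theorem norm_FF {ζ : K} (hζ : IsPrimitiveRoot ζ 5) :
    (FF K * rescale ζ (FF K) * rescale (ζ ^ 2) (FF K) *
      rescale (ζ ^ 3) (FF K) * rescale (ζ ^ 4) (FF K)) *
      expand 25 (by norm_num) (FF K) = expand 5 (by norm_num) (FF K) ^ 6 := by
  have t5 : Tendsto (fun m : ℕ => 5 * m) atTop atTop :=
    tendsto_atTop_mono (fun n => by simp only [id]; omega) tendsto_id
  have h5 := (lim_EE (K := K)).comp t5
  have h1 := ((((h5.mul (h5.rescale ζ)).mul (h5.rescale (ζ ^ 2))).mul (h5.rescale (ζ ^ 3))).mul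
    (h5.rescale (ζ ^ 4))).mul ((lim_EE (K := K)).expand 25 (by norm_num))
  have h2 := (h5.expand 5 (by norm_num)).mul (((lim_EE (K := K)).expand 5 (by norm_num)).pow 5)
  refine h1.unique ?_
  convert h2 using 2 with m
  · exact norm_EE hζ m
  · ring

theorem FF_supp {d : ℕ} (h : coeff d (FF K) ≠ 0) : ∃ k : ℤ, pentagonal k = d := by
  by_contra hc
  exact h (coeff_pentagonalSeries_eq_zero K (by simpa using hc))

theorem coeff_FF (k : ℤ) : coeff (pentagonal k) (FF K) = 1 := by
  rw [FF, coeff_pentagonalSeries_pentagonal]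
  rcases Int.even_or_odd k with h | h
  · simp [Int.negOnePow_even k h]
  · have h2 : (2 : K) = 0 := by exact_mod_cast CharP.cast_eq_zero K 2
    simp [Int.negOnePow_odd k h]
    linear_combination -h2

/-- residue class part mod 5 -/
noncomputable def cls (r : ℕ) (φ : K⟦X⟧) : K⟦X⟧ := mk fun n => if n % 5 = r then coeff n φ else 0

/-- supported on a residue class mod 5 -/
def Sup (r : ℕ) (φ : K⟦X⟧) : Prop := ∀ n, coeff n φ ≠ 0 → n % 5 = r % 5

end Aux

section Aux
variable {K : Type*} [Field K]

theorem cls_add (r : ℕ) (φ ψ : K⟦X⟧) : cls r (φ + ψ) = cls r φ + cls r ψ := by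
  ext n
  simp only [cls, coeff_mk, map_add]
  split_ifs <;> simp

theorem cls_of_sup {r s : ℕ} {φ : K⟦X⟧} (h : Sup s φ) :
    cls r φ = if s % 5 = r then φ else 0 := by
  ext n
  by_cases hn : coeff n φ = 0
  · simp only [cls, coeff_mk, hn]
    split_ifs <;> simp [hn]
  · simp only [cls, coeff_mk, h n hn]
    split_ifs <;> simp

theorem sup_cls {r : ℕ} (hr : r < 5) (φ : K⟦X⟧) : Sup r (cls r φ) := by
  intro n hn
  simp only [cls, coeff_mk] at hn
  by_contra hc
  rw [if_neg (by omega)] at hn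
  exact hn rfl

theorem Sup.mul {r s : ℕ} {φ ψ : K⟦X⟧} (h1 : Sup r φ) (h2 : Sup s ψ) : Sup (r + s) (φ * ψ) := by
  intro n hn
  rw [coeff_mul] at hn
  obtain ⟨p, hp, hne⟩ := Finset.exists_ne_zero_of_sum_ne_zero hn
  have := Finset.HasAntidiagonal.mem_antidiagonal.1 hp
  have e1 := h1 p.1 (left_ne_zero_of_mul hne)
  have e2 := h2 p.2 (right_ne_zero_of_mul hne)
  omega

theorem Sup.add {r : ℕ} {φ ψ : K⟦X⟧} (h1 : Sup r φ) (h2 : Sup r ψ) : Sup r (φ + ψ) := by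
  intro n hn
  by_cases h : coeff n φ = 0
  · exact h2 n (by simpa [h] using hn)
  · exact h1 n h

theorem Sup.congr {r : ℕ} (s : ℕ) {φ : K⟦X⟧} (h1 : Sup r φ) (h : r % 5 = s % 5) : Sup s φ :=
  fun n hn => (h1 n hn).trans h

theorem sup_one : Sup 0 (1 : K⟦X⟧) := by
  intro n hn
  rw [coeff_one] at hn
  split_ifs at hn with h
  · simp [h]
  · exact absurd rfl hn

theorem Sup.pow {r : ℕ} {φ : K⟦X⟧} (h1 : Sup r φ) (k : ℕ) : Sup (k * r) (φ ^ k) := by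
  induction k with
  | zero => simpa using sup_one
  | succ k ih => rw [pow_succ]; exact (ih.mul h1).congr _ (by ring_nf)

theorem sup_expand (φ : K⟦X⟧) : Sup 0 (expand 5 (by norm_num) φ) := by
  intro n hn
  rw [coeff_expand] at hn
  split_ifs at hn with h
  · omega
  · exact absurd rfl hn

theorem sup_X : Sup 1 (X : K⟦X⟧) := by
  intro n hn
  rw [coeff_X] at hn
  split_ifs at hn with h
  · simp [h]
  · exact absurd rfl hn

theorem cls_mul {r : ℕ} (φ : K⟦X⟧) {ψ : K⟦X⟧} (h : Sup 0 ψ) : cls r (φ * ψ) = cls r φ * ψ := by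
  ext n
  simp only [cls, coeff_mk, coeff_mul]
  by_cases hn : n % 5 = r
  · rw [if_pos hn]
    refine Finset.sum_congr rfl fun p hp => ?_
    have := Finset.HasAntidiagonal.mem_antidiagonal.1 hp
    by_cases h2 : coeff p.2 ψ = 0
    · simp [h2]
    · have := h _ h2
      rw [if_pos (by omega)]
  · rw [if_neg hn]
    symm
    refine Finset.sum_eq_zero fun p hp => ?_
    have := Finset.HasAntidiagonal.mem_antidiagonal.1 hp
    by_cases h2 : coeff p.2 ψ = 0
    · simp [h2]
    · have := h _ h2
      rw [if_neg (by omega), zero_mul]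

theorem cls_X_mul (φ : K⟦X⟧) : cls 0 (X * φ) = X * cls 4 φ := by
  ext n
  rcases n with _ | n
  · simp [cls]
  · simp only [cls, coeff_mk, coeff_succ_X_mul]
    by_cases h : n % 5 = 4
    · rw [if_pos (by omega), if_pos h]
    · rw [if_neg (by omega), if_neg h]

theorem coeff_of_cls {r : ℕ} (φ : K⟦X⟧) {n : ℕ} (h : n % 5 = r) :
    coeff n φ = coeff n (cls r φ) := by
  simp [cls, h]

theorem coeff_of_cls4 {φ ψ : K⟦X⟧} (h : cls 4 φ = X ^ 4 * expand 5 (by norm_num) ψ) (n : ℕ) :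
    coeff (5 * n + 4) φ = coeff n ψ := by
  rw [coeff_of_cls φ (r := 4) (by omega), h, coeff_X_pow_mul, coeff_expand_mul]

theorem rescale_of_sup {ζ : K} (hζ : ζ ^ 5 = 1) {r : ℕ} {φ : K⟦X⟧} (h : Sup r φ) :
    rescale ζ φ = C ζ ^ r * φ := by
  ext n
  rw [coeff_rescale, ← map_pow, coeff_C_mul]
  by_cases hn : coeff n φ = 0
  · simp [hn]
  · have e : ζ ^ n = ζ ^ r := by
      rw [← Nat.div_add_mod n 5, pow_add, pow_mul, hζ, h n hn]
      conv_rhs => rw [← Nat.div_add_mod r 5, pow_add, pow_mul, hζ]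
      simp
    rw [e]

theorem pent_mod (k : ℤ) : pentagonal k % 5 = 0 ∨ pentagonal k % 5 = 1 ∧ k % 5 = 1 ∨
    pentagonal k % 5 = 2 := by
  have h := two_mul_natCast_pentagonal k
  have h3 : (2 * (pentagonal k : ℤ)) % 5 = (k % 5) * (3 * (k % 5) - 1) % 5 := by
    rw [h]; simp [Int.mul_emod, Int.sub_emod]
  have h4 : 0 ≤ k % 5 ∧ k % 5 < 5 := by omega
  obtain ⟨h5, h6⟩ := h4
  generalize hr : k % 5 = r at *
  interval_cases r <;> omega

theorem FF_split [CharP K 2] : FF K = cls 0 (FF K) + cls 1 (FF K) + cls 2 (FF K) := by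
  ext n
  simp only [cls, map_add, coeff_mk]
  by_cases hn : coeff n (FF K) = 0
  · simp [hn]
  · obtain ⟨k, hk⟩ := FF_supp hn
    have := pent_mod k
    rw [hk] at this
    rcases this with h | h | h
    · simp [h]
    · simp [h.1]
    · simp [h]

theorem pent_five (l : ℤ) : pentagonal (5 * l + 1) = 25 * pentagonal (-l) + 1 := by
  have h1 := two_mul_natCast_pentagonal (5 * l + 1)
  have h2 := two_mul_natCast_pentagonal (-l)
  zify
  linarith

theorem expand_expand (p q : ℕ) (hp : p ≠ 0) (hq : q ≠ 0) (hpq : p * q ≠ 0) (φ : K⟦X⟧) :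
    expand p hp (expand q hq φ) = expand (p * q) hpq φ := by
  rw [expand_mul]

theorem cls_one [CharP K 2] : cls 1 (FF K) = X * expand 25 (by norm_num) (FF K) := by
  ext n
  rcases n with _ | n
  · simp [cls]
  rw [coeff_succ_X_mul, coeff_expand]
  simp only [cls, coeff_mk]
  by_cases hn : coeff (n + 1) (FF K) = 0
  · rw [hn]
    simp only [ite_self]
    split_ifs with h
    · by_contra hc
      obtain ⟨l, hl⟩ := FF_supp (Ne.symm hc)
      have := pent_five (-l)
      rw [neg_neg, hl, Nat.mul_div_cancel' h] at this
      rw [← this, coeff_FF] at hn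
      exact one_ne_zero hn
    · rfl
  · obtain ⟨k, hk⟩ := FF_supp hn
    have hm := pent_mod k
    rw [hk] at hm
    split_ifs with h1 h2 h2
    · have hkm : k % 5 = 1 := by omega
      obtain ⟨l, rfl⟩ : ∃ l, k = 5 * l + 1 := ⟨k / 5, by omega⟩
      have := pent_five l
      have e : n / 25 = pentagonal (-l) := by omega
      rw [e, coeff_FF, ← hk, coeff_FF]
    · exfalso
      have hkm : k % 5 = 1 := by omega
      obtain ⟨l, rfl⟩ : ∃ l, k = 5 * l + 1 := ⟨k / 5, by omega⟩
      have := pent_five l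
      omega
    · exfalso
      omega
    · rfl

theorem tri_mod (k : ℕ) : (k * (k + 1) / 2) % 5 ≠ 2 := by
  have h : 2 * (k * (k + 1) / 2) = k * (k + 1) :=
    Nat.mul_div_cancel' (Nat.even_mul_succ_self k).two_dvd
  have h3 : (2 * (k * (k + 1) / 2)) % 5 = (k % 5) * (k % 5 + 1) % 5 := by
    rw [h]; simp [Nat.mul_mod, Nat.add_mod]
  have h4 : k % 5 < 5 := by omega
  generalize hr : k % 5 = r at *
  generalize k * (k + 1) / 2 = t at *
  interval_cases r <;> omega

theorem cls_cube [CharP K 2] : cls 2 (FF K ^ 3) = 0 := by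
  ext n
  simp only [cls, coeff_mk, ← psi_eq, map_zero]
  split_ifs with h
  · by_contra hc
    obtain ⟨k, hk⟩ := psi_supp hc
    exact tri_mod k (hk ▸ h)
  · rfl

theorem constFF : constantCoeff (FF K) = 1 := by
  have := coeff_pentagonalSeries_pentagonal K 0
  simpa [FF, pentagonal] using this

theorem abc [CharP K 2] {ζ : K} (hζ : IsPrimitiveRoot ζ 5) : ∃ a b c : K⟦X⟧, FF K = a + b + c ∧
    Sup 0 a ∧ Sup 1 b ∧ Sup 2 c ∧
    b = X * expand 25 (by norm_num) (FF K) ∧ a * c = b ^ 2 ∧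
    (a ^ 5 + b ^ 5 + c ^ 5) * expand 25 (by norm_num) (FF K) =
      expand 5 (by norm_num) (FF K) ^ 6 := by
  have h2 := two_zero K
  obtain ⟨a, ha⟩ : ∃ a, a = cls 0 (FF K) := ⟨_, rfl⟩
  obtain ⟨b, hb⟩ : ∃ b, b = cls 1 (FF K) := ⟨_, rfl⟩
  obtain ⟨c, hc⟩ : ∃ c, c = cls 2 (FF K) := ⟨_, rfl⟩
  have sa : Sup 0 a := ha ▸ sup_cls (by norm_num) _
  have sb : Sup 1 b := hb ▸ sup_cls (by norm_num) _
  have sc : Sup 2 c := hc ▸ sup_cls (by norm_num) _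
  have hF : FF K = a + b + c := by rw [ha, hb, hc]; exact FF_split
  have hac : a * c = b ^ 2 := by
    have h3 := cls_cube (K := K)
    have e : FF K ^ 3 = (a ^ 3 + b * c ^ 2) + (a ^ 2 * b + c ^ 3) + (a ^ 2 * c + a * b ^ 2)
        + b ^ 3 + (a * c ^ 2 + b ^ 2 * c) := by
      rw [hF]; grind
    rw [e] at h3
    simp only [cls_add, cls_of_sup (sa.pow 3), cls_of_sup (sb.mul (sc.pow 2)),
      cls_of_sup ((sa.pow 2).mul sb), cls_of_sup (sc.pow 3), cls_of_sup ((sa.pow 2).mul sc),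
      cls_of_sup (sa.mul (sb.pow 2)), cls_of_sup (sb.pow 3), cls_of_sup (sa.mul (sc.pow 2)),
      cls_of_sup ((sb.pow 2).mul sc)] at h3
    norm_num at h3
    have ha0 : a ≠ 0 := by
      intro h0
      have := constFF (K := K)
      rw [← coeff_zero_eq_constantCoeff_apply, coeff_of_cls (r := 0) _ (by norm_num), ← ha, h0]
        at this
      simp at this
    apply mul_left_cancel₀ ha0
    linear_combination h3 - a * b ^ 2 * h2
  refine ⟨a, b, c, hF, sa, sb, sc, hb.trans cls_one, hac, ?_⟩
  rw [← norm_FF hζ]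
  congr 1
  have hw : (1 : K⟦X⟧) + C ζ + C ζ ^ 2 + C ζ ^ 3 + C ζ ^ 4 = 0 := by
    have h := hζ.geom_sum_eq_zero (by norm_num)
    simp only [Finset.sum_range_succ, Finset.sum_range_zero] at h
    have := congrArg (C (R := K)) h
    simpa using this
  have hr : ∀ i : ℕ, rescale (ζ ^ i) (FF K) = a + C ζ ^ i * b + C ζ ^ (2 * i) * c := by
    intro i
    have h5 : (ζ ^ i) ^ 5 = 1 := by rw [← pow_mul, mul_comm, pow_mul, hζ.pow_eq_one, one_pow]
    rw [hF, map_add, map_add, rescale_of_sup h5 sa, rescale_of_sup h5 sb, rescale_of_sup h5 sc,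
      map_pow]
    ring
  have h1 := hr 1
  rw [pow_one] at h1
  rw [h1, hr 2, hr 3, hr 4, hF]
  have := norm_quad (C ζ) a b c hw
  linear_combination -this - 5 * a * b * c * hac

end Aux

section Aux
variable {K : Type*} [Field K] [CharP K 2]

theorem alg1 {R : Type*} [CommRing R] (a b c X h g : R) (h2 : (2 : R) = 0) (hac : a * c = b ^ 2)
    (hb : b = X * h) (hN : (a ^ 5 + b ^ 5 + c ^ 5) * h = g ^ 6) :
    ((a + b + c) ^ 6 + X * g ^ 6 + (a + b + c) * g) * h
      = (a + b + c) * (g ^ 6 + X ^ 5 * h ^ 6 + g * h) := by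
  have h1 : (a + b + c) ^ 6 + b * (a ^ 5 + b ^ 5 + c ^ 5)
      = (a + b + c) * (a ^ 5 + b ^ 5 + c ^ 5) + (a + b + c) * b ^ 5 := by
    clear hN hb
    grind
  rw [← hN]
  subst hb
  linear_combination h * h1

theorem alg2 {R : Type*} [CommRing R] (a b c : R) (h2 : (2 : R) = 0) (hac : a * c = b ^ 2) :
    (a ^ 4 + a ^ 3 * b + a * b ^ 3 + b ^ 4 + b ^ 3 * c + b * c ^ 3 + c ^ 4) * (a + b + c)
      = a ^ 5 + b ^ 5 + c ^ 5 := by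
  grind

theorem alg3 {R : Type*} [CommRing R] (a b c : R) (h2 : (2 : R) = 0) (hac : a * c = b ^ 2) :
    (a ^ 4 + b ^ 3 * c) ^ 5 + (a ^ 3 * b) ^ 5 + (b * c ^ 3) ^ 5 + (a * b ^ 3 + c ^ 4) ^ 5
      + (b ^ 4) ^ 5 = (a ^ 5 + b ^ 5 + c ^ 5) ^ 4 + (a ^ 5 + b ^ 5 + c ^ 5) * b ^ 15 + b ^ 20 := by
  grind

theorem alg4 {R : Type*} [CommRing R] (F g X : R) (h2 : (2 : R) = 0)
    (hK : F ^ 6 + X * g ^ 6 = F * g) :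
    X ^ 2 * F ^ 23 * g ^ 12 + X ^ 4 * g ^ 25 * F ^ 6 + X ^ 5 * g ^ 31 + F ^ 5 * g ^ 6 = F ^ 35 := by
  obtain ⟨u, hu⟩ : ∃ u, u = X * g ^ 6 := ⟨_, rfl⟩
  rw [← hu] at hK
  have e : X ^ 2 * F ^ 23 * g ^ 12 + X ^ 4 * g ^ 25 * F ^ 6 + X ^ 5 * g ^ 31
      = F ^ 23 * u ^ 2 + u ^ 4 * g * F ^ 6 + u ^ 5 * g := by rw [hu]; ring
  rw [e]
  have hu' : u = F * g + F ^ 6 := by linear_combination hK - F ^ 6 * h2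
  have h3 : u ^ 2 = F ^ 2 * g ^ 2 + F ^ 12 := by
    rw [hu']; linear_combination F * g * F ^ 6 * h2
  have h4 : u ^ 4 = F ^ 4 * g ^ 4 + F ^ 24 := by
    have : u ^ 4 = (u ^ 2) ^ 2 := by ring
    rw [this, h3]; linear_combination F ^ 2 * g ^ 2 * F ^ 12 * h2
  have h5 : u ^ 5 * g = u ^ 4 * g * F ^ 6 + u ^ 4 * g * (F * g) := by
    linear_combination u ^ 4 * g * hK - u ^ 4 * g * F ^ 6 * h2
  rw [h5, h3, h4]
  linear_combination ((F ^ 4 * g ^ 4 + F ^ 24) * g * F ^ 6 + F ^ 25 * g ^ 2 + F ^ 5 * g ^ 6) * h2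

theorem expand_five_g : expand 5 (by norm_num) (expand 5 (by norm_num) (FF K))
    = expand 25 (by norm_num) (FF K) :=
  expand_expand 5 5 _ _ (by norm_num) _

theorem KK {ζ : K} (hζ : IsPrimitiveRoot ζ 5) :
    FF K ^ 6 + X * expand 5 (by norm_num) (FF K) ^ 6 = FF K * expand 5 (by norm_num) (FF K) := by
  have h2 := two_zero K
  obtain ⟨a, b, c, hF, sa, sb, sc, hb, hac, hN⟩ := abc hζ
  obtain ⟨G, hG⟩ : ∃ G, G = FF K ^ 6 + X * expand 5 (by norm_num) (FF K) ^ 6 +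
    FF K * expand 5 (by norm_num) (FF K) := ⟨_, rfl⟩
  have h5 : expand 5 (by norm_num) G = expand 5 (by norm_num) (FF K) ^ 6 +
      X ^ 5 * expand 25 (by norm_num) (FF K) ^ 6 +
      expand 5 (by norm_num) (FF K) * expand 25 (by norm_num) (FF K) := by
    rw [hG, map_add, map_add, map_mul, map_mul, map_pow, map_pow, expand_five_g, expand_X]
  have h1 := alg1 a b c X _ _ h2 hac hb hN
  rw [← hF, ← h5, ← hG] at h1
  have hF0 : (FF K).order = 0 := by
    apply order_zero_of_unit
    rw [isUnit_iff_constantCoeff, constFF]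
    exact isUnit_one
  have h6 := congrArg order h1
  rw [order_mul, order_mul, order_expand, order_expand, hF0] at h6
  have h0 : constantCoeff G = 0 := by
    rw [hG]
    simp only [map_add, map_mul, map_pow, constFF, constantCoeff_expand, constantCoeff_X]
    have : (2 : K) = 0 := CharP.ofNat_eq_zero K 2
    linear_combination this
  have hG0 : G = 0 := by
    by_contra hne
    have hfin := order_ne_zero_iff_constCoeff_eq_zero.2 h0
    have ht : G.order ≠ ⊤ := by rwa [Ne, order_eq_top]
    lift G.order to ℕ using ht with n
    simp only [nsmul_eq_mul, mul_zero, add_zero, zero_add] at h6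
    norm_cast at h6 hfin
    omega
  rw [hG0] at hG
  linear_combination -hG - FF K * expand 5 (by norm_num) (FF K) * h2

theorem BB200 : BB K 200 = PP K * expand 25 (by norm_num) (FF K) ^ 8 := by
  have hI := PP_mul (K := K)
  have h1 := BB_mul (K := K) 200 (by norm_num)
  have h2 : expand 200 (by norm_num) (FF K) = expand 25 (by norm_num) (FF K) ^ 8 := by
    rw [← expand_expand 25 8 (by norm_num) (by norm_num) (by norm_num),
      ← expand_expand 2 4 (by norm_num) (by norm_num) (by norm_num),
      ← expand_expand 2 2 (by norm_num) (by norm_num) (by norm_num)]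
    rw [expand_two_FF, map_pow, expand_two_FF, ← pow_mul, map_pow, expand_two_FF, ← pow_mul, map_pow]
  rw [← h2, ← h1]
  linear_combination (-BB K 200) * hI

/-- First section of the 200-regular generating function. -/
noncomputable def B1 (K : Type*) [Field K] : K⟦X⟧ := expand 5 (by norm_num) (FF K) ^ 13 * PP K ^ 6

/-- Second section of the 200-regular generating function. -/
noncomputable def B2 (K : Type*) [Field K] : K⟦X⟧ :=
  FF K * expand 5 (by norm_num) (FF K) ^ 6
  + X ^ 2 * expand 5 (by norm_num) (FF K) ^ 19 * PP K ^ 16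
  + X ^ 3 * expand 5 (by norm_num) (FF K) ^ 25 * PP K ^ 22

theorem JJ : expand 5 (by norm_num) (PP K) * expand 5 (by norm_num) (FF K) = 1 := by
  rw [← map_mul, PP_mul, map_one]

theorem sup_h (k : ℕ) : Sup 0 (expand 25 (by norm_num) (FF K) ^ k) := by
  rw [← expand_five_g, ← map_pow]; exact sup_expand _

theorem cls4_BB {ζ : K} (hζ : IsPrimitiveRoot ζ 5) :
    cls 4 (BB K 200) = X ^ 4 * expand 5 (by norm_num) (B1 K) := by
  have h2 := two_zero K
  obtain ⟨a, b, c, hF, sa, sb, sc, hb, hac, hN⟩ := abc hζ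
  have hP := alg2 a b c h2 hac
  have hI := PP_mul (K := K)
  have hJ := JJ (K := K)
  rw [BB200, cls_mul _ (sup_h 8), B1, map_mul, map_pow, map_pow, expand_five_g]
  have sN : Sup 0 (a ^ 5 + b ^ 5 + c ^ 5) := ((sa.pow 5).add ((sb.pow 5).congr _ (by norm_num))).add
    ((sc.pow 5).congr _ (by norm_num))
  have e1 : PP K * (a ^ 5 + b ^ 5 + c ^ 5) =
      a ^ 4 + a ^ 3 * b + a * b ^ 3 + b ^ 4 + b ^ 3 * c + b * c ^ 3 + c ^ 4 := by
    rw [← hP, ← hF]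
    linear_combination (a ^ 4 + a ^ 3 * b + a * b ^ 3 + b ^ 4 + b ^ 3 * c + b * c ^ 3 + c ^ 4) * hI
  have e2 : cls 4 (PP K) * (a ^ 5 + b ^ 5 + c ^ 5) = b ^ 4 := by
    rw [← cls_mul _ sN, e1]
    simp only [cls_add, cls_of_sup (sa.pow 4), cls_of_sup ((sa.pow 3).mul sb),
      cls_of_sup (sa.mul (sb.pow 3)), cls_of_sup (sb.pow 4), cls_of_sup ((sb.pow 3).mul sc),
      cls_of_sup (sb.mul (sc.pow 3)), cls_of_sup (sc.pow 4)]
    norm_num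
  generalize expand 5 (by norm_num) (PP K) = J at *
  generalize expand 5 (by norm_num) (FF K) = g at *
  generalize expand 25 (by norm_num) (FF K) = h at *
  have hJ6 : J ^ 6 * g ^ 6 = 1 := by rw [← mul_pow, hJ, one_pow]
  rw [hb] at e2 hN
  linear_combination (-cls 4 (PP K) * h ^ 8) * hJ6 + h ^ 9 * J ^ 6 * e2
    - cls 4 (PP K) * h ^ 8 * J ^ 6 * hN

theorem alg5 {R : Type*} [CommRing R] (p q r s t : R) (h2 : (2 : R) = 0) :
    (p + q + r + s + t) ^ 4 = p ^ 4 + q ^ 4 + r ^ 4 + s ^ 4 + t ^ 4 := by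
  grind

theorem cls0_pow5 {p q r s t : K⟦X⟧} (sp : Sup 0 p) (sq : Sup 1 q) (sr : Sup 2 r) (ss : Sup 3 s)
    (st : Sup 4 t) : cls 0 ((p + q + r + s + t) ^ 5) = p ^ 5 + q ^ 5 + r ^ 5 + s ^ 5 + t ^ 5 := by
  have h2 := two_zero K
  rw [pow_succ, alg5 p q r s t h2]
  simp only [add_mul, mul_add, cls_add]
  simp only [cls_of_sup ((sp.pow 4).mul sp), cls_of_sup ((sp.pow 4).mul sq),
    cls_of_sup ((sp.pow 4).mul sr), cls_of_sup ((sp.pow 4).mul ss), cls_of_sup ((sp.pow 4).mul st),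
    cls_of_sup ((sq.pow 4).mul sp), cls_of_sup ((sq.pow 4).mul sq),
    cls_of_sup ((sq.pow 4).mul sr), cls_of_sup ((sq.pow 4).mul ss), cls_of_sup ((sq.pow 4).mul st),
    cls_of_sup ((sr.pow 4).mul sp), cls_of_sup ((sr.pow 4).mul sq),
    cls_of_sup ((sr.pow 4).mul sr), cls_of_sup ((sr.pow 4).mul ss), cls_of_sup ((sr.pow 4).mul st),
    cls_of_sup ((ss.pow 4).mul sp), cls_of_sup ((ss.pow 4).mul sq),
    cls_of_sup ((ss.pow 4).mul sr), cls_of_sup ((ss.pow 4).mul ss), cls_of_sup ((ss.pow 4).mul st),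
    cls_of_sup ((st.pow 4).mul sp), cls_of_sup ((st.pow 4).mul sq),
    cls_of_sup ((st.pow 4).mul sr), cls_of_sup ((st.pow 4).mul ss), cls_of_sup ((st.pow 4).mul st)]
  norm_num
  ring

theorem cls4_B1 {ζ : K} (hζ : IsPrimitiveRoot ζ 5) :
    cls 4 (B1 K) = X ^ 4 * expand 5 (by norm_num) (B2 K) := by
  have h2 := two_zero K
  have hK := KK hζ
  obtain ⟨a, b, c, hF, sa, sb, sc, hb, hac, hN⟩ := abc hζ
  have hP := alg2 a b c h2 hac
  have hI := PP_mul (K := K)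
  have hJ := JJ (K := K)
  have sN : Sup 0 ((a ^ 5 + b ^ 5 + c ^ 5) ^ 5) :=
    (((sa.pow 5).add ((sb.pow 5).congr _ (by norm_num))).add
    ((sc.pow 5).congr _ (by norm_num))).pow 5
  have e1 : PP K * (a ^ 5 + b ^ 5 + c ^ 5) =
      (a ^ 4 + b ^ 3 * c) + a ^ 3 * b + b * c ^ 3 + (a * b ^ 3 + c ^ 4) + b ^ 4 := by
    rw [← hP, ← hF]
    linear_combination (a ^ 4 + a ^ 3 * b + a * b ^ 3 + b ^ 4 + b ^ 3 * c + b * c ^ 3 + c ^ 4) * hI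
  have e2 : cls 0 (PP K ^ 5) * (a ^ 5 + b ^ 5 + c ^ 5) ^ 5 =
      (a ^ 5 + b ^ 5 + c ^ 5) ^ 4 + (a ^ 5 + b ^ 5 + c ^ 5) * b ^ 15 + b ^ 20 := by
    rw [← cls_mul _ sN, ← mul_pow, e1, cls0_pow5, alg3 a b c h2 hac]
    · exact (sa.pow 4).add (((sb.pow 3).mul sc).congr _ (by norm_num))
    · exact ((sa.pow 3).mul sb).congr _ (by norm_num)
    · exact (sb.mul (sc.pow 3)).congr _ (by norm_num)
    · exact ((sa.mul (sb.pow 3)).congr _ (by norm_num)).add ((sc.pow 4).congr _ (by norm_num))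
    · exact (sb.pow 4).congr _ (by norm_num)
  have sg : ∀ k, Sup 0 (expand 5 (by norm_num) (FF K) ^ k) := by
    intro k; rw [← map_pow]; exact sup_expand _
  have e3 : X * B1 K = PP K ^ 5 * expand 5 (by norm_num) (FF K) ^ 8
      + 1 * expand 5 (by norm_num) (FF K) ^ 7 := by
    rw [B1]
    generalize expand 5 (by norm_num) (FF K) = g at *
    have hI5 : PP K ^ 5 * FF K ^ 5 = 1 := by rw [← mul_pow, hI, one_pow]
    have hI6 : PP K ^ 6 * FF K ^ 6 = 1 := by rw [← mul_pow, hI, one_pow]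
    linear_combination g ^ 7 * PP K ^ 6 * hK - g ^ 7 * hI6 + PP K ^ 5 * g ^ 8 * hI - g ^ 7 * h2
  have e4 := congrArg (cls 0) e3
  rw [cls_X_mul, cls_add, cls_mul _ (sg 8), cls_mul _ (sg 7), cls_of_sup sup_one, if_pos (by norm_num)]
    at e4
  have hX : (X : K⟦X⟧) ≠ 0 := X_ne_zero
  apply mul_left_cancel₀ hX
  rw [e4, B2]
  simp only [map_add, map_mul, map_pow, expand_X, expand_five_g]
  have hK5 := congrArg (expand 5 (by norm_num)) hK
  simp only [map_add, map_mul, map_pow, expand_X, expand_five_g] at hK5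
  generalize expand 5 (by norm_num) (PP K) = J at *
  generalize expand 5 (by norm_num) (FF K) = g at *
  generalize expand 25 (by norm_num) (FF K) = h at *
  generalize cls 0 (PP K ^ 5) = W at *
  generalize a ^ 5 + b ^ 5 + c ^ 5 = N at *
  have q6 : J ^ 6 * g ^ 6 = 1 := by rw [← mul_pow, hJ, one_pow]
  have q8 : J ^ 8 * g ^ 8 = 1 := by rw [← mul_pow, hJ, one_pow]
  have hNJ : N * h * J ^ 6 = 1 := by rw [hN, mul_comm, q6]
  have hNJ4 : (N * h * J ^ 6) ^ 4 = 1 := by rw [hNJ, one_pow]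
  have hNJ5 : (N * h * J ^ 6) ^ 5 = 1 := by rw [hNJ, one_pow]
  have hW : W = h * J ^ 6 + X ^ 15 * h ^ 19 * J ^ 24 + X ^ 20 * h ^ 25 * J ^ 30 := by
    rw [hb] at e2
    linear_combination (-W) * hNJ5 + h ^ 5 * J ^ 30 * e2 + h * J ^ 6 * hNJ4
      + X ^ 15 * h ^ 19 * J ^ 24 * hNJ
  have hW8 : W * g ^ 8 = h * g ^ 2 + X ^ 15 * h ^ 19 * J ^ 16 + X ^ 20 * h ^ 25 * J ^ 22 := by
    rw [hW]
    linear_combination h * g ^ 2 * q6 + (X ^ 15 * h ^ 19 * J ^ 16 + X ^ 20 * h ^ 25 * J ^ 22) * q8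
  rw [hW8]
  linear_combination (-g) * hK5 + g ^ 7 * h2

theorem B2_eq {ζ : K} (hζ : IsPrimitiveRoot ζ 5) :
    X ^ 2 * B2 K + PP K ^ 17 = FF K ^ 13 * expand 5 (by norm_num) (PP K) ^ 6 := by
  have h2 := two_zero K
  have hK := KK hζ
  have hI := PP_mul (K := K)
  have hJ := JJ (K := K)
  rw [B2]
  generalize expand 5 (by norm_num) (PP K) = J at *
  generalize expand 5 (by norm_num) (FF K) = g at *
  have h4 := alg4 (FF K) g X h2 hK
  generalize FF K = F at *
  generalize PP K = I at *
  have q6 : J ^ 6 * g ^ 6 = 1 := by rw [← mul_pow, hJ, one_pow]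
  have i16 : I ^ 16 * F ^ 16 = 1 := by rw [← mul_pow, hI, one_pow]
  have i17 : I ^ 17 * F ^ 17 = 1 := by rw [← mul_pow, hI, one_pow]
  have i22 : I ^ 22 * F ^ 22 = 1 := by rw [← mul_pow, hI, one_pow]
  have h5 : I ^ 22 * F ^ 35 = F ^ 13 := by linear_combination F ^ 13 * i22
  have h6 : I ^ 22 * (X ^ 2 * F ^ 23 * g ^ 12 + X ^ 4 * g ^ 25 * F ^ 6 + X ^ 5 * g ^ 31
      + F ^ 5 * g ^ 6) * J ^ 6 = X ^ 2 * (F * g ^ 6 + X ^ 2 * g ^ 19 * I ^ 16 + X ^ 3 * g ^ 25 * I ^ 22)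
      + I ^ 17 := by
    have j5 : I ^ 5 * F ^ 5 = 1 := by rw [← mul_pow, hI, one_pow]
    have j6 : I ^ 6 * F ^ 6 = 1 := by rw [← mul_pow, hI, one_pow]
    have k1 : I ^ 22 * F ^ 23 = F := by linear_combination F * i22
    have k2 : I ^ 22 * F ^ 6 = I ^ 16 := by linear_combination I ^ 16 * j6
    have k3 : I ^ 22 * F ^ 5 = I ^ 17 := by linear_combination I ^ 17 * j5
    linear_combination X ^ 2 * g ^ 12 * J ^ 6 * k1 + X ^ 4 * g ^ 25 * J ^ 6 * k2
      + g ^ 6 * J ^ 6 * k3 + (X ^ 2 * F * g ^ 6 + X ^ 4 * g ^ 19 * I ^ 16 + X ^ 5 * g ^ 25 * I ^ 22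
        + I ^ 17) * q6
  rw [← h6, h4, h5]

theorem cls_F13 {a b c : K⟦X⟧} (sa : Sup 0 a) (sb : Sup 1 b) (sc : Sup 2 c) (hac : a * c = b ^ 2) :
    cls 2 ((a + b + c) ^ 13) = b ^ 2 * (a ^ 5 + b ^ 5 + c ^ 5) ^ 2 * a ∧
    cls 4 ((a + b + c) ^ 13) = b ^ 2 * (a ^ 5 + b ^ 5 + c ^ 5) ^ 2 * c := by
  have h2 := two_zero K
  have e4 : (a + b + c) ^ 4 = a ^ 4 + b ^ 4 + c ^ 4 := by
    have := alg5 a b c 0 0 h2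
    simpa using this
  have e8 : (a + b + c) ^ 8 = a ^ 8 + b ^ 8 + c ^ 8 := by
    have : (a + b + c) ^ 8 = ((a + b + c) ^ 4) ^ 2 := by ring
    rw [this, e4]
    linear_combination (a ^ 4 * b ^ 4 + a ^ 4 * c ^ 4 + b ^ 4 * c ^ 4) * h2
  have e : (a + b + c) ^ 13 = (a ^ 8 + b ^ 8 + c ^ 8) * ((a ^ 4 + b ^ 4 + c ^ 4) * (a + b + c)) := by
    rw [← e4, ← e8]; ring
  have key : ∀ r, cls r ((a + b + c) ^ 13) = cls r ((a ^ 8 + b ^ 8 + c ^ 8) * ((a ^ 4 + b ^ 4 + c ^ 4) * (a + b + c))) := fun r => by rw [e]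
  simp only [add_mul, mul_add, cls_add] at key
  simp only [
    cls_of_sup ((sa.pow 8).mul ((sa.pow 4).mul sa)),
    cls_of_sup ((sa.pow 8).mul ((sa.pow 4).mul sb)),
    cls_of_sup ((sa.pow 8).mul ((sa.pow 4).mul sc)),
    cls_of_sup ((sa.pow 8).mul ((sb.pow 4).mul sa)),
    cls_of_sup ((sa.pow 8).mul ((sb.pow 4).mul sb)),
    cls_of_sup ((sa.pow 8).mul ((sb.pow 4).mul sc)),
    cls_of_sup ((sa.pow 8).mul ((sc.pow 4).mul sa)),
    cls_of_sup ((sa.pow 8).mul ((sc.pow 4).mul sb)),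
    cls_of_sup ((sa.pow 8).mul ((sc.pow 4).mul sc)),
    cls_of_sup ((sb.pow 8).mul ((sa.pow 4).mul sa)),
    cls_of_sup ((sb.pow 8).mul ((sa.pow 4).mul sb)),
    cls_of_sup ((sb.pow 8).mul ((sa.pow 4).mul sc)),
    cls_of_sup ((sb.pow 8).mul ((sb.pow 4).mul sa)),
    cls_of_sup ((sb.pow 8).mul ((sb.pow 4).mul sb)),
    cls_of_sup ((sb.pow 8).mul ((sb.pow 4).mul sc)),
    cls_of_sup ((sb.pow 8).mul ((sc.pow 4).mul sa)),
    cls_of_sup ((sb.pow 8).mul ((sc.pow 4).mul sb)),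
    cls_of_sup ((sb.pow 8).mul ((sc.pow 4).mul sc)),
    cls_of_sup ((sc.pow 8).mul ((sa.pow 4).mul sa)),
    cls_of_sup ((sc.pow 8).mul ((sa.pow 4).mul sb)),
    cls_of_sup ((sc.pow 8).mul ((sa.pow 4).mul sc)),
    cls_of_sup ((sc.pow 8).mul ((sb.pow 4).mul sa)),
    cls_of_sup ((sc.pow 8).mul ((sb.pow 4).mul sb)),
    cls_of_sup ((sc.pow 8).mul ((sb.pow 4).mul sc)),
    cls_of_sup ((sc.pow 8).mul ((sc.pow 4).mul sa)),
    cls_of_sup ((sc.pow 8).mul ((sc.pow 4).mul sb)),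
    cls_of_sup ((sc.pow 8).mul ((sc.pow 4).mul sc))] at key
  constructor
  · rw [key 2]
    norm_num
    clear key e e4 e8
    grind
  · rw [key 4]
    norm_num
    clear key e e4 e8
    grind

theorem coeff_F13 {ζ : K} (hζ : IsPrimitiveRoot ζ 5) (M : ℕ) (hM : M % 5 = 0 ∨ M % 5 = 2) :
    coeff (M + 2) (FF K ^ 13 * expand 5 (by norm_num) (PP K) ^ 6)
      = coeff M (FF K * expand 5 (by norm_num) (FF K) ^ 6) := by
  obtain ⟨a, b, c, hF, sa, sb, sc, hb, hac, hN⟩ := abc hζ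
  have hJ := JJ (K := K)
  have sg : Sup 0 (expand 5 (by norm_num) (FF K) ^ 6) := by
    rw [← map_pow]; exact sup_expand _
  have sJ : Sup 0 (expand 5 (by norm_num) (PP K) ^ 6) := by
    rw [← map_pow]; exact sup_expand _
  obtain ⟨c2, c4⟩ := cls_F13 sa sb sc hac
  rw [← hF] at c2 c4
  have q6 : expand 5 (by norm_num) (PP K) ^ 6 * expand 5 (by norm_num) (FF K) ^ 6 = 1 := by
    rw [← mul_pow, hJ, one_pow]
  have hbN : b ^ 2 * (a ^ 5 + b ^ 5 + c ^ 5) ^ 2 * expand 5 (by norm_num) (PP K) ^ 6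
      = X ^ 2 * expand 5 (by norm_num) (FF K) ^ 6 := by
    generalize expand 5 (by norm_num) (PP K) = J at *
    generalize expand 5 (by norm_num) (FF K) = g at *
    generalize expand 25 (by norm_num) (FF K) = h at *
    generalize a ^ 5 + b ^ 5 + c ^ 5 = N at *
    rw [hb]
    linear_combination X ^ 2 * J ^ 6 * (N * h + g ^ 6) * hN + X ^ 2 * g ^ 6 * q6
  rcases hM with hM | hM
  · have f0 : cls 0 (FF K) = a := by
      rw [hF, cls_add, cls_add, cls_of_sup sa, cls_of_sup sb, cls_of_sup sc]; norm_num
    rw [coeff_of_cls (r := 2) _ (by omega), cls_mul _ sJ, c2, mul_right_comm, hbN, mul_assoc,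
      coeff_X_pow_mul, coeff_of_cls (r := 0) (FF K * _) hM, cls_mul _ sg, f0, mul_comm]
  · have f2 : cls 2 (FF K) = c := by
      rw [hF, cls_add, cls_add, cls_of_sup sa, cls_of_sup sb, cls_of_sup sc]; norm_num
    rw [coeff_of_cls (r := 4) _ (by omega), cls_mul _ sJ, c4, mul_right_comm, hbN, mul_assoc,
      coeff_X_pow_mul, coeff_of_cls (r := 2) (FF K * _) hM, cls_mul _ sg, f2, mul_comm]

theorem mod7 {x y : ℤ} (h : (7 : ℤ) ∣ x ^ 2 + 30 * y ^ 2) : (49 : ℤ) ∣ x ^ 2 + 30 * y ^ 2 := by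
  have hx : (x ^ 2 + 30 * y ^ 2) % 7 = ((x % 7) ^ 2 + 30 * (y % 7) ^ 2) % 7 := by
    simp [Int.add_emod, Int.mul_emod, pow_two]
  have h0 : ((x % 7) ^ 2 + 30 * (y % 7) ^ 2) % 7 = 0 := by rw [← hx]; omega
  have h1 : x % 7 = 0 ∧ y % 7 = 0 := by
    have a1 := Int.emod_nonneg x (b := 7) (by norm_num)
    have a2 := Int.emod_lt_of_pos x (b := 7) (by norm_num)
    have b1 := Int.emod_nonneg y (b := 7) (by norm_num)
    have b2 := Int.emod_lt_of_pos y (b := 7) (by norm_num)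
    generalize x % 7 = u at *
    generalize y % 7 = v at *
    interval_cases u <;> interval_cases v <;> simp_all
  obtain ⟨u, rfl⟩ := Int.dvd_of_emod_eq_zero h1.1
  obtain ⟨v, rfl⟩ := Int.dvd_of_emod_eq_zero h1.2
  exact ⟨u ^ 2 + 30 * v ^ 2, by ring⟩

theorem coeff_zero (M : ℕ) (h7 : 7 ∣ 24 * M + 31) (h49 : ¬ 49 ∣ 24 * M + 31) :
    coeff M (FF K * expand 5 (by norm_num) (FF K) ^ 6) = 0 := by
  have e : expand 5 (by norm_num) (FF K) ^ 6 = expand 10 (by norm_num) (psi K) := by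
    rw [← expand_expand 5 2 (by norm_num) (by norm_num) (by norm_num), psi_eq, map_pow,
      expand_two_FF, ← pow_mul, map_pow]
  rw [e, coeff_mul]
  refine Finset.sum_eq_zero fun p hp => ?_
  have hp := Finset.HasAntidiagonal.mem_antidiagonal.1 hp
  by_contra hne
  have h1 := left_ne_zero_of_mul hne
  have h2 := right_ne_zero_of_mul hne
  rw [coeff_expand] at h2
  split_ifs at h2 with hd
  · obtain ⟨k, hk⟩ := FF_supp h1
    obtain ⟨t, ht⟩ := psi_supp h2
    obtain ⟨d, hd⟩ := hd
    rw [hd, Nat.mul_div_cancel_left _ (by norm_num)] at ht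
    have ht2 : 2 * d = t * (t + 1) := by
      rw [ht]; exact Nat.mul_div_cancel' (Nat.even_mul_succ_self t).two_dvd
    have hk2 := two_mul_natCast_pentagonal k
    rw [hk] at hk2
    have key : (((24 * M + 31 : ℕ)) : ℤ) = (6 * k - 1) ^ 2 + 30 * (2 * (t : ℤ) + 1) ^ 2 := by
      rw [← hp, hd]
      have : (2 * d : ℤ) = t * (t + 1) := by exact_mod_cast ht2
      push_cast
      linear_combination 12 * hk2 + 120 * this
    apply h49
    have h7' : ((7 : ℕ) : ℤ) ∣ ((24 * M + 31 : ℕ) : ℤ) := Int.natCast_dvd_natCast.2 h7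
    rw [key] at h7'
    have := mod7 h7'
    rw [← key] at this
    exact Int.natCast_dvd_natCast.1 this
  · exact h2 rfl

theorem final {ζ : K} (hζ : IsPrimitiveRoot ζ 5) (M : ℕ) (hM : M % 5 = 0 ∨ M % 5 = 2)
    (h7 : 7 ∣ 24 * M + 31) (h49 : ¬ 49 ∣ 24 * M + 31) :
    (numRegularPartitions 200 (25 * M + 24) : K) = numMultipartitions 17 (M + 2) := by
  have h1 : coeff (5 * (5 * M + 4) + 4) (BB K 200) = coeff M (B2 K) := by
    rw [coeff_of_cls4 (cls4_BB hζ), coeff_of_cls4 (cls4_B1 hζ)]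
  have h2 := congrArg (coeff (M + 2)) (B2_eq hζ)
  rw [coeff_F13 hζ M hM, coeff_zero M h7 h49, map_add, coeff_X_pow_mul, coeff_PP_pow, ← h1,
    BB, coeff_mk, show 5 * (5 * M + 4) + 4 = 25 * M + 24 by ring] at h2
  have h3 : (2 : K) = 0 := CharP.ofNat_eq_zero K 2
  linear_combination h2 - (numMultipartitions 17 (M + 2) : K) * h3

end Aux

theorem stmt_9 (n : ℕ) :
    (∀ B ∈ ({22, 29, 92, 127, 169, 239} : Finset ℕ),
      numRegularPartitions 200 (6125 * n + 25 * B - 26) ≡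
        numMultipartitions 17 (245 * n + B) [MOD 2]) := by
  intro B hB
  let L := AlgebraicClosure (ZMod 2)
  haveI : CharP L 2 := inferInstanceAs (CharP (AlgebraicClosure (ZMod 2)) 2)
  haveI : NeZero ((5 : ℕ) : L) := ⟨by
    rw [Ne, CharP.cast_eq_zero_iff L 2]; norm_num⟩
  obtain ⟨z, hz⟩ := HasEnoughRootsOfUnity.exists_primitiveRoot L 5
  have hB2 : 2 ≤ B := by
    simp only [Finset.mem_insert, Finset.mem_singleton] at hB; omega
  have key := final (K := L) hz (245 * n + B - 2)
    (by simp only [Finset.mem_insert, Finset.mem_singleton] at hB; omega)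
    (by simp only [Finset.mem_insert, Finset.mem_singleton] at hB; omega)
    (by simp only [Finset.mem_insert, Finset.mem_singleton] at hB; omega)
  rw [show 25 * (245 * n + B - 2) + 24 = 6125 * n + 25 * B - 26 by omega,
    show 245 * n + B - 2 + 2 = 245 * n + B by omega] at key
  exact (CharP.natCast_eq_natCast L 2).1 key
end
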